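/- arXiv:1204.4694 — 2 statements merged into one kernel-verified Lean document; each statement's English description precedes it below -/
import Mathlib

section
/- Suppose φ : D → D is a C^∞ area-preserving diffeomorphism of the closed unit disk which is the uniform (C⁰) limit of a sequence of maps φ_k = g_k⁻¹ ∘ R_{2π p_k/q_k} ∘ g_k, where each g_k : D → D is an orientation-preserving C^∞ diffeomorphism fixing the origin and the rationals p_k/q_k converge to an irrational real number. Then φ has precisely one periodic point, namely the origin; in particular φ is an irrational pseudo-rotation. -/
open Complex Metric Filter Set

/-- The closed unit disk in `ℂ ≅ ℝ²`. -/
def Disk : Set ℂ := Metric.closedBall 0 1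

/-- A `C^∞`-smooth diffeomorphism of the closed unit disk: a bijection of `Disk`
which is `C^∞` up to the boundary together with its inverse. -/
structure SmoothDiskDiffeo where
  toFun : ℂ → ℂ
  invFun : ℂ → ℂ
  mapsTo : Set.MapsTo toFun Disk Disk
  mapsTo_inv : Set.MapsTo invFun Disk Disk
  left_inv : ∀ z ∈ Disk, invFun (toFun z) = z
  right_inv : ∀ z ∈ Disk, toFun (invFun z) = z
  smooth : ContDiffOn ℝ (⊤ : ℕ∞) toFun Disk
  smooth_inv : ContDiffOn ℝ (⊤ : ℕ∞) invFun Disk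

/-- `φ` preserves the area form `dx ∧ dy`, i.e. `det Dφ ≡ 1` on the disk. -/
def AreaPreserving (φ : SmoothDiskDiffeo) : Prop :=
  ∀ z ∈ Disk, (fderivWithin ℝ φ.toFun Disk z).det = 1

/-- `φ` is orientation preserving: `det Dφ > 0` everywhere on the disk. -/
def OrientationPreserving (φ : SmoothDiskDiffeo) : Prop :=
  ∀ z ∈ Disk, 0 < (fderivWithin ℝ φ.toFun Disk z).det


lemma exists_log {E : Type*} [NormedAddCommGroup E] [NormedSpace ℝ E] {K : Set E}
    (hK : Convex ℝ K) (f : E → ℂ) (hf : ContinuousOn f K) (h0 : ∀ x ∈ K, f x ≠ 0) :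
    ∃ L : E → ℂ, ContinuousOn L K ∧ ∀ x ∈ K, Complex.exp (L x) = f x := by
  classical
  rcases K.eq_empty_or_nonempty with rfl | ⟨x0, hx0⟩
  · exact ⟨fun _ => 0, by simp, by simp⟩
  have hmem : ∀ (t : unitInterval) (x : K), x0 + (t : ℝ) • ((x : E) - x0) ∈ K := fun t x =>
    hK.add_smul_sub_mem hx0 x.2 t.2
  let H : C(unitInterval × K, {z : ℂ // z ≠ 0}) :=
    ⟨fun p => ⟨f (x0 + (p.1 : ℝ) • ((p.2 : E) - x0)), h0 _ (hmem _ _)⟩, by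
      refine Continuous.subtype_mk ?_ _
      refine hf.comp_continuous ?_ (fun p => hmem _ _)
      fun_prop⟩
  have hH0 : ∀ a : K, H (0, a) =
      (⟨_, (Complex.log (f x0)).exp_ne_zero⟩ : {z : ℂ // z ≠ 0}) := by
    intro a
    apply Subtype.ext
    simp [H, Complex.exp_log (h0 x0 hx0)]
  let G := Complex.isCoveringMap_exp.liftHomotopy H (ContinuousMap.const K (Complex.log (f x0)))
    (by intro a; exact hH0 a)
  have hG : ∀ p, Complex.exp (G p) = (H p : ℂ) := fun p => by
    have := congrFun (Complex.isCoveringMap_exp.liftHomotopy_lifts H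
      (ContinuousMap.const K (Complex.log (f x0))) (by intro a; exact hH0 a)) p
    exact congrArg Subtype.val this
  refine ⟨fun x => if h : x ∈ K then G (1, ⟨x, h⟩) else 0, ?_, ?_⟩
  · rw [continuousOn_iff_continuous_domRestrict]
    have : (K.domRestrict fun x => if h : x ∈ K then G (1, ⟨x, h⟩) else 0) = fun x : K => G (1, x) := by
      ext x; simp [Set.domRestrict]
    rw [this]
    fun_prop
  · intro x hx
    simp only [hx, dif_pos, hG]
    simp [H]

lemma const_of_exp_one {A : Type*} [TopologicalSpace A] {K : Set A} (hK : IsPreconnected K)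
    (D : A → ℂ) (hD : ContinuousOn D K) (h1 : ∀ x ∈ K, Complex.exp (D x) = 1) :
    ∃ n : ℤ, ∀ x ∈ K, D x = n * (2 * Real.pi * I) := by
  rcases K.eq_empty_or_nonempty with rfl | ⟨x0, hx0⟩
  · exact ⟨0, by simp⟩
  have h2 : ∀ x ∈ K, ∃ n : ℤ, D x = n * (2 * Real.pi * I) := fun x hx =>
    Complex.exp_eq_one_iff.1 (h1 x hx)
  obtain ⟨n, hn⟩ := h2 x0 hx0
  refine ⟨n, fun x hx => ?_⟩
  have hT : DiscreteTopology (Set.range (Int.cast : ℤ → ℝ)) :=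
    (Int.isClosedEmbedding_coe_real.isEmbedding.toHomeomorph).discreteTopology
  have hc : ContinuousOn (fun x => (D x).im / (2 * Real.pi)) K := by fun_prop
  have hm : MapsTo (fun x => (D x).im / (2 * Real.pi)) K (Set.range (Int.cast : ℤ → ℝ)) := by
    intro y hy
    obtain ⟨m, hm⟩ := h2 y hy
    refine ⟨m, ?_⟩
    simp only [hm]
    have := Real.pi_pos.ne'
    simp
  have := hK.constant_of_mapsTo ⟨hT⟩ hc hm hx0 hx
  obtain ⟨m, hm⟩ := h2 x hx
  simp only [hm, hn] at this
  have hp := Real.pi_pos.ne'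
  simp at this
  rw [hm]
  have h3 : (n : ℝ) = m := by simpa [hp] using this
  have : n = m := by exact_mod_cast h3
  rw [this]

-- turning lemma
lemma turning (c : ℝ → ℂ) (A S : ℝ) (hS : A + 1 ≤ S) (hc : ContinuousOn c (Icc A S))
    (hinj : ∀ a b, A ≤ a → a + 1 ≤ b → b ≤ S → c a ≠ c b)
    (hlo : ∀ t ∈ Icc A S, (c A).re ≤ (c t).re) (hhi : ∀ t ∈ Icc A S, (c t).re ≤ (c S).re) :
    ∃ L : ℝ → ℂ, ContinuousOn L (Icc A (S - 1)) ∧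
      (∀ t ∈ Icc A (S - 1), Complex.exp (L t) = c (t + 1) - c t) ∧
      |(L A).im| ≤ Real.pi / 2 ∧ |(L (S - 1)).im| ≤ Real.pi / 2 := by
  let K : Set (ℝ × ℝ) := {p | A ≤ p.1 ∧ p.1 + 1 ≤ p.2 ∧ p.2 ≤ S}
  have hK : Convex ℝ K := by
    rintro ⟨a, b⟩ ⟨h1, h2, h3⟩ ⟨a', b'⟩ ⟨h1', h2', h3'⟩ s t hs ht hst
    simp only at h1 h2 h3 h1' h2' h3'
    refine ⟨?_, ?_, ?_⟩ <;> simp only [Prod.smul_mk, Prod.mk_add_mk, smul_eq_mul]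
    · have : A = s * A + t * A := by rw [← add_mul, hst, one_mul]
      nlinarith
    · have : s * (b - a - 1) + t * (b' - a' - 1) ≥ 0 := by
        have := mul_nonneg hs (by linarith : 0 ≤ b - a - 1)
        have := mul_nonneg ht (by linarith : 0 ≤ b' - a' - 1)
        linarith
      nlinarith
    · have : S = s * S + t * S := by rw [← add_mul, hst, one_mul]
      nlinarith
  have hf : ContinuousOn (fun p : ℝ × ℝ => c p.2 - c p.1) K := by
    refine ContinuousOn.sub (hc.comp continuousOn_snd ?_) (hc.comp continuousOn_fst ?_)
    · rintro ⟨a, b⟩ ⟨h1, h2, h3⟩; simp only at h1 h2 h3 ⊢; exact ⟨by linarith, h3⟩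
    · rintro ⟨a, b⟩ ⟨h1, h2, h3⟩; simp only at h1 h2 h3 ⊢; exact ⟨by linarith, by linarith⟩
  obtain ⟨M, hMc, hM⟩ := exists_log hK _ hf (by
    rintro ⟨a, b⟩ ⟨h1, h2, h3⟩
    exact sub_ne_zero.2 (hinj a b h1 h2 h3).symm)
  -- the union of the two edges
  let U : Set (ℝ × ℝ) := (fun b => ((A, b) : ℝ × ℝ)) '' (Icc (A + 1) S) ∪
    (fun a => ((a, S) : ℝ × ℝ)) '' (Icc A (S - 1))
  have hUK : U ⊆ K := by
    rintro _ (⟨b, ⟨h1, h2⟩, rfl⟩ | ⟨a, ⟨h1, h2⟩, rfl⟩)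
    · exact ⟨le_rfl, h1, h2⟩
    · exact ⟨h1, by simp only; linarith, le_rfl⟩
  have hUc : IsPreconnected U := by
    refine IsPreconnected.union (A, S) ⟨S, ⟨hS, le_rfl⟩, rfl⟩ ⟨A, ⟨le_rfl, by linarith⟩, rfl⟩ ?_ ?_
    · exact isPreconnected_Icc.image _ (by fun_prop)
    · exact isPreconnected_Icc.image _ (by fun_prop)
  have hUre : ∀ p ∈ U, 0 ≤ (c p.2 - c p.1).re := by
    rintro _ (⟨b, ⟨h1, h2⟩, rfl⟩ | ⟨a, ⟨h1, h2⟩, rfl⟩)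
    · simp only [sub_re, sub_nonneg]; exact hlo b ⟨by linarith, h2⟩
    · simp only [sub_re, sub_nonneg]; exact hhi a ⟨h1, by linarith⟩
  have hne : ∀ p ∈ U, c p.2 - c p.1 ≠ 0 := by
    intro p hp
    rw [← hM p (hUK hp)]; exact Complex.exp_ne_zero _
  have hslit : ∀ p ∈ U, c p.2 - c p.1 ∈ slitPlane := by
    intro p hp
    rcases (hUre p hp).lt_or_eq with h | h
    · exact Or.inl h
    · refine Or.inr fun h' => hne p hp (Complex.ext h.symm h')
  obtain ⟨n, hn⟩ := const_of_exp_one hUc (fun p => M p - Complex.log (c p.2 - c p.1))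
    ((hMc.mono hUK).sub (ContinuousOn.clog (hf.mono hUK) hslit)) (by
      intro p hp
      rw [Complex.exp_sub, hM p (hUK hp), Complex.exp_log (hne p hp), div_self (hne p hp)])
  have hfin : ∀ p ∈ U, |(M p - n * (2 * Real.pi * I)).im| ≤ Real.pi / 2 := by
    intro p hp
    have : M p - n * (2 * Real.pi * I) = Complex.log (c p.2 - c p.1) := by
      rw [← hn p hp]; ring
    rw [this, Complex.log_im]
    exact Complex.abs_arg_le_pi_div_two_iff.2 (hUre p hp)
  refine ⟨fun t => M (t, t + 1) - n * (2 * Real.pi * I), ?_, ?_, ?_, ?_⟩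
  · refine ContinuousOn.sub (hMc.comp (by fun_prop) ?_) continuousOn_const
    rintro t ⟨h1, h2⟩
    exact ⟨h1, le_rfl, by simp only; linarith⟩
  · rintro t ⟨h1, h2⟩
    rw [Complex.exp_sub, Complex.exp_int_mul_two_pi_mul_I, div_one]
    exact hM (t, t + 1) ⟨h1, le_rfl, by simp only; linarith⟩
  · exact hfin (A, A + 1) (Or.inl ⟨A + 1, ⟨le_rfl, hS⟩, rfl⟩)
  · simp only [sub_add_cancel]
    exact hfin (S - 1, S) (Or.inr ⟨S - 1, ⟨by linarith, le_rfl⟩, rfl⟩)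


lemma angle_close (L V : ℝ → ℂ) (A B : ℝ) (hL : ContinuousOn L (Icc A B))
    (hV : ContinuousOn V (Icc A B))
    (h : ∀ t ∈ Icc A B, ‖Complex.exp (L t) - Complex.exp (V t)‖ < ‖Complex.exp (V t)‖) :
    ∃ n : ℤ, ∀ t ∈ Icc A B, |(L t).im - (V t).im - 2 * Real.pi * n| < Real.pi / 2 := by
  have hre : ∀ t ∈ Icc A B, 0 < (Complex.exp (L t - V t)).re := by
    intro t ht
    have h1 : ‖Complex.exp (L t - V t) - 1‖ < 1 := by
      have h2 : Complex.exp (L t - V t) - 1 =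
          (Complex.exp (L t) - Complex.exp (V t)) / Complex.exp (V t) := by
        rw [Complex.exp_sub, sub_div, div_self (Complex.exp_ne_zero _)]
      rw [h2, norm_div, div_lt_one (norm_pos_iff.2 (Complex.exp_ne_zero _))]
      exact h t ht
    have h3 := (abs_le.1 ((Complex.abs_re_le_norm _).trans h1.le)).1
    have h4 := (Complex.abs_re_le_norm (Complex.exp (L t - V t) - 1)).trans_lt h1
    have h5 := (abs_lt.1 h4).1
    simp only [sub_re, one_re] at h5
    linarith
  obtain ⟨n, hn⟩ := const_of_exp_one (isPreconnected_Icc (a := A) (b := B))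
    (fun t => (L t - V t) - Complex.log (Complex.exp (L t - V t)))
    ((hL.sub hV).sub (ContinuousOn.clog (Complex.continuous_exp.comp_continuousOn (hL.sub hV))
      (fun t ht => Or.inl (hre t ht)))) (by
      intro t ht
      rw [Complex.exp_sub, Complex.exp_log (Complex.exp_ne_zero _), div_self (Complex.exp_ne_zero _)])
  refine ⟨n, fun t ht => ?_⟩
  have h1 := hn t ht
  have h2 := Complex.abs_arg_lt_pi_div_two_iff.2 (Or.inl (hre t ht))
  have h3 := congrArg Complex.im h1
  rw [← Complex.log_im] at h2
  simp at h3
  convert h2 using 2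
  linarith

lemma lower_loc {A : Type*} [TopologicalSpace A] {K : Set A} (hK : IsPreconnected K)
    (Λ : A → ℂ) (hΛ : ContinuousOn Λ K) (h : ∀ x ∈ K, (Complex.exp (Λ x)).im < 0) :
    ∃ l : ℤ, ∀ x ∈ K, -Real.pi < (Λ x).im - 2 * Real.pi * l ∧ (Λ x).im - 2 * Real.pi * l < 0 := by
  obtain ⟨n, hn⟩ := const_of_exp_one hK
    (fun t => Λ t - Complex.log (Complex.exp (Λ t)))
    (hΛ.sub (ContinuousOn.clog (Complex.continuous_exp.comp_continuousOn hΛ)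
      (fun t ht => Or.inr (h t ht).ne))) (by
      intro t ht
      rw [Complex.exp_sub, Complex.exp_log (Complex.exp_ne_zero _), div_self (Complex.exp_ne_zero _)])
  refine ⟨n, fun t ht => ?_⟩
  have h3 := congrArg Complex.im (hn t ht)
  have h4 := Complex.arg_neg_iff.2 (h t ht)
  have h5 := Complex.neg_pi_lt_arg (Complex.exp (Λ t))
  rw [← Complex.log_im] at h4 h5
  simp at h3
  constructor <;> linarith

lemma upper_loc {A : Type*} [TopologicalSpace A] {K : Set A} (hK : IsPreconnected K)
    (Λ : A → ℂ) (hΛ : ContinuousOn Λ K) (h : ∀ x ∈ K, 0 < (Complex.exp (Λ x)).im) :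
    ∃ l : ℤ, ∀ x ∈ K, 0 < (Λ x).im - 2 * Real.pi * l ∧ (Λ x).im - 2 * Real.pi * l < Real.pi := by
  obtain ⟨l, hl⟩ := lower_loc hK (fun x => Λ x - Real.pi * I) (hΛ.sub continuousOn_const) (by
    intro x hx
    rw [Complex.exp_sub, Complex.exp_pi_mul_I, div_neg, div_one, neg_im]
    linarith [h x hx])
  refine ⟨l, fun x hx => ?_⟩
  have := hl x hx
  simp at this
  constructor <;> linarith

lemma im_of_exp_neg {z : ℂ} (h : |z.im| ≤ Real.pi / 2) (h' : (Complex.exp z).im < 0) : z.im < 0 := by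
  by_contra hc
  push Not at hc
  rw [Complex.exp_im] at h'
  have := Real.sin_nonneg_of_nonneg_of_le_pi hc (by linarith [(abs_le.1 h).2, Real.pi_pos])
  have := mul_nonneg (Real.exp_pos z.re).le this
  linarith

lemma im_of_exp_pos {z : ℂ} (h : |z.im| ≤ Real.pi / 2) (h' : 0 < (Complex.exp z).im) : 0 < z.im := by
  by_contra hc
  push Not at hc
  rw [Complex.exp_im] at h'
  have := Real.sin_nonpos_of_nonpos_of_neg_pi_le hc (by linarith [(abs_le.1 h).1, Real.pi_pos])
  have := mul_nonpos_of_nonneg_of_nonpos (Real.exp_pos z.re).le this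
  linarith

lemma int_eq_of_close {x y : ℤ} {u : ℝ} (h1 : -(2 * Real.pi) < u) (h2 : u < 2 * Real.pi)
    (h : u = 2 * Real.pi * x - 2 * Real.pi * y) : x = y := by
  have hp := Real.pi_pos
  have h3 : ((x - y : ℤ) : ℝ) < 1 := by push_cast; nlinarith
  have h4 : (-1 : ℝ) < ((x - y : ℤ) : ℝ) := by push_cast; nlinarith
  have h5 : x - y < 1 := by exact_mod_cast h3
  have h6 : -1 < x - y := by exact_mod_cast h4
  omega

/-- The purely topological contradiction (Brown-Neumann winding argument). -/
lemma winding_contra (H : ℂ → ℂ) (l l' m : ℝ) (hl : l < l') (hl' : l' < 0)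
    (hH : ContinuousOn H {ζ : ℂ | l ≤ ζ.re ∧ ζ.re ≤ 0})
    (hm0 : 0 < m)
    (hm : ∀ ζ : ℂ, l ≤ ζ.re → ζ.re ≤ 0 → m ≤ ‖H ζ - ζ‖)
    (hbot : ∀ ζ : ℂ, l ≤ ζ.re → ζ.re ≤ l' → (H ζ - ζ).im ≤ -m)
    (htop : ∀ ζ : ℂ, ζ.re = 0 → m ≤ (H ζ - ζ).im)
    (hmid : ∀ ζ : ℂ, l' ≤ ζ.re → ζ.re ≤ 0 → l + m ≤ (H ζ).re)
    (c : ℝ → ℂ) (A S : ℝ) (hAS : A + 1 ≤ S) (hc : ContinuousOn c (Icc A S))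
    (hcA : (c A).re = l) (hcS1 : (c (S - 1)).re = 0) (hcS : (c S).re = 0)
    (hcs : ∀ t ∈ Icc A S, l ≤ (c t).re ∧ (c t).re ≤ 0)
    (hcinj : ∀ a b, A ≤ a → a + 1 ≤ b → b ≤ S → c a ≠ c b)
    (hcH : ∀ t ∈ Icc A (S - 1), ‖c (t + 1) - H (c t)‖ < m)
    (d : ℝ → ℂ) (B T : ℝ) (hBT : B + 1 ≤ T) (hd : ContinuousOn d (Icc B T))
    (hdB : (d B).re = 0) (hdT : (d T).re = l)
    (hds : ∀ t ∈ Icc B T, l ≤ (d t).re ∧ (d t).re ≤ 0)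
    (hdinj : ∀ a b, B ≤ a → a + 1 ≤ b → b ≤ T → d a ≠ d b)
    (hdH : ∀ t ∈ Icc B (T - 1), ‖d (t + 1) - H (d t)‖ < m) : False := by
  have hp := Real.pi_pos
  have hconv : Convex ℝ {ζ : ℂ | l ≤ ζ.re ∧ ζ.re ≤ 0} :=
    (convex_halfSpace_re_ge l).inter (convex_halfSpace_re_le 0)
  obtain ⟨Λ, hΛc, hΛ⟩ := exists_log hconv (fun ζ => H ζ - ζ) (hH.sub continuousOn_id) (by
    rintro ζ ⟨h1, h2⟩ h0
    have := hm ζ h1 h2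
    rw [h0, norm_zero] at this
    linarith)
  have hbc : IsPreconnected {ζ : ℂ | l ≤ ζ.re ∧ ζ.re ≤ l'} :=
    ((convex_halfSpace_re_ge l).inter (convex_halfSpace_re_le l')).isPreconnected
  have htc : IsPreconnected {ζ : ℂ | 0 ≤ ζ.re ∧ ζ.re ≤ 0} :=
    ((convex_halfSpace_re_ge 0).inter (convex_halfSpace_re_le 0)).isPreconnected
  obtain ⟨b, hb⟩ := lower_loc hbc Λ (hΛc.mono fun ζ hζ => ⟨hζ.1, by linarith [hζ.2]⟩) (by
    rintro ζ ⟨h1, h2⟩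
    rw [hΛ ζ ⟨h1, by linarith⟩]
    linarith [hbot ζ h1 h2])
  obtain ⟨u, hu⟩ := upper_loc htc Λ (hΛc.mono fun ζ hζ => ⟨by linarith [hζ.1], hζ.2⟩) (by
    rintro ζ ⟨h1, h2⟩
    rw [hΛ ζ ⟨by linarith, by linarith⟩]
    linarith [htop ζ (le_antisymm h2 h1)])
  -- curve one
  have e1 : b = u := by
    obtain ⟨L, hLc, hL, hLA, hLS⟩ := turning c A S hAS hc hcinj
      (fun t ht => by rw [hcA]; exact (hcs t ht).1) (fun t ht => by rw [hcS]; exact (hcs t ht).2)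
    have hsub : ∀ t ∈ Icc A (S - 1), t ∈ Icc A S := fun t ht => ⟨ht.1, by linarith [ht.2]⟩
    obtain ⟨n, hn⟩ := angle_close L (fun t => Λ (c t)) A (S - 1) hLc
      (hΛc.comp (hc.mono hsub) fun t ht => hcs t (hsub t ht)) (by
        intro t ht
        have h1 := hcs t (hsub t ht)
        rw [hL t ht, hΛ (c t) h1]
        have : c (t + 1) - c t - (H (c t) - c t) = c (t + 1) - H (c t) := by ring
        rw [this]
        exact (hcH t ht).trans_le (hm _ h1.1 h1.2))
    have mA : A ∈ Icc A (S - 1) := ⟨le_rfl, by linarith⟩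
    have mS : S - 1 ∈ Icc A (S - 1) := ⟨by linarith, le_rfl⟩
    have i1 : (L A).im < 0 := by
      apply im_of_exp_neg hLA
      rw [hL A mA]
      have h1 := hcH A mA
      have h2 := (Complex.abs_im_le_norm _).trans_lt h1
      have h3 := hbot (c A) hcA.ge (by linarith)
      simp only [sub_im] at h2 h3 ⊢
      linarith [(abs_lt.1 h2).2]
    have i2 : 0 < (L (S - 1)).im := by
      apply im_of_exp_pos hLS
      rw [hL _ mS]
      have h1 := hcH _ mS
      have h2 := (Complex.abs_im_le_norm _).trans_lt h1
      have h3 := htop (c (S - 1)) hcS1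
      simp only [sub_im] at h2 h3 ⊢
      linarith [(abs_lt.1 h2).1]
    have j1 := abs_lt.1 (hn A mA)
    have j2 := abs_lt.1 (hn _ mS)
    have k1 := hb (c A) ⟨hcA.ge, by linarith⟩
    have k2 := hu (c (S - 1)) ⟨hcS1.ge, hcS1.le⟩
    have a1 := abs_le.1 hLA
    have a2 := abs_le.1 hLS
    have q1 : -n = b := int_eq_of_close (u := 2 * Real.pi * (-n : ℤ) - 2 * Real.pi * b)
      (by push_cast; linarith) (by push_cast; linarith) rfl
    have q2 : -n = u := int_eq_of_close (u := 2 * Real.pi * (-n : ℤ) - 2 * Real.pi * u)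
      (by push_cast; linarith) (by push_cast; linarith) rfl
    omega
  have e2 : b = u + 1 := by
    obtain ⟨L, hLc, hL, hLA, hLS⟩ := turning (fun t => - d t) B T hBT hd.neg
      (fun a b h1 h2 h3 h => hdinj a b h1 h2 h3 (neg_injective h))
      (fun t ht => by simp only [neg_re]; rw [hdB]; linarith [(hds t ht).2])
      (fun t ht => by simp only [neg_re]; rw [hdT]; linarith [(hds t ht).1])
    have hsub : ∀ t ∈ Icc B (T - 1), t ∈ Icc B T := fun t ht => ⟨ht.1, by linarith [ht.2]⟩
    obtain ⟨n, hn⟩ := angle_close L (fun t => Λ (d t) - Real.pi * I) B (T - 1) hLc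
      ((hΛc.comp (hd.mono hsub) fun t ht => hds t (hsub t ht)).sub continuousOn_const) (by
        intro t ht
        have h1 := hds t (hsub t ht)
        rw [hL t ht, Complex.exp_sub, hΛ (d t) h1, Complex.exp_pi_mul_I]
        have : -d (t + 1) - -d t - (H (d t) - d t) / -1 = -(d (t + 1) - H (d t)) := by ring
        rw [this, norm_neg, norm_div, norm_neg, norm_one, div_one]
        exact (hdH t ht).trans_le (hm _ h1.1 h1.2))
    have mA : B ∈ Icc B (T - 1) := ⟨le_rfl, by linarith⟩
    have mS : T - 1 ∈ Icc B (T - 1) := ⟨by linarith, le_rfl⟩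
    have hend : (d (T - 1)).re ≤ l' := by
      by_contra hcon
      push Not at hcon
      have h1 := hdH _ mS
      have h2 := (Complex.abs_re_le_norm _).trans_lt h1
      have h3 := hmid (d (T - 1)) hcon.le (hds _ (hsub _ mS)).2
      simp only [sub_add_cancel, sub_re] at h2
      linarith [(abs_lt.1 h2).1]
    have i1 : (L B).im < 0 := by
      apply im_of_exp_neg hLA
      rw [hL B mA]
      have h1 := hdH B mA
      have h2 := (Complex.abs_im_le_norm _).trans_lt h1
      have h3 := htop (d B) hdB
      simp only [sub_im, neg_im] at h2 h3 ⊢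
      linarith [(abs_lt.1 h2).1]
    have i2 : 0 < (L (T - 1)).im := by
      apply im_of_exp_pos hLS
      rw [hL _ mS]
      have h1 := hdH _ mS
      have h2 := (Complex.abs_im_le_norm _).trans_lt h1
      have h3 := hbot (d (T - 1)) (hds _ (hsub _ mS)).1 hend
      simp only [sub_im, neg_im] at h2 h3 ⊢
      linarith [(abs_lt.1 h2).2]
    have j1 := abs_lt.1 (hn B mA)
    have j2 := abs_lt.1 (hn _ mS)
    have k1 := hu (d B) ⟨hdB.ge, hdB.le⟩
    have k2 := hb (d (T - 1)) ⟨(hds _ (hsub _ mS)).1, hend⟩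
    have a1 := abs_le.1 hLA
    have a2 := abs_le.1 hLS
    simp at j1 j2
    have q1 : -n = u := int_eq_of_close (u := 2 * Real.pi * (-n : ℤ) - 2 * Real.pi * u)
      (by push_cast; linarith) (by push_cast; linarith) rfl
    have q2 : -n + 1 = b := int_eq_of_close (u := 2 * Real.pi * (-n + 1 : ℤ) - 2 * Real.pi * b)
      (by push_cast; linarith) (by push_cast; linarith) rfl
    omega
  omega

/-- version with a sign -/
lemma winding_contra_sign (s : ℝ) (hs : s = 1 ∨ s = -1)
    (H : ℂ → ℂ) (l l' m : ℝ) (hl : l < l') (hl' : l' < 0)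
    (hH : ContinuousOn H {ζ : ℂ | l ≤ ζ.re ∧ ζ.re ≤ 0})
    (hm0 : 0 < m)
    (hm : ∀ ζ : ℂ, l ≤ ζ.re → ζ.re ≤ 0 → m ≤ ‖H ζ - ζ‖)
    (hbot : ∀ ζ : ℂ, l ≤ ζ.re → ζ.re ≤ l' → s * (H ζ - ζ).im ≤ -m)
    (htop : ∀ ζ : ℂ, ζ.re = 0 → m ≤ s * (H ζ - ζ).im)
    (hmid : ∀ ζ : ℂ, l' ≤ ζ.re → ζ.re ≤ 0 → l + m ≤ (H ζ).re)
    (c : ℝ → ℂ) (A S : ℝ) (hAS : A + 1 ≤ S) (hc : ContinuousOn c (Icc A S))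
    (hcA : (c A).re = l) (hcS1 : (c (S - 1)).re = 0) (hcS : (c S).re = 0)
    (hcs : ∀ t ∈ Icc A S, l ≤ (c t).re ∧ (c t).re ≤ 0)
    (hcinj : ∀ a b, A ≤ a → a + 1 ≤ b → b ≤ S → c a ≠ c b)
    (hcH : ∀ t ∈ Icc A (S - 1), ‖c (t + 1) - H (c t)‖ < m)
    (d : ℝ → ℂ) (B T : ℝ) (hBT : B + 1 ≤ T) (hd : ContinuousOn d (Icc B T))
    (hdB : (d B).re = 0) (hdT : (d T).re = l)
    (hds : ∀ t ∈ Icc B T, l ≤ (d t).re ∧ (d t).re ≤ 0)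
    (hdinj : ∀ a b, B ≤ a → a + 1 ≤ b → b ≤ T → d a ≠ d b)
    (hdH : ∀ t ∈ Icc B (T - 1), ‖d (t + 1) - H (d t)‖ < m) : False := by
  rcases hs with rfl | rfl
  · exact winding_contra H l l' m hl hl' hH hm0 hm (by simpa using hbot) (by simpa using htop) hmid
      c A S hAS hc hcA hcS1 hcS hcs hcinj hcH d B T hBT hd hdB hdT hds hdinj hdH
  · let J : ℂ → ℂ := starRingEnd ℂ
    have hJ : ∀ z w, J z - J w = J (z - w) := fun z w => by simp [J]
    have hJn : ∀ z, ‖J z‖ = ‖z‖ := fun z => by simp [J]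
    have hJc : Continuous J := Complex.continuous_conj
    have hJJ : ∀ z, J (J z) = z := fun z => by simp [J]
    have hJr : ∀ z, (J z).re = z.re := fun z => by simp [J]
    have hJi : ∀ z, (J z).im = -z.im := fun z => by simp [J]
    refine winding_contra (fun ζ => J (H (J ζ))) l l' m hl hl' ?_ hm0 ?_ ?_ ?_ ?_
      (fun t => J (c t)) A S hAS (hJc.comp_continuousOn hc) (by simpa [hJr] using hcA)
      (by simpa [hJr] using hcS1) (by simpa [hJr] using hcS) (by simpa [hJr] using hcs) ?_ ?_
      (fun t => J (d t)) B T hBT (hJc.comp_continuousOn hd) (by simpa [hJr] using hdB)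
      (by simpa [hJr] using hdT) (by simpa [hJr] using hds) ?_ ?_
    · refine hJc.comp_continuousOn (hH.comp hJc.continuousOn ?_)
      intro ζ hζ
      simpa [hJr] using hζ
    · intro ζ h1 h2
      have := hm (J ζ) (by rwa [hJr]) (by rwa [hJr])
      rwa [← hJn, ← hJ, hJJ] at this
    · intro ζ h1 h2
      have := hbot (J ζ) (by rwa [hJr]) (by rwa [hJr])
      simp only [sub_im, hJi] at this ⊢
      linarith
    · intro ζ h1
      have := htop (J ζ) (by rwa [hJr])
      simp only [sub_im, hJi] at this ⊢
      linarith
    · intro ζ h1 h2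
      have := hmid (J ζ) (by rwa [hJr]) (by rwa [hJr])
      rwa [hJr]
    · intro a b h1 h2 h3 h
      apply hcinj a b h1 h2 h3
      have := congrArg J h
      simpa only [hJJ] using this
    · intro t ht
      simp only [hJJ, hJ, hJn]; exact hcH t ht
    · intro a b h1 h2 h3 h
      apply hdinj a b h1 h2 h3
      have := congrArg J h
      simpa only [hJJ] using this
    · intro t ht
      simp only [hJJ, hJ, hJn]; exact hdH t ht


/-- the closed disk as a compact space -/
abbrev DX : Type := (Metric.closedBall (0 : ℂ) 1 : Set ℂ)

lemma DX.norm_le (x : DX) : ‖(x : ℂ)‖ ≤ 1 := mem_closedBall_zero_iff.1 x.2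

/-- half-plane covering -/
noncomputable def EE (ζ : ℂ) : DX :=
  ⟨Complex.exp ((min ζ.re 0 : ℝ) + ζ.im * I), by
    rw [mem_closedBall_zero_iff, Complex.norm_exp]; simp⟩

lemma EE_cont : Continuous EE := by
  unfold EE
  refine Continuous.subtype_mk ?_ _
  fun_prop

lemma EE_coe {ζ : ℂ} (h : ζ.re ≤ 0) : (EE ζ : ℂ) = Complex.exp ζ := by
  simp only [EE, min_eq_left h, Complex.re_add_im]

lemma EE_norm (ζ : ℂ) : ‖(EE ζ : ℂ)‖ = Real.exp (min ζ.re 0) := by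
  simp [EE, Complex.norm_exp]

lemma EE_ne (ζ : ℂ) : (EE ζ : ℂ) ≠ 0 := Complex.exp_ne_zero _

lemma EE_add_int (ζ : ℂ) (n : ℤ) : EE (ζ + n * (2 * Real.pi * I)) = EE ζ := by
  apply Subtype.ext
  simp only [EE]
  rw [Complex.exp_eq_exp_iff_exists_int]
  refine ⟨n, ?_⟩
  simp
  ring

lemma EE_I (t : ℝ) : (EE (t * I) : ℂ) = Complex.exp (t * I) := EE_coe (by simp)

lemma EE_I_norm (t : ℝ) : ‖(EE (t * I) : ℂ)‖ = 1 := by rw [EE_norm]; simp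

lemma EE_surj (x : DX) (hx : (x : ℂ) ≠ 0) : ∃ ζ : ℂ, ζ.re ≤ 0 ∧ EE ζ = x := by
  have : (Complex.log (x : ℂ)).re ≤ 0 := by
    rw [Complex.log_re]; exact Real.log_nonpos (norm_nonneg _) x.norm_le
  exact ⟨Complex.log x, this, Subtype.ext (by rw [EE_coe this, Complex.exp_log hx])⟩

/-- rotation -/
noncomputable def rotX (θ : ℝ) : DX ≃ₜ DX where
  toFun x := ⟨Complex.exp (θ * I) * x, by
    simpa [Complex.norm_exp_ofReal_mul_I] using x.norm_le⟩
  invFun x := ⟨Complex.exp (-(θ * I)) * x, by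
    have : ‖Complex.exp (-(θ * I))‖ = 1 := by
      have := Complex.norm_exp_ofReal_mul_I (-θ); simpa using this
    simpa [this] using x.norm_le⟩
  left_inv x := by
    apply Subtype.ext; simp [← mul_assoc, ← Complex.exp_add]
  right_inv x := by
    apply Subtype.ext; simp [← mul_assoc, ← Complex.exp_add]
  continuous_toFun := by
    refine Continuous.subtype_mk ?_ _; fun_prop
  continuous_invFun := by
    refine Continuous.subtype_mk ?_ _; fun_prop

lemma rotX_coe (θ : ℝ) (x : DX) : (rotX θ x : ℂ) = Complex.exp (θ * I) * x := rfl

/-- boundary preservation -/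
def Bdy (g : DX ≃ₜ DX) : Prop := ∀ x : DX, ‖(g x : ℂ)‖ = 1 ↔ ‖(x : ℂ)‖ = 1

lemma Bdy.symm {g : DX ≃ₜ DX} (h : Bdy g) : Bdy g.symm := fun x => by
  rw [← h (g.symm x), g.apply_symm_apply]

lemma bdy_rot (θ : ℝ) : Bdy (rotX θ) := fun x => by
  rw [rotX_coe, norm_mul, Complex.norm_exp_ofReal_mul_I, one_mul]

lemma EE_I_eq_iff (s t : ℝ) : EE (s * I) = EE (t * I) ↔ Complex.exp ((s - t : ℝ) * I) = 1 := by
  rw [Subtype.ext_iff, EE_I, EE_I]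
  push_cast
  rw [sub_mul, Complex.exp_sub, div_eq_one_iff_eq (Complex.exp_ne_zero _)]

lemma exists_real_of_norm_one (x : DX) (hx : ‖(x : ℂ)‖ = 1) : ∃ t : ℝ, EE (t * I) = x := by
  refine ⟨Complex.arg x, Subtype.ext ?_⟩
  rw [EE_I]
  have := Complex.norm_mul_exp_arg_mul_I (x : ℂ)
  rwa [hx, ofReal_one, one_mul] at this

lemma real_const {K : Set ℝ} (hK : IsPreconnected K) (D : ℝ → ℝ) (hD : ContinuousOn D K)
    (h1 : ∀ x ∈ K, Complex.exp (D x * I) = 1) : ∃ n : ℤ, ∀ x ∈ K, D x = n * (2 * Real.pi) := by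
  obtain ⟨n, hn⟩ := const_of_exp_one hK (fun x => (D x : ℂ) * I) (by fun_prop) h1
  refine ⟨n, fun x hx => ?_⟩
  have := congrArg Complex.im (hn x hx)
  simpa using this

lemma circle_lift (f : DX → DX) (hf : Continuous f) (hb : ∀ x : DX, ‖(x : ℂ)‖ = 1 → ‖(f x : ℂ)‖ = 1) :
    ∃ b : ℝ → ℝ, Continuous b ∧ (∀ t, EE (b t * I) = f (EE (t * I))) ∧
      ∃ n : ℤ, ∀ (t : ℝ), b (t + 2 * Real.pi) = b t + n * (2 * Real.pi) := by
  have hc : Continuous (fun t : ℝ => (f (EE (t * I)) : ℂ)) :=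
    continuous_subtype_val.comp (hf.comp (EE_cont.comp (by fun_prop)))
  obtain ⟨L, hLc, hL⟩ := exists_log (convex_univ (𝕜 := ℝ) (E := ℝ))
    (fun t : ℝ => (f (EE (t * I)) : ℂ)) hc.continuousOn (fun t _ h => by
      have := hb _ (EE_I_norm t)
      rw [h] at this; simp at this)
  have hLc' := continuousOn_univ.1 hLc
  have hb1 : ∀ t, EE ((L t).im * I) = f (EE (t * I)) := by
    intro t
    apply Subtype.ext
    rw [EE_I]
    have h1 := hL t (mem_univ _)
    have h2 := hb _ (EE_I_norm t)
    rw [← h1, Complex.norm_exp, Real.exp_eq_one_iff] at h2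
    rw [← h1]
    congr 1
    apply Complex.ext <;> simp [h2]
  have hbc : Continuous fun t => (L t).im := Complex.continuous_im.comp hLc'
  refine ⟨fun t => (L t).im, hbc, hb1, ?_⟩
  obtain ⟨n, hn⟩ := real_const isPreconnected_univ
    (fun t => (L (t + 2 * Real.pi)).im - (L t).im) (by fun_prop) (by
      intro t _
      rw [← EE_I_eq_iff, hb1, hb1]
      congr 1
      have := EE_add_int (t * I) 1
      rw [← this]; congr 1; push_cast; ring)
  exact ⟨n, fun t => by linarith [hn t (mem_univ _)]⟩

lemma per_int {b : ℝ → ℝ} {c : ℝ} (h : ∀ t : ℝ, b (t + 2 * Real.pi) = b t + c)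
    (k : ℤ) : ∀ t, b (t + k * (2 * Real.pi)) = b t + k * c := by
  induction k using Int.induction_on with
  | zero => simp
  | succ i ih =>
    intro t
    have := h (t + i * (2 * Real.pi))
    have h2 := ih t
    push_cast at h2 ⊢
    rw [show t + ((i : ℝ) + 1) * (2 * Real.pi) = t + i * (2 * Real.pi) + 2 * Real.pi by ring, this, h2]
    ring
  | pred i ih =>
    intro t
    have := h (t + (-(i : ℝ) - 1) * (2 * Real.pi))
    have h2 := ih t
    push_cast at h2 ⊢
    rw [show t + (-(i : ℝ) - 1) * (2 * Real.pi) + 2 * Real.pi = t + -(i : ℝ) * (2 * Real.pi) by ring, h2] at this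
    linarith

lemma boundary_lift (g : DX ≃ₜ DX) (hg : Bdy g) :
    ∃ b : ℝ → ℝ, Continuous b ∧ (∀ t, EE (b t * I) = g.symm (EE (t * I))) ∧
      Function.Injective b ∧ Function.Surjective b ∧
      ∃ d : ℝ, (d = 1 ∨ d = -1) ∧ ∀ t, b (t + 2 * Real.pi) = b t + 2 * Real.pi * d := by
  have hp := Real.pi_pos
  obtain ⟨b, hbc, hb, n, hn⟩ := circle_lift g.symm g.symm.continuous (fun x hx => (hg.symm x).2 hx)
  obtain ⟨a, hac, ha, m, hm⟩ := circle_lift g g.continuous (fun x hx => (hg x).2 hx)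
  obtain ⟨j, hj⟩ := real_const isPreconnected_univ (fun t => a (b t) - t) (by fun_prop) (by
    intro t _
    rw [← EE_I_eq_iff, ha, hb, g.apply_symm_apply])
  obtain ⟨j', hj'⟩ := real_const isPreconnected_univ (fun t => b (a t) - t) (by fun_prop) (by
    intro t _
    rw [← EE_I_eq_iff, hb, ha, g.symm_apply_apply])
  refine ⟨b, hbc, hb, ?_, ?_, ?_⟩
  · intro s t hst
    have h1 := hj s (mem_univ _)
    have h2 := hj t (mem_univ _)
    simp only [hst] at h1 h2
    linarith
  · intro s
    refine ⟨a (s - j' * (2 * Real.pi)), ?_⟩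
    linarith [hj' (s - j' * (2 * Real.pi)) (mem_univ _)]
  · have h1 := hj (0 + 2 * Real.pi) (mem_univ _)
    have h0 := hj 0 (mem_univ _)
    rw [hn, per_int hm n] at h1
    have h2 : ((n * m : ℤ) : ℝ) = (1 : ℤ) := by
      push_cast
      have : (2 * Real.pi) * ((n : ℝ) * m) = (2 * Real.pi) * 1 := by linarith
      exact mul_left_cancel₀ (by positivity) this
    have h3 : n * m = 1 := by exact_mod_cast h2
    refine ⟨n, ?_, fun t => by rw [hn]; ring⟩
    rcases Int.eq_one_or_neg_one_of_mul_eq_one h3 with h | h <;> simp [h]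

lemma tau_lemma (g : DX ≃ₜ DX) (b : ℝ → ℝ) (hbc : Continuous b)
    (hb : ∀ t, EE (b t * I) = g.symm (EE (t * I))) (hs : Function.Surjective b)
    (γ : ℝ) (f : ℝ → ℝ) (hf : Continuous f)
    (hfl : ∀ x, EE (f x * I) = g.symm (rotX γ (g (EE (x * I))))) :
    ∃ τ : ℝ, Complex.exp (τ * I) = Complex.exp (γ * I) ∧ ∀ t, b (t + τ) = f (b t) := by
  obtain ⟨τ, hτ⟩ := hs (f (b 0))
  have key : ∀ t, EE (f (b t) * I) = g.symm (rotX γ (EE (t * I))) := by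
    intro t; rw [hfl, hb, g.apply_symm_apply]
  have h1 : Complex.exp (τ * I) = Complex.exp (γ * I) := by
    have h2 : EE (τ * I) = rotX γ (EE ((0 : ℝ) * I)) := by
      apply g.symm.injective
      rw [← hb, ← key, hτ]
    have := congrArg Subtype.val h2
    rw [EE_I, rotX_coe, EE_I] at this
    simpa using this
  refine ⟨τ, h1, ?_⟩
  obtain ⟨n, hn⟩ := real_const isPreconnected_univ (fun t => b (t + τ) - f (b t)) (by fun_prop) (by
    intro t _
    rw [← EE_I_eq_iff, hb, key]
    congr 1
    apply Subtype.ext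
    rw [rotX_coe, EE_I, EE_I, ← h1, ← Complex.exp_add]
    congr 1; push_cast; ring)
  have h0 := hn 0 (mem_univ _)
  simp only [zero_add, hτ, sub_self] at h0
  intro t
  have := hn t (mem_univ _)
  linarith


lemma last_time (N : ℝ → ℝ) (hN : Continuous N) (p q v : ℝ) (hpq : p ≤ q) (h1 : N p ≤ v) (h2 : v ≤ N q) :
    ∃ A ∈ Icc p q, N A = v ∧ ∀ t ∈ Icc A q, v ≤ N t := by
  have hcomp : IsCompact (Icc p q ∩ N ⁻¹' {v}) :=
    isCompact_Icc.inter_right (isClosed_singleton.preimage hN)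
  have hne : (Icc p q ∩ N ⁻¹' {v}).Nonempty := by
    obtain ⟨x, hx, hxv⟩ := intermediate_value_Icc hpq hN.continuousOn ⟨h1, h2⟩
    exact ⟨x, hx, hxv⟩
  obtain ⟨A, ⟨hA, hAv⟩, hmax⟩ := hcomp.exists_isGreatest hne
  refine ⟨A, hA, hAv, fun t ht => ?_⟩
  by_contra hc
  push Not at hc
  obtain ⟨x, hx, hxv⟩ := intermediate_value_Icc ht.2 hN.continuousOn ⟨hc.le, h2⟩
  have h3 : x ≤ A := hmax ⟨⟨by linarith [hx.1, ht.1, hA.1], hx.2⟩, hxv⟩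
  have h4 : t = A := le_antisymm (by linarith [hx.1]) ht.1
  rw [h4] at hc
  exact absurd hAv hc.ne

lemma first_time (N : ℝ → ℝ) (hN : Continuous N) (p q v : ℝ) (hpq : p ≤ q) (h1 : v ≤ N p) (h2 : N q ≤ v) :
    ∃ A ∈ Icc p q, N A = v ∧ ∀ t ∈ Icc p A, v ≤ N t := by
  obtain ⟨A, hA, hAv, h⟩ := last_time (fun t => N (-t)) (by fun_prop) (-q) (-p) v (by linarith)
    (by simpa using h2) (by simpa using h1)
  refine ⟨-A, ⟨by linarith [hA.2], by linarith [hA.1]⟩, hAv, fun t ht => ?_⟩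
  have := h (-t) ⟨by linarith [ht.2], by linarith [ht.1]⟩
  simpa using this

lemma curve_lift (g : DX ≃ₜ DX) (b : ℝ → ℝ) (hbc : Continuous b)
    (hb : ∀ t, EE (b t * I) = g.symm (EE (t * I))) (θ τ : ℝ)
    (hτ : Complex.exp (τ * I) = Complex.exp (θ * I)) (H : ℂ → ℂ) (l m : ℝ) (hl : l < 0) (hm0 : 0 < m)
    (hH : ContinuousOn H {ζ : ℂ | l ≤ ζ.re ∧ ζ.re ≤ 0})
    (hHe : ∀ ζ : ℂ, l ≤ ζ.re → ζ.re ≤ 0 → Complex.exp (H ζ) = g.symm (rotX θ (g (EE ζ))))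
    (hHp : ∀ (ζ : ℂ) (n : ℤ), l ≤ ζ.re → ζ.re ≤ 0 →
      H (ζ + n * (2 * Real.pi * I)) = H ζ + n * (2 * Real.pi * I))
    (hbH : ∀ t : ℝ, (b (t + τ) : ℂ) * I = H (b t * I))
    (σ0 : ℝ) (huc : ∀ x y : DX, dist x y < σ0 →
      dist (g.symm x) (g.symm y) < Real.exp l * min (1 / 2) (m / 2))
    (r : ℝ → ℝ) (hrc : Continuous r) (hrs : ∀ t, |r (t + 1) - r t| < σ0) (β A B ts : ℝ)
    (hA : A ≤ ts) (hB : ts + 1 ≤ B) (hrts : ∀ t ∈ Icc ts (ts + 1), r t = 1)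
    (W : ℝ → DX) (hW : ∀ t : ℝ, (W t : ℂ) = r t * Complex.exp ((τ * t + β : ℝ) * I))
    (hlow : ∀ t ∈ Icc A B, Real.exp l ≤ ‖(g.symm (W t) : ℂ)‖) :
    ∃ c : ℝ → ℂ, ContinuousOn c (Icc A B) ∧
      (∀ t ∈ Icc A B, (l ≤ (c t).re ∧ (c t).re ≤ 0) ∧ Complex.exp (c t) = g.symm (W t)) ∧
      ∀ t ∈ Icc A (B - 1), ‖c (t + 1) - H (c t)‖ < m := by
  have hWc : Continuous W := by
    rw [continuous_induced_rng]
    have : (Subtype.val ∘ W) = fun t : ℝ => (r t * Complex.exp ((τ * t + β : ℝ) * I) : ℂ) := funext hW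
    rw [this]; fun_prop
  have hgW : Continuous fun t => (g.symm (W t) : ℂ) :=
    continuous_subtype_val.comp (g.symm.continuous.comp hWc)
  have hne : ∀ t ∈ Icc A B, (g.symm (W t) : ℂ) ≠ 0 := fun t ht h => by
    have := hlow t ht
    rw [h, norm_zero] at this
    exact absurd (Real.exp_pos l) (not_lt.2 this)
  obtain ⟨c, hcc, hc⟩ := exists_log (convex_Icc A B) _ hgW.continuousOn hne
  have hcr : ∀ t ∈ Icc A B, l ≤ (c t).re ∧ (c t).re ≤ 0 := by
    intro t ht
    have h1 := hlow t ht
    have h2 := (g.symm (W t)).norm_le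
    rw [← hc t ht, Complex.norm_exp] at h1 h2
    exact ⟨Real.exp_le_exp.1 h1, by rw [← Real.exp_le_exp, Real.exp_zero]; exact h2⟩
  have hEc : ∀ t ∈ Icc A B, EE (c t) = g.symm (W t) := fun t ht =>
    Subtype.ext (by rw [EE_coe (hcr t ht).2, hc t ht])
  refine ⟨c, hcc, fun t ht => ⟨hcr t ht, hc t ht⟩, ?_⟩
  have hs1 : ∀ t ∈ Icc A (B - 1), t ∈ Icc A B := fun t ht => ⟨ht.1, by linarith [ht.2]⟩
  have hs2 : ∀ t ∈ Icc A (B - 1), t + 1 ∈ Icc A B := fun t ht => ⟨by linarith [ht.1], by linarith [ht.2]⟩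
  -- closeness of the images
  have hHc : ∀ t ∈ Icc A (B - 1), Complex.exp (H (c t)) = g.symm (rotX θ (W t)) := by
    intro t ht
    rw [hHe _ (hcr t (hs1 t ht)).1 (hcr t (hs1 t ht)).2, hEc t (hs1 t ht), g.apply_symm_apply]
  have hdist : ∀ t, dist (rotX θ (W t)) (W (t + 1)) < σ0 := by
    intro t
    rw [Subtype.dist_eq, rotX_coe, hW, hW, dist_eq_norm, ← hτ]
    have : Complex.exp (τ * I) * (r t * Complex.exp ((τ * t + β : ℝ) * I)) -
        r (t + 1) * Complex.exp ((τ * (t + 1) + β : ℝ) * I) =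
        -((r (t + 1) - r t : ℝ) * Complex.exp ((τ * (t + 1) + β : ℝ) * I)) := by
      have : Complex.exp ((τ * (t + 1) + β : ℝ) * I) =
          Complex.exp (τ * I) * Complex.exp ((τ * t + β : ℝ) * I) := by
        rw [← Complex.exp_add]; congr 1; push_cast; ring
      rw [this]; push_cast; ring
    rw [this, norm_neg, norm_mul, Complex.norm_exp_ofReal_mul_I, mul_one, Complex.norm_real]
    exact hrs t
  let q : ℝ → ℂ := fun t => Complex.exp (H (c t)) / Complex.exp (c (t + 1))
  have hq : ∀ t ∈ Icc A (B - 1), ‖q t - 1‖ < min (1 / 2) (m / 2) := by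
    intro t ht
    have h1 := huc _ _ (hdist t)
    rw [Subtype.dist_eq, ← hHc t ht, ← hc (t + 1) (hs2 t ht), dist_eq_norm] at h1
    have h2 := hlow _ (hs2 t ht)
    rw [← hc _ (hs2 t ht)] at h2
    have h3 : q t - 1 = (Complex.exp (H (c t)) - Complex.exp (c (t + 1))) / Complex.exp (c (t + 1)) := by
      simp only [q]; rw [sub_div, div_self (Complex.exp_ne_zero _)]
    rw [h3, norm_div, div_lt_iff₀ (norm_pos_iff.2 (Complex.exp_ne_zero _))]
    have h4 : 0 < min (1 / 2 : ℝ) (m / 2) := lt_min (by norm_num) (by linarith)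
    nlinarith
  have hq1 : ∀ t ∈ Icc A (B - 1), ‖Complex.log (q t)‖ < m := by
    intro t ht
    have h1 := hq t ht
    have h2 := Complex.norm_log_one_add_half_le_self (z := q t - 1) (h1.le.trans (min_le_left _ _))
    rw [add_sub_cancel] at h2
    have h3 := h1.trans_le (min_le_right _ _)
    nlinarith [norm_nonneg (q t - 1)]
  have hq2 : ∀ t ∈ Icc A (B - 1), q t ∈ slitPlane := by
    intro t ht
    left
    have h1 := (hq t ht).trans_le (min_le_left _ _)
    have h4 := (Complex.abs_re_le_norm (q t - 1)).trans_lt h1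
    have h5 := (abs_lt.1 h4).1
    simp only [sub_re, one_re] at h5
    linarith
  have hHcc : ContinuousOn (fun t => H (c t)) (Icc A (B - 1)) :=
    hH.comp (hcc.mono hs1) fun t ht => hcr t (hs1 t ht)
  have hc1 : ContinuousOn (fun t => c (t + 1)) (Icc A (B - 1)) :=
    hcc.comp (by fun_prop) hs2
  have hqc : ContinuousOn q (Icc A (B - 1)) :=
    ContinuousOn.div (Complex.continuous_exp.comp_continuousOn hHcc)
      (Complex.continuous_exp.comp_continuousOn hc1) fun t _ => Complex.exp_ne_zero _
  obtain ⟨n, hn⟩ := const_of_exp_one (isPreconnected_Icc (a := A) (b := B - 1))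
    (fun t => c (t + 1) - H (c t) + Complex.log (q t))
    ((hc1.sub hHcc).add (hqc.clog hq2)) (by
      intro t ht
      have : q t ≠ 0 := slitPlane_ne_zero (hq2 t ht)
      rw [Complex.exp_add, Complex.exp_log this, Complex.exp_sub]
      simp only [q]
      field_simp [Complex.exp_ne_zero])
  -- at the boundary time
  have hts : ts ∈ Icc A (B - 1) := ⟨hA, by linarith⟩
  have hsub : ∀ t ∈ Icc ts (ts + 1), t ∈ Icc A B := fun t ht => ⟨by linarith [ht.1], by linarith [ht.2]⟩
  obtain ⟨j, hj⟩ := const_of_exp_one (isPreconnected_Icc (a := ts) (b := ts + 1))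
    (fun t => c t - (b (τ * t + β) : ℂ) * I) (by
      refine (hcc.mono hsub).sub (Continuous.continuousOn ?_); fun_prop) (by
      intro t ht
      rw [Complex.exp_sub, hc t (hsub t ht), ← EE_I, hb]
      have : W t = EE ((τ * t + β : ℝ) * I) := Subtype.ext (by
        rw [hW, hrts t ht, EE_I]; simp)
      rw [this]
      refine div_self ?_
      rw [← this]; exact hne t (hsub t ht))
  have e1 := hj ts ⟨le_rfl, by linarith⟩
  have e2 := hj (ts + 1) ⟨by linarith, le_rfl⟩
  have e3 : H (c ts) = c (ts + 1) := by
    have h1 : c ts = b (τ * ts + β) * I + j * (2 * Real.pi * I) := by rw [← e1]; ring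
    have h2 : c (ts + 1) = b (τ * (ts + 1) + β) * I + j * (2 * Real.pi * I) := by rw [← e2]; ring
    rw [h1, hHp _ _ (by simpa using hl.le) (by simp), ← hbH, h2,
      show τ * (ts + 1) + β = τ * ts + β + τ by ring]
  have hn0 : (n : ℂ) * (2 * Real.pi * I) = 0 := by
    rw [← hn ts hts]
    simp only [q, e3, sub_self, div_self (Complex.exp_ne_zero _), Complex.log_one, add_zero]
  intro t ht
  have h1 := hn t ht
  rw [hn0] at h1
  have h2 : c (t + 1) - H (c t) = -Complex.log (q t) := eq_neg_of_add_eq_zero_left h1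
  rw [h2, norm_neg]
  exact hq1 t ht

lemma min_step (κ x : ℝ) (hκ : 1 ≤ κ) (hx : 0 < x) : |min 1 (x * κ) - min 1 x| ≤ κ - 1 := by
  rw [abs_le]
  have h0 : x ≤ x * κ := by nlinarith
  rcases le_total 1 x with h | h
  · rw [min_eq_left h, min_eq_left (h.trans h0)]; constructor <;> linarith
  · rw [min_eq_right h]
    rcases le_total 1 (x * κ) with h' | h'
    · rw [min_eq_left h']; constructor <;> nlinarith
    · rw [min_eq_right h']; constructor <;> nlinarith

lemma PB_lemma (g : DX ≃ₜ DX) (hg : Bdy g) (θ s : ℝ) (hs : s = 1 ∨ s = -1)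
    (z0 : DX) (hz0 : (z0 : ℂ) = 0) (hgz : (g z0 : ℂ) ≠ 0)
    (H : ℂ → ℂ) (l l' m : ℝ) (hl : l < l') (hl' : l' < 0)
    (hH : ContinuousOn H {ζ : ℂ | l ≤ ζ.re ∧ ζ.re ≤ 0})
    (hHe : ∀ ζ : ℂ, l ≤ ζ.re → ζ.re ≤ 0 → Complex.exp (H ζ) = g.symm (rotX θ (g (EE ζ))))
    (hHp : ∀ (ζ : ℂ) (n : ℤ), l ≤ ζ.re → ζ.re ≤ 0 →
      H (ζ + n * (2 * Real.pi * I)) = H ζ + n * (2 * Real.pi * I))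
    (hm0 : 0 < m)
    (hm : ∀ ζ : ℂ, l ≤ ζ.re → ζ.re ≤ 0 → m ≤ ‖H ζ - ζ‖)
    (hbot : ∀ ζ : ℂ, l ≤ ζ.re → ζ.re ≤ l' → s * (H ζ - ζ).im ≤ -m)
    (htop : ∀ ζ : ℂ, ζ.re = 0 → m ≤ s * (H ζ - ζ).im)
    (hmid : ∀ ζ : ℂ, l' ≤ ζ.re → ζ.re ≤ 0 → l + m ≤ (H ζ).re) : False := by
  have hl0 : l < 0 := hl.trans hl'
  obtain ⟨b, hbc, hb, -, hbs, -⟩ := boundary_lift g hg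
  have hHI : ∀ y : ℝ, H (y * I) = ((H (y * I)).im : ℂ) * I := by
    intro y
    have h1 := hHe (y * I) (by simpa using hl0.le) (by simp)
    have h2 : ‖(g.symm (rotX θ (g (EE (y * I)))) : ℂ)‖ = 1 :=
      (hg.symm _).2 ((bdy_rot θ _).2 ((hg _).2 (EE_I_norm y)))
    rw [← h1, Complex.norm_exp, Real.exp_eq_one_iff] at h2
    apply Complex.ext <;> simp [h2]
  obtain ⟨τ, hτ, hbτ⟩ := tau_lemma g b hbc hb hbs θ (fun y => (H (y * I)).im)
    (Complex.continuous_im.comp (hH.comp_continuous (by fun_prop) fun y => by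
      simpa using hl0.le)) (by
      intro y
      apply Subtype.ext
      rw [EE_I, ← hHI, hHe _ (by simpa using hl0.le) (by simp)])
  have hbH : ∀ t : ℝ, (b (t + τ) : ℂ) * I = H (b t * I) := fun t => by
    rw [hbτ, ← hHI]
  have hδ : 0 < Real.exp l * min (1 / 2) (m / 2) :=
    mul_pos (Real.exp_pos _) (lt_min (by norm_num) (by linarith))
  obtain ⟨σ0, hσ0, huc⟩ := Metric.uniformContinuous_iff.1
    (CompactSpace.uniformContinuous_of_continuous g.symm.continuous) _ hδ
  set ρ := ‖(g z0 : ℂ)‖ with hρ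
  have hρ0 : 0 < ρ := norm_pos_iff.2 hgz
  have hρ1 : ρ < 1 := lt_of_le_of_ne (g z0).norm_le (fun h => by
    have := (hg z0).1 h
    rw [hz0] at this; simp at this)
  set κ := 1 + σ0 / 2 with hκ
  have hκ1 : 1 < κ := by linarith
  set σ := Real.log κ with hσ
  have hσp : 0 < σ := Real.log_pos hκ1
  have hσe : Real.exp σ = κ := Real.exp_log (by linarith)
  set T := -Real.log ρ / σ with hT
  have hTp : 0 < T := div_pos (by linarith [Real.log_neg hρ0 hρ1]) hσp
  have hσT : σ * T = -Real.log ρ := by rw [hT]; field_simp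
  have hg0 : g.symm (g z0) = z0 := g.symm_apply_apply _
  have hpol : (g z0 : ℂ) = ρ * Complex.exp (Complex.arg (g z0 : ℂ) * I) :=
    (Complex.norm_mul_exp_arg_mul_I _).symm
  have el1 : Real.exp l < 1 := by rw [← Real.exp_zero]; exact Real.exp_lt_exp.2 hl0
  have hWex : ∀ (r : ℝ → ℝ) (β : ℝ), (∀ t, 0 < r t ∧ r t ≤ 1) → ∃ W : ℝ → DX,
      ∀ t : ℝ, (W t : ℂ) = r t * Complex.exp ((τ * t + β : ℝ) * I) := by
    intro r β hr
    refine ⟨fun t => ⟨r t * Complex.exp ((τ * t + β : ℝ) * I), ?_⟩, fun t => rfl⟩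
    rw [mem_closedBall_zero_iff, norm_mul, Complex.norm_exp_ofReal_mul_I, mul_one, Complex.norm_real,
      Real.norm_eq_abs, abs_of_pos (hr t).1]
    exact (hr t).2
  have hWcont : ∀ (r : ℝ → ℝ) (β : ℝ) (W : ℝ → DX), Continuous r →
      (∀ t : ℝ, (W t : ℂ) = r t * Complex.exp ((τ * t + β : ℝ) * I)) →
      Continuous fun t => ‖(g.symm (W t) : ℂ)‖ := by
    intro r β W hrc hW
    have hWc : Continuous W := by
      rw [continuous_induced_rng]
      have : (Subtype.val ∘ W) = fun t : ℝ => (r t * Complex.exp ((τ * t + β : ℝ) * I) : ℂ) :=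
        funext hW
      rw [this]; fun_prop
    exact (continuous_subtype_val.comp (g.symm.continuous.comp hWc)).norm
  have hWn : ∀ (r : ℝ → ℝ) (β : ℝ) (W : ℝ → DX), (∀ t, 0 < r t ∧ r t ≤ 1) →
      (∀ t : ℝ, (W t : ℂ) = r t * Complex.exp ((τ * t + β : ℝ) * I)) → ∀ t, ‖(W t : ℂ)‖ = r t := by
    intro r β W hr hW t
    rw [hW, norm_mul, Complex.norm_exp_ofReal_mul_I, mul_one, Complex.norm_real, Real.norm_eq_abs,
      abs_of_pos (hr t).1]
  -- first curve
  let r1 : ℝ → ℝ := fun t => min 1 (ρ * Real.exp (σ * t))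
  have hr1 : ∀ t, 0 < r1 t ∧ r1 t ≤ 1 := fun t =>
    ⟨lt_min one_pos (mul_pos hρ0 (Real.exp_pos _)), min_le_left _ _⟩
  have hr1c : Continuous r1 := by fun_prop
  have hr1T : ∀ t, T ≤ t → r1 t = 1 := by
    intro t ht
    refine min_eq_left ?_
    have : Real.exp (σ * T) = ρ⁻¹ := by rw [hσT, Real.exp_neg, Real.exp_log hρ0]
    have h2 : Real.exp (σ * T) ≤ Real.exp (σ * t) := Real.exp_le_exp.2 (by nlinarith)
    rw [this] at h2
    have := mul_le_mul_of_nonneg_left h2 hρ0.le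
    rwa [mul_inv_cancel₀ hρ0.ne'] at this
  have hr1lt : ∀ t, t < T → r1 t = ρ * Real.exp (σ * t) ∧ r1 t < 1 := by
    intro t ht
    have : Real.exp (σ * T) = ρ⁻¹ := by rw [hσT, Real.exp_neg, Real.exp_log hρ0]
    have h2 : Real.exp (σ * t) < Real.exp (σ * T) := Real.exp_lt_exp.2 (by nlinarith)
    rw [this] at h2
    have := mul_lt_mul_of_pos_left h2 hρ0
    rw [mul_inv_cancel₀ hρ0.ne'] at this
    have h3 : r1 t = ρ * Real.exp (σ * t) := min_eq_right this.le
    exact ⟨h3, h3 ▸ this⟩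
  have hr1s : ∀ t, |r1 (t + 1) - r1 t| < σ0 := by
    intro t
    have := min_step κ (ρ * Real.exp (σ * t)) hκ1.le (mul_pos hρ0 (Real.exp_pos _))
    have h2 : ρ * Real.exp (σ * (t + 1)) = ρ * Real.exp (σ * t) * κ := by
      rw [mul_add, mul_one, Real.exp_add, hσe]; ring
    simp only [r1, h2]
    linarith
  obtain ⟨W1, hW1⟩ := hWex r1 (Complex.arg (g z0 : ℂ)) hr1
  have hN1 := hWcont r1 _ W1 hr1c hW1
  have hW1n := hWn r1 _ W1 hr1 hW1
  have hW10 : W1 0 = g z0 := by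
    apply Subtype.ext
    refine Eq.trans ?_ hpol.symm
    rw [hW1, (hr1lt 0 hTp).1]; simp
  have hN1one : ∀ t, T ≤ t → ‖(g.symm (W1 t) : ℂ)‖ = 1 := fun t ht =>
    (hg.symm _).2 (by rw [hW1n, hr1T t ht])
  obtain ⟨A, hA, hAv, hAl⟩ := last_time _ hN1 0 T (Real.exp l) hTp.le
    (by rw [hW10, hg0, hz0, norm_zero]; exact (Real.exp_pos _).le) (by rw [hN1one T le_rfl]; exact el1.le)
  obtain ⟨c, hcc, hcr, hcH⟩ := curve_lift g b hbc hb θ τ hτ H l m hl0 hm0 hH hHe hHp hbH σ0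
    (fun x y h => huc h) r1 hr1c hr1s (Complex.arg (g z0 : ℂ)) A (T + 1) T hA.2 le_rfl
    (fun t ht => hr1T t ht.1) W1 hW1 (by
      intro t ht
      rcases le_total t T with h | h
      · exact hAl t ⟨ht.1, h⟩
      · rw [hN1one t h]; exact el1.le)
  -- second curve
  let r2 : ℝ → ℝ := fun t => min 1 (Real.exp (-(σ * t)))
  have hr2 : ∀ t, 0 < r2 t ∧ r2 t ≤ 1 := fun t =>
    ⟨lt_min one_pos (Real.exp_pos _), min_le_left _ _⟩
  have hr2c : Continuous r2 := by fun_prop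
  have hr2T : ∀ t, t ≤ 0 → r2 t = 1 := by
    intro t ht
    refine min_eq_left (Real.one_le_exp ?_)
    nlinarith
  have hr2lt : ∀ t, 0 < t → r2 t = Real.exp (-(σ * t)) ∧ r2 t < 1 := by
    intro t ht
    have : Real.exp (-(σ * t)) < 1 := by
      rw [← Real.exp_zero]; exact Real.exp_lt_exp.2 (by nlinarith)
    have h3 : r2 t = Real.exp (-(σ * t)) := min_eq_right this.le
    exact ⟨h3, h3 ▸ this⟩
  have hr2s : ∀ t, |r2 (t + 1) - r2 t| < σ0 := by
    intro t
    have := min_step κ (Real.exp (-(σ * (t + 1)))) hκ1.le (Real.exp_pos _)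
    have h2 : Real.exp (-(σ * t)) = Real.exp (-(σ * (t + 1))) * κ := by
      rw [← hσe, ← Real.exp_add]; congr 1; ring
    rw [abs_sub_comm]
    simp only [r2]
    rw [h2]
    linarith
  obtain ⟨W2, hW2⟩ := hWex r2 (Complex.arg (g z0 : ℂ) - τ * T) hr2
  have hN2 := hWcont r2 _ W2 hr2c hW2
  have hW2n := hWn r2 _ W2 hr2 hW2
  have hW2T : W2 T = g z0 := by
    apply Subtype.ext
    refine Eq.trans ?_ hpol.symm
    rw [hW2, (hr2lt T hTp).1, hσT, neg_neg, Real.exp_log hρ0]; simp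
  have hN2one : ∀ t, t ≤ 0 → ‖(g.symm (W2 t) : ℂ)‖ = 1 := fun t ht =>
    (hg.symm _).2 (by rw [hW2n, hr2T t ht])
  obtain ⟨T', hT', hTv, hTl⟩ := first_time _ hN2 0 T (Real.exp l) hTp.le
    (by rw [hN2one 0 le_rfl]; exact el1.le)
    (by rw [hW2T, hg0, hz0, norm_zero]; exact (Real.exp_pos _).le)
  obtain ⟨d, hdc, hdr, hdH⟩ := curve_lift g b hbc hb θ τ hτ H l m hl0 hm0 hH hHe hHp hbH σ0
    (fun x y h => huc h) r2 hr2c hr2s (Complex.arg (g z0 : ℂ) - τ * T) (-1) T' (-1) le_rfl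
    (by linarith [hT'.1])
    (fun t ht => hr2T t (by linarith [ht.2])) W2 hW2 (by
      intro t ht
      rcases le_total 0 t with h | h
      · exact hTl t ⟨h, ht.2⟩
      · rw [hN2one t h]; exact el1.le)
  have reof : ∀ {z : ℂ} {x : DX} {v : ℝ}, Complex.exp z = x → ‖(x : ℂ)‖ = Real.exp v → z.re = v := by
    intro z x v h1 h2
    rw [← h1, Complex.norm_exp] at h2
    exact Real.exp_injective h2
  have hAT1 : ∀ t, A ≤ t → t ≤ T + 1 → t ∈ Icc A (T + 1) := fun t h h' => ⟨h, h'⟩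
  refine winding_contra_sign s hs H l l' m hl hl' hH hm0 hm hbot htop hmid c A (T + 1)
    (by linarith [hA.2]) hcc (reof (hcr A ⟨le_rfl, by linarith [hA.2]⟩).2 hAv)
    (by
      rw [add_sub_cancel_right]
      exact reof (hcr T ⟨hA.2, by linarith⟩).2 (by rw [hN1one T le_rfl, Real.exp_zero]))
    (reof (hcr (T + 1) ⟨by linarith [hA.2], le_rfl⟩).2 (by rw [hN1one _ (by linarith), Real.exp_zero]))
    (fun t ht => (hcr t ht).1) ?_ hcH d (-1) T' (by linarith [hT'.1]) hdc
    (reof (hdr (-1) ⟨le_rfl, by linarith [hT'.1]⟩).2 (by rw [hN2one _ (by linarith), Real.exp_zero]))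
    (reof (hdr T' ⟨by linarith [hT'.1], le_rfl⟩).2 hTv)
    (fun t ht => (hdr t ht).1) ?_ hdH
  · intro x y h1 h2 h3 hxy
    have mx : x ∈ Icc A (T + 1) := ⟨h1, by linarith⟩
    have my : y ∈ Icc A (T + 1) := ⟨by linarith, h3⟩
    have hWxy : W1 x = W1 y := by
      apply g.symm.injective
      apply Subtype.ext
      rw [← (hcr x mx).2, ← (hcr y my).2, hxy]
    have hrxy : r1 x = r1 y := by rw [← hW1n, ← hW1n, hWxy]
    by_cases hxT : x < T
    · have e1 := hr1lt x hxT
      by_cases hyT : y < T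
      · have e2 := hr1lt y hyT
        rw [e1.1, e2.1] at hrxy
        have h5 := Real.exp_injective (mul_left_cancel₀ hρ0.ne' hrxy)
        have h6 := mul_left_cancel₀ hσp.ne' h5
        linarith
      · rw [hr1T y (not_lt.1 hyT)] at hrxy
        linarith [e1.2]
    · have hx : x = T := by linarith [not_lt.1 hxT]
      have hy : y = x + 1 := by linarith
      have h5 := hcH x ⟨h1, by linarith⟩
      rw [← hy, ← hxy, norm_sub_rev] at h5
      exact absurd (hm _ (hcr x mx).1.1 (hcr x mx).1.2) (not_le.2 h5)
  · intro x y h1 h2 h3 hxy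
    have mx : x ∈ Icc (-1) T' := ⟨h1, by linarith⟩
    have my : y ∈ Icc (-1) T' := ⟨by linarith, h3⟩
    have hWxy : W2 x = W2 y := by
      apply g.symm.injective
      apply Subtype.ext
      rw [← (hdr x mx).2, ← (hdr y my).2, hxy]
    have hrxy : r2 x = r2 y := by rw [← hW2n, ← hW2n, hWxy]
    by_cases hyT : 0 < y
    · have e1 := hr2lt y hyT
      by_cases hxT : 0 < x
      · have e2 := hr2lt x hxT
        rw [e1.1, e2.1] at hrxy
        have h5 := neg_injective (Real.exp_injective hrxy)
        have h6 := mul_left_cancel₀ hσp.ne' h5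
        linarith
      · rw [hr2T x (not_lt.1 hxT)] at hrxy
        linarith [e1.2]
    · have hx : x = -1 := by linarith [not_lt.1 hyT]
      have hy : y = x + 1 := by linarith [not_lt.1 hyT]
      have h5 := hdH x ⟨h1, by linarith⟩
      rw [← hy, ← hxy, norm_sub_rev] at h5
      exact absurd (hm _ (hdr x mx).1.1 (hdr x mx).1.2) (not_le.2 h5)

open Topology

/-- conjugated rotation as a continuous map -/
noncomputable def cj (g : DX ≃ₜ DX) (γ : ℝ) : C(DX, DX) :=
  ⟨fun x => g.symm (rotX γ (g x)),
    g.symm.continuous.comp ((rotX γ).continuous.comp g.continuous)⟩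

lemma cj_apply (g : DX ≃ₜ DX) (γ : ℝ) (x : DX) : cj g γ x = g.symm (rotX γ (g x)) := rfl

lemma rotX_add (a b : ℝ) (x : DX) : rotX (a + b) x = rotX a (rotX b x) := by
  apply Subtype.ext
  simp only [rotX_coe]
  rw [← mul_assoc, ← Complex.exp_add]
  congr 2; push_cast; ring

lemma cj_comp (g : DX ≃ₜ DX) (a b : ℝ) : (cj g a).comp (cj g b) = cj g (a + b) := by
  ext1 x
  simp [cj_apply, rotX_add]

/-- iterates -/
noncomputable def itC (f : C(DX, DX)) : ℕ → C(DX, DX)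
  | 0 => ContinuousMap.id _
  | n + 1 => f.comp (itC f n)

lemma itC_apply (f : C(DX, DX)) (n : ℕ) (x : DX) : itC f n x = f^[n] x := by
  induction n with
  | zero => rfl
  | succ n ih => rw [Function.iterate_succ_apply', ← ih]; rfl

lemma itC_cj (g : DX ≃ₜ DX) (a : ℝ) (n : ℕ) : itC (cj g a) n = cj g (n * a) := by
  induction n with
  | zero =>
    ext1 x
    have : rotX 0 (g x) = g x := Subtype.ext (by simp [rotX_coe])
    simp [itC, cj_apply, this]
  | succ n ih => rw [itC, ih, cj_comp]; congr 1; push_cast; ring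

lemma itC_tendsto {F : ℕ → C(DX, DX)} {f : C(DX, DX)} (h : Tendsto F atTop (𝓝 f)) (n : ℕ) :
    Tendsto (fun k => itC (F k) n) atTop (𝓝 (itC f n)) := by
  induction n with
  | zero => exact tendsto_const_nhds
  | succ n ih =>
    exact (ContinuousMap.continuous_comp'.tendsto (itC f n, f)).comp (ih.prodMk_nhds h)

lemma cmap_close {F : ℕ → C(DX, DX)} {f : C(DX, DX)} (h : Tendsto F atTop (𝓝 f)) {ε : ℝ} (hε : 0 < ε) :
    ∀ᶠ k in atTop, ∀ x, ‖(F k x : ℂ) - f x‖ < ε := by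
  have := Metric.tendstoUniformly_iff.1 (ContinuousMap.tendsto_iff_tendstoUniformly.1 h) ε hε
  filter_upwards [this] with k hk x
  have := hk x
  rwa [dist_comm, Subtype.dist_eq, dist_eq_norm] at this

lemma cj_bdy {g : DX ≃ₜ DX} (hg : Bdy g) (γ : ℝ) (x : DX) : ‖(cj g γ x : ℂ)‖ = 1 ↔ ‖(x : ℂ)‖ = 1 := by
  rw [cj_apply, hg.symm, bdy_rot, hg]

lemma limit_bdy {g : ℕ → DX ≃ₜ DX} (hg : ∀ k, Bdy (g k)) {γ : ℕ → ℝ} {ψ : C(DX, DX)}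
    (hψ : Tendsto (fun k => cj (g k) (γ k)) atTop (𝓝 ψ)) (x : DX) (hx : ‖(x : ℂ)‖ = 1) :
    ‖(ψ x : ℂ)‖ = 1 := by
  have h1 : Tendsto (fun k => cj (g k) (γ k) x) atTop (𝓝 (ψ x)) :=
    (ContinuousMap.tendsto_iff_tendstoUniformly.1 hψ).tendsto_at x
  have h2 : Tendsto (fun k => ‖(cj (g k) (γ k) x : ℂ)‖) atTop (𝓝 ‖(ψ x : ℂ)‖) :=
    ((continuous_subtype_val.tendsto _).comp h1).norm
  have h3 : (fun k => ‖(cj (g k) (γ k) x : ℂ)‖) = fun _ => 1 :=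
    funext fun k => (cj_bdy (hg k) _ _).2 hx
  rw [h3] at h2
  exact (tendsto_nhds_unique h2 tendsto_const_nhds)

lemma b_expand (b : ℝ → ℝ) (hbc : Continuous b) (hi : Function.Injective b) (d : ℝ)
    (hd : d = 1 ∨ d = -1) (hp : ∀ t, b (t + 2 * Real.pi) = b t + 2 * Real.pi * d) (s t : ℝ)
    (hst : s + 2 * Real.pi ≤ t) : 2 * Real.pi ≤ |b t - b s| := by
  have h1 := hp s
  have hpi := Real.pi_pos
  rcases hbc.strictMono_of_inj hi with hm | hm
  · have h2 := hm.monotone hst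
    have h3 := hm (show s < s + 2 * Real.pi by linarith)
    rcases hd with rfl | rfl
    · exact le_trans (by linarith) (le_abs_self _)
    · linarith
  · have h2 := hm.antitone hst
    have h3 := hm (show s < s + 2 * Real.pi by linarith)
    rcases hd with rfl | rfl
    · linarith
    · exact le_trans (by linarith) (neg_le_abs _)

lemma log_close {q : ℂ} {ε : ℝ} (h : ‖q - 1‖ ≤ 1 / 2) (h' : ‖q - 1‖ ≤ ε / 2) (hε : 0 < ε) :
    q ∈ slitPlane ∧ ‖Complex.log q‖ < ε := by
  constructor
  · left
    have h4 := (Complex.abs_re_le_norm (q - 1)).trans h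
    have h5 := (abs_le.1 h4).1
    simp only [sub_re, one_re] at h5
    linarith
  · have h2 := Complex.norm_log_one_add_half_le_self (z := q - 1) h
    rw [add_sub_cancel] at h2
    nlinarith [norm_nonneg (q - 1)]

lemma no_bdy_fix {g : ℕ → DX ≃ₜ DX} (hg : ∀ k, Bdy (g k)) {γ : ℕ → ℝ} {γ' : ℝ}
    (hγ : Tendsto γ atTop (𝓝 γ')) (hγ1 : Complex.exp (γ' * I) ≠ 1) {ψ : C(DX, DX)}
    (hψ : Tendsto (fun k => cj (g k) (γ k)) atTop (𝓝 ψ)) (x : DX) (hx : ‖(x : ℂ)‖ = 1) :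
    ψ x ≠ x := by
  intro hfix
  have hpi := Real.pi_pos
  have hψb := limit_bdy hg hψ
  obtain ⟨x0, hx0⟩ := exists_real_of_norm_one x hx
  obtain ⟨f0, hf0c, hf0, -⟩ := circle_lift ψ ψ.continuous hψb
  have h1 : Complex.exp ((f0 x0 - x0 : ℝ) * I) = 1 := by
    rw [← EE_I_eq_iff, hf0, hx0, hfix]
  let f : ℝ → ℝ := fun t => f0 t - (f0 x0 - x0)
  have hfc : Continuous f := by fun_prop
  have hfx : f x0 = x0 := by simp [f]
  have hf : ∀ t, EE (f t * I) = ψ (EE (t * I)) := by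
    intro t
    rw [← hf0, EE_I_eq_iff]
    have : f t - f0 t = -(f0 x0 - x0) := by simp [f]
    rw [this]
    push_cast at h1 ⊢
    rw [neg_mul, Complex.exp_neg, h1, inv_one]
  let q : ℕ → ℝ → ℂ := fun k t => (cj (g k) (γ k) (EE (t * I)) : ℂ) / ψ (EE (t * I))
  let F : ℕ → ℝ → ℝ := fun k t => f t + (Complex.log (q k t)).im
  have hψ0 : ∀ t : ℝ, (ψ (EE (t * I)) : ℂ) ≠ 0 := fun t h => by
    have := hψb _ (EE_I_norm t)
    rw [h] at this; simp at this
  have hq : ∀ ε, 0 < ε → ∀ᶠ k in atTop, ∀ t, q k t ∈ slitPlane ∧ ‖Complex.log (q k t)‖ < ε := by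
    intro ε hε
    filter_upwards [cmap_close hψ (show 0 < min (1 / 2) (ε / 2) from lt_min (by norm_num) (by linarith))]
      with k hk t
    have h2 := hk (EE (t * I))
    have h3 : ‖q k t - 1‖ < min (1 / 2) (ε / 2) := by
      have : q k t - 1 = ((cj (g k) (γ k) (EE (t * I)) : ℂ) - ψ (EE (t * I))) / ψ (EE (t * I)) := by
        simp only [q]; rw [sub_div, div_self (hψ0 t)]
      rw [this, norm_div, hψb _ (EE_I_norm t), div_one]
      exact h2
    exact log_close (h3.le.trans (min_le_left _ _)) (h3.le.trans (min_le_right _ _)) hε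
  have hFc : ∀ᶠ k in atTop, Continuous (F k) ∧
      ∀ t, EE (F k t * I) = (g k).symm (rotX (γ k) (g k (EE (t * I)))) := by
    filter_upwards [hq 1 one_pos] with k hk
    have hqc : Continuous (q k) := by
      have hE : Continuous fun t : ℝ => EE (t * I) := EE_cont.comp (by fun_prop)
      exact (continuous_subtype_val.comp ((cj (g k) (γ k)).continuous.comp hE)).div
        (continuous_subtype_val.comp (ψ.continuous.comp hE)) hψ0
    refine ⟨hfc.add (Complex.continuous_im.comp (hqc.clog fun t => (hk t).1)), fun t => ?_⟩
    rw [← cj_apply]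
    apply Subtype.ext
    have hqn : ‖q k t‖ = 1 := by
      simp only [q]
      rw [norm_div, hψb _ (EE_I_norm t), (cj_bdy (hg k) _ _).2 (EE_I_norm t), div_one]
    have hql : ((Complex.log (q k t)).im : ℂ) * I = Complex.log (q k t) := by
      apply Complex.ext
      · simp [Complex.log_re, hqn]
      · simp
    rw [EE_I]
    simp only [F]
    push_cast
    rw [add_mul, Complex.exp_add, hql, Complex.exp_log (slitPlane_ne_zero (hk t).1), ← EE_I, hf]
    simp only [q]
    rw [mul_div_cancel₀ _ (hψ0 t)]
  have hFt : ∀ y : ℕ → ℝ, Tendsto y atTop (𝓝 x0) → Tendsto (fun k => F k (y k)) atTop (𝓝 x0) := by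
    intro y hy
    have h2 : Tendsto (fun k => f (y k)) atTop (𝓝 x0) := by
      have := (hfc.tendsto x0).comp hy
      rwa [hfx] at this
    have h3 : Tendsto (fun k => (Complex.log (q k (y k))).im) atTop (𝓝 0) := by
      rw [Metric.tendsto_nhds]
      intro ε hε
      filter_upwards [hq ε hε] with k hk
      rw [Real.dist_eq, sub_zero]
      exact (Complex.abs_im_le_norm _).trans_lt (hk _).2
    simpa using h2.add h3
  have hFN : ∀ N : ℕ, Tendsto (fun k => (F k)^[N] x0) atTop (𝓝 x0) := by
    intro N
    induction N with
    | zero => exact tendsto_const_nhds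
    | succ N ih =>
      simp only [Function.iterate_succ_apply']
      exact hFt _ ih
  -- the translation numbers
  have hτ : ∀ᶠ k in atTop, ∃ τ : ℝ, Complex.exp (τ * I) = Complex.exp (γ k * I) ∧
      ∀ N : ℕ, |(F k)^[N] x0 - x0| < 2 * Real.pi → N * |τ| < 2 * Real.pi := by
    filter_upwards [hFc] with k hk
    obtain ⟨b, hbc, hb, hbi, hbs, d, hd, hbp⟩ := boundary_lift (g k) (hg k)
    obtain ⟨τ, hτ1, hτ2⟩ := tau_lemma (g k) b hbc hb hbs (γ k) (F k) hk.1 hk.2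
    refine ⟨τ, hτ1, fun N hN => ?_⟩
    obtain ⟨t0, ht0⟩ := hbs x0
    have hit : ∀ N : ℕ, b (t0 + N * τ) = (F k)^[N] x0 := by
      intro N
      induction N with
      | zero => simp [ht0]
      | succ N ih =>
        rw [Function.iterate_succ_apply', ← ih, ← hτ2]; congr 1; push_cast; ring
    by_contra hc
    push Not at hc
    rw [← hit N, ← ht0] at hN
    rcases le_total 0 τ with h | h
    · rw [abs_of_nonneg h] at hc
      have := b_expand b hbc hbi d hd hbp t0 (t0 + N * τ) (by linarith)
      linarith
    · rw [abs_of_nonpos h] at hc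
      have := b_expand b hbc hbi d hd hbp (t0 + N * τ) t0 (by linarith)
      rw [abs_sub_comm] at this
      linarith
  have hlim : Complex.exp (γ' * I) = 1 := by
    have hA : Tendsto (fun k => Complex.exp (γ k * I)) atTop (𝓝 (Complex.exp (γ' * I))) := by
      have : Continuous fun t : ℝ => Complex.exp (t * I) := by fun_prop
      exact (this.tendsto γ').comp hγ
    have hB : Tendsto (fun k => Complex.exp (γ k * I)) atTop (𝓝 1) := by
      have hc : ContinuousAt (fun t : ℝ => Complex.exp (t * I)) 0 := by fun_prop
      rw [Metric.tendsto_nhds]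
      intro ε hε
      obtain ⟨δ, hδ, hδ'⟩ := Metric.continuousAt_iff.1 hc ε hε
      obtain ⟨N, hN⟩ := exists_nat_gt (2 * Real.pi / δ)
      have hN0 : (0 : ℝ) < N := lt_trans (by positivity) hN
      have h4 := Metric.tendsto_nhds.1 (hFN N) (2 * Real.pi) (by positivity)
      filter_upwards [hτ, h4] with k hk hk4
      obtain ⟨τ, hτ1, hτ2⟩ := hk
      have h5 := hτ2 N (by simpa [Real.dist_eq] using hk4)
      rw [← hτ1]
      have h6 : |τ| < δ := by
        rw [div_lt_iff₀ hδ] at hN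
        nlinarith
      have := hδ' (x := τ) (by simpa [Real.dist_eq] using h6)
      simpa using this
    exact tendsto_nhds_unique hA hB
  exact hγ1 hlim


lemma strip_min (F : ℂ → ℝ) (p : ℝ) (hp : p ≤ 0) (hF : ContinuousOn F {ζ : ℂ | p ≤ ζ.re ∧ ζ.re ≤ 0})
    (hper : ∀ (ζ : ℂ) (n : ℤ), p ≤ ζ.re → ζ.re ≤ 0 → F (ζ + n * (2 * Real.pi * I)) = F ζ) :
    ∃ ζ0 : ℂ, p ≤ ζ0.re ∧ ζ0.re ≤ 0 ∧ ∀ ζ : ℂ, p ≤ ζ.re → ζ.re ≤ 0 → F ζ0 ≤ F ζ := by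
  have hpi := Real.pi_pos
  have hK : IsCompact (Icc p 0 ×ℂ Icc 0 (2 * Real.pi)) := isCompact_Icc.reProdIm isCompact_Icc
  have hsub : (Icc p 0 ×ℂ Icc 0 (2 * Real.pi)) ⊆ {ζ : ℂ | p ≤ ζ.re ∧ ζ.re ≤ 0} := fun ζ hζ => hζ.1
  obtain ⟨ζ0, h0, hmin⟩ := hK.exists_isMinOn ⟨0, by
    refine ⟨⟨?_, ?_⟩, ⟨?_, ?_⟩⟩ <;> simp [hp, hpi.le]⟩ (hF.mono hsub)
  refine ⟨ζ0, h0.1.1, h0.1.2, fun ζ h1 h2 => ?_⟩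
  have h3 := hper ζ (-⌊ζ.im / (2 * Real.pi)⌋) h1 h2
  rw [← h3]
  apply hmin
  refine ⟨⟨by simpa using h1, by simpa using h2⟩, ?_⟩
  have e1 := Int.floor_le (ζ.im / (2 * Real.pi))
  have e2 := Int.lt_floor_add_one (ζ.im / (2 * Real.pi))
  rw [le_div_iff₀ (by positivity)] at e1
  rw [div_lt_iff₀ (by positivity)] at e2
  constructor
  · simp; linarith
  · simp; linarith

/-- first order contact with a shear at the origin -/
def PP (f : C(DX, DX)) (b : ℝ) : Prop :=
  ∀ ε > 0, ∃ δ > 0, ∀ z : DX, ‖(z : ℂ)‖ ≤ δ → ‖(f z : ℂ) - (z + (b * (z : ℂ).im : ℝ))‖ ≤ ε * ‖(z : ℂ)‖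

lemma PP.bound {f : C(DX, DX)} {b : ℝ} (h : PP f b) :
    ∃ δ > 0, ∀ z : DX, ‖(z : ℂ)‖ ≤ δ → ‖(f z : ℂ)‖ ≤ (2 + |b|) * ‖(z : ℂ)‖ := by
  obtain ⟨δ, hδ, h1⟩ := h 1 one_pos
  refine ⟨δ, hδ, fun z hz => ?_⟩
  have h2 := h1 z hz
  have h3 : ‖((b * (z : ℂ).im : ℝ) : ℂ)‖ ≤ |b| * ‖(z : ℂ)‖ := by
    rw [Complex.norm_real, Real.norm_eq_abs, abs_mul]
    exact mul_le_mul_of_nonneg_left (Complex.abs_im_le_norm _) (abs_nonneg _)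
  calc ‖(f z : ℂ)‖ = ‖((f z : ℂ) - (z + (b * (z : ℂ).im : ℝ))) + z + (b * (z : ℂ).im : ℝ)‖ := by
        congr 1; ring
    _ ≤ 1 * ‖(z : ℂ)‖ + ‖(z : ℂ)‖ + |b| * ‖(z : ℂ)‖ :=
        (norm_add₃_le).trans (by gcongr)
    _ = (2 + |b|) * ‖(z : ℂ)‖ := by ring

lemma PP.comp {f f' : C(DX, DX)} {b b' : ℝ} (h : PP f b) (h' : PP f' b') :
    PP (f.comp f') (b + b') := by
  intro ε hε
  obtain ⟨δ0, hδ0, hb0⟩ := h'.bound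
  set C := 2 + |b'| with hC
  have hCp : 0 < C := by positivity
  obtain ⟨δ1, hδ1, h1⟩ := h (ε / (2 * C)) (by positivity)
  obtain ⟨δ2, hδ2, h2⟩ := h' (ε / (2 * (1 + |b|))) (by positivity)
  refine ⟨min δ0 (min (δ1 / C) δ2), by positivity, fun z hz => ?_⟩
  have z0 := hz.trans (min_le_left _ _)
  have z1 := hz.trans ((min_le_right _ _).trans (min_le_left _ _))
  have z2 := hz.trans ((min_le_right _ _).trans (min_le_right _ _))
  have e0 := hb0 z z0
  have e2 := h2 z z2
  have e1 := h1 (f' z) (e0.trans (by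
    rw [le_div_iff₀ hCp] at z1; linarith))
  set d := (f' z : ℂ) - (z + (b' * (z : ℂ).im : ℝ)) with hd
  have him : (f' z : ℂ).im = (z : ℂ).im + d.im := by simp [hd]
  have key : ((f.comp f') z : ℂ) - (z + ((b + b') * (z : ℂ).im : ℝ)) =
      ((f (f' z) : ℂ) - (f' z + (b * (f' z : ℂ).im : ℝ))) + d + (b * d.im : ℝ) := by
    rw [him]
    simp only [hd, ContinuousMap.comp_apply]
    push_cast; ring
  rw [key]
  have e3 : ‖((b * d.im : ℝ) : ℂ)‖ ≤ |b| * ‖d‖ := by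
    rw [Complex.norm_real, Real.norm_eq_abs, abs_mul]
    exact mul_le_mul_of_nonneg_left (Complex.abs_im_le_norm _) (abs_nonneg _)
  refine norm_add₃_le.trans ?_
  have e4 : ε / (2 * C) * ‖(f' z : ℂ)‖ ≤ ε / 2 * ‖(z : ℂ)‖ := by
    calc ε / (2 * C) * ‖(f' z : ℂ)‖ ≤ ε / (2 * C) * (C * ‖(z : ℂ)‖) := by gcongr
      _ = ε / 2 * ‖(z : ℂ)‖ := by field_simp
  have e5 : (1 + |b|) * ‖d‖ ≤ ε / 2 * ‖(z : ℂ)‖ := by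
    calc (1 + |b|) * ‖d‖ ≤ (1 + |b|) * (ε / (2 * (1 + |b|)) * ‖(z : ℂ)‖) := by gcongr
      _ = ε / 2 * ‖(z : ℂ)‖ := by field_simp
  linarith

/-- quotient by the identity in the half plane -/
noncomputable def qq (f : C(DX, DX)) (ζ : ℂ) : ℂ := (f (EE ζ) : ℂ) / EE ζ

lemma slit_aux (b : ℝ) : ∃ ε > 0, ∀ z q : ℂ, z ≠ 0 → ‖q * z - (z + (b * z.im : ℝ))‖ ≤ ε * ‖z‖ →
    q ∈ slitPlane ∧ (z.im = 0 → 0 < q.re) := by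
  refine ⟨1 / (16 * (|b| + 1)), by positivity, fun z q hz h => ?_⟩
  set ε := 1 / (16 * (|b| + 1)) with hε
  have hε1 : ε * |b| ≤ 1 / 16 := by
    rw [hε, div_mul_eq_mul_div, div_le_div_iff₀ (by positivity) (by norm_num)]
    nlinarith [abs_nonneg b]
  have hε2 : ε ≤ 1 / 16 := by
    rw [hε, div_le_div_iff₀ (by positivity) (by norm_num)]
    nlinarith [abs_nonneg b]
  have hε0 : 0 < ε := by positivity
  set N := z.re ^ 2 + z.im ^ 2 with hN
  have hN0 : 0 < N := by
    have := Complex.normSq_pos.2 hz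
    rw [Complex.normSq_apply] at this
    nlinarith
  set w : ℂ := 1 + ((b * z.im : ℝ) : ℂ) / z with hw
  have h1 : ‖q - w‖ ≤ ε := by
    have : q - w = (q * z - (z + (b * z.im : ℝ))) / z := by rw [hw]; field_simp
    rw [this, norm_div, div_le_iff₀ (norm_pos_iff.2 hz)]
    exact h
  have hNs : Complex.normSq z = N := by rw [Complex.normSq_apply, hN]; ring
  have wre : w.re = 1 + b * z.im * z.re / N := by
    rw [hw, add_re, Complex.div_re, hNs]; simp
  have wim : w.im = -(b * z.im * z.im / N) := by
    rw [hw, add_im, Complex.div_im, hNs]; simp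
  have r1 := (Complex.abs_re_le_norm (q - w)).trans h1
  have r2 := (Complex.abs_im_le_norm (q - w)).trans h1
  rw [sub_re, abs_le] at r1
  rw [sub_im, abs_le] at r2
  have hpos : |w.im| ≤ ε → 0 < q.re := by
    intro h2
    set t := z.im * z.re / N with ht
    have ht2 : (b * t) ^ 2 ≤ |b| * |w.im| := by
      have : |w.im| = |b| * (z.im ^ 2 / N) := by
        rw [wim, abs_neg, show b * z.im * z.im / N = b * (z.im ^ 2 / N) by ring, abs_mul,
          abs_of_nonneg (by positivity : (0 : ℝ) ≤ z.im ^ 2 / N)]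
      rw [this, ← mul_assoc, abs_mul_abs_self, mul_pow]
      have : t ^ 2 ≤ z.im ^ 2 / N := by
        rw [ht, div_pow, div_le_div_iff₀ (by positivity) hN0]
        have : z.re ^ 2 ≤ N := by nlinarith [sq_nonneg z.im]
        have h5 := mul_le_mul_of_nonneg_left this (by positivity : 0 ≤ z.im ^ 2 * N)
        nlinarith
      nlinarith [sq_nonneg b]
    have ht3 : (b * t) ^ 2 ≤ 1 / 16 := by nlinarith [abs_nonneg b]
    have ht4 : -(1 / 4) ≤ b * t := by nlinarith
    have : w.re = 1 + b * t := by rw [wre, ht]; ring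
    linarith
  refine ⟨?_, fun h0 => hpos (by rw [wim, h0]; simpa using hε0.le)⟩
  by_cases h2 : |w.im| ≤ ε
  · exact Or.inl (hpos h2)
  · right
    intro h3
    rw [h3] at r2
    exact h2 (abs_le.2 ⟨by linarith, by linarith⟩)

lemma EE_im_real (x : ℝ) (hx : x ≤ 0) : (EE x : ℂ).im = 0 := by
  rw [EE_coe (by simpa using hx)]
  exact Complex.exp_ofReal_im x

lemma qq_slit {f : C(DX, DX)} {b : ℝ} (h : PP f b) :
    ∃ ℓ < 0, ∀ ζ : ℂ, ζ.re ≤ ℓ → qq f ζ ∈ slitPlane ∧ ((EE ζ : ℂ).im = 0 → 0 < (qq f ζ).re) := by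
  obtain ⟨ε, hε, h1⟩ := slit_aux b
  obtain ⟨δ, hδ, h2⟩ := h ε hε
  refine ⟨min (-1) (Real.log δ), lt_of_le_of_lt (min_le_left _ _) (by norm_num), fun ζ hζ => ?_⟩
  have h3 : ‖(EE ζ : ℂ)‖ ≤ δ := by
    rw [EE_norm]
    rw [← Real.exp_log hδ]
    exact Real.exp_le_exp.2 ((min_le_left _ _).trans (hζ.trans (min_le_right _ _)))
  refine h1 (EE ζ) _ (EE_ne ζ) ?_
  rw [qq, div_mul_cancel₀ _ (EE_ne ζ)]
  exact h2 _ h3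

lemma qq_cont (f : C(DX, DX)) : Continuous (qq f) :=
  (continuous_subtype_val.comp (f.continuous.comp EE_cont)).div
    (continuous_subtype_val.comp EE_cont) EE_ne

lemma nl_aux {f : C(DX, DX)} {b : ℝ} (h : PP f b) (G : ℂ → ℂ) (hG : Continuous G)
    (hGe : ∀ ζ, Complex.exp (G ζ) = f (EE ζ)) :
    ∃ ℓ < 0, ∃ n : ℤ, ∀ ζ : ℂ, ζ.re ≤ ℓ → (qq f ζ ∈ slitPlane ∧ ((EE ζ : ℂ).im = 0 → 0 < (qq f ζ).re)) ∧
      G ζ = ζ + Complex.log (qq f ζ) + n * (2 * Real.pi * I) := by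
  obtain ⟨ℓ, hℓ, h1⟩ := qq_slit h
  obtain ⟨n, hn⟩ := const_of_exp_one (convex_halfSpace_re_le ℓ).isPreconnected
    (fun ζ => G ζ - (ζ + Complex.log (qq f ζ)))
    (hG.continuousOn.sub (continuousOn_id.add ((qq_cont f).continuousOn.clog fun ζ hζ => (h1 ζ hζ).1)))
    (by
      intro ζ hζ
      have hζ' : ζ.re ≤ ℓ := hζ
      have hq := slitPlane_ne_zero (h1 ζ hζ).1
      rw [Complex.exp_sub, Complex.exp_add, Complex.exp_log hq, hGe, ← EE_coe (hζ'.trans hℓ.le), qq,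
        mul_div_cancel₀ _ (EE_ne ζ), div_self]
      rw [← hGe]; exact Complex.exp_ne_zero _)
  refine ⟨ℓ, hℓ, n, fun ζ hζ => ⟨h1 ζ hζ, ?_⟩⟩
  rw [← hn ζ hζ]; ring

/-- normalised lift -/
def NL (f : C(DX, DX)) (G : ℂ → ℂ) : Prop :=
  Continuous G ∧ (∀ ζ, Complex.exp (G ζ) = f (EE ζ)) ∧
    ∃ ℓ < 0, ∀ ζ : ℂ, ζ.re ≤ ℓ → qq f ζ ∈ slitPlane ∧ G ζ = ζ + Complex.log (qq f ζ)

lemma NL.exists {f : C(DX, DX)} {b : ℝ} (h : PP f b) (h0 : ∀ x : DX, (f x : ℂ) = 0 → (x : ℂ) = 0) :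
    ∃ G, NL f G := by
  obtain ⟨L, hLc, hL⟩ := exists_log (convex_univ (𝕜 := ℝ) (E := ℂ)) (fun ζ => (f (EE ζ) : ℂ))
    (continuous_subtype_val.comp (f.continuous.comp EE_cont)).continuousOn
    (fun ζ _ h1 => EE_ne ζ (h0 _ h1))
  rw [continuousOn_univ] at hLc
  obtain ⟨ℓ, hℓ, n, hn⟩ := nl_aux h L hLc fun ζ => hL ζ (mem_univ _)
  refine ⟨fun ζ => L ζ - n * (2 * Real.pi * I), by fun_prop, fun ζ => ?_, ℓ, hℓ, fun ζ hζ => ?_⟩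
  · rw [Complex.exp_sub, Complex.exp_int_mul_two_pi_mul_I, div_one, hL ζ (mem_univ _)]
  · refine ⟨(hn ζ hζ).1.1, ?_⟩
    simp only [(hn ζ hζ).2]; ring

lemma NL.re_le {f : C(DX, DX)} {G : ℂ → ℂ} (h : NL f G) (ζ : ℂ) : (G ζ).re ≤ 0 := by
  have := (f (EE ζ)).norm_le
  rw [← h.2.1, Complex.norm_exp] at this
  rw [← Real.exp_le_exp, Real.exp_zero]; exact this

lemma NL.lift_eq {f : C(DX, DX)} {G : ℂ → ℂ} (h : NL f G) (ζ : ℂ) : EE (G ζ) = f (EE ζ) :=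
  Subtype.ext (by rw [EE_coe (h.re_le ζ), h.2.1])

lemma NL.per {f : C(DX, DX)} {G : ℂ → ℂ} (h : NL f G) (ζ : ℂ) (n : ℤ) :
    G (ζ + n * (2 * Real.pi * I)) = G ζ + n * (2 * Real.pi * I) := by
  have hc := h.1
  obtain ⟨m, hm⟩ := const_of_exp_one (isPreconnected_univ (α := ℂ))
    (fun ζ => G (ζ + n * (2 * Real.pi * I)) - G ζ - n * (2 * Real.pi * I)) (by fun_prop) (by
      intro ζ _
      rw [Complex.exp_sub, Complex.exp_sub, h.2.1, h.2.1, EE_add_int,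
        Complex.exp_int_mul_two_pi_mul_I, div_one, div_self]
      rw [← h.2.1]; exact Complex.exp_ne_zero _)
  obtain ⟨ℓ, hℓ, h1⟩ := h.2.2
  have e1 := (h1 (ℓ : ℂ) (by simp)).2
  have e2 := (h1 ((ℓ : ℂ) + n * (2 * Real.pi * I)) (by simp)).2
  have e3 := hm (ℓ : ℂ) (mem_univ _)
  simp only [e1, e2, qq, EE_add_int] at e3
  have e4 : (m : ℂ) * (2 * Real.pi * I) = 0 := by rw [← e3]; ring
  have := hm ζ (mem_univ _)
  rw [e4, sub_eq_zero, sub_eq_iff_eq_add] at this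
  rw [this]; ring

lemma NL.comp {f f' : C(DX, DX)} {b b' : ℝ} {G G' : ℂ → ℂ} (hP : PP f b) (hP' : PP f' b')
    (h : NL f G) (h' : NL f' G') : NL (f.comp f') (G ∘ G') := by
  have hc : Continuous (G ∘ G') := h.1.comp h'.1
  have he : ∀ ζ, Complex.exp ((G ∘ G') ζ) = (f.comp f') (EE ζ) := fun ζ => by
    rw [Function.comp_apply, h.2.1, h'.lift_eq]; rfl
  refine ⟨hc, he, ?_⟩
  obtain ⟨ℓ, hℓ, n, hn⟩ := nl_aux (hP.comp hP') _ hc he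
  obtain ⟨ℓ1, hℓ1, h1⟩ := h.2.2
  obtain ⟨ℓ2, hℓ2, h2⟩ := h'.2.2
  obtain ⟨ℓ3, hℓ3, h3⟩ := qq_slit hP'
  obtain ⟨δ, hδ, hbd⟩ := hP'.bound
  set C := 2 + |b'| with hC
  have hCp : 0 < C := by positivity
  refine ⟨ℓ, hℓ, fun ζ hζ => ⟨(hn ζ hζ).1.1, ?_⟩⟩
  have hn0 : n = 0 := by
    let x : ℝ := min ℓ (min ℓ2 (min ℓ3 (min (Real.log δ) (ℓ1 - Real.log C))))
    have x1 : x ≤ ℓ := min_le_left _ _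
    have x2 : x ≤ ℓ2 := (min_le_right _ _).trans (min_le_left _ _)
    have x3 : x ≤ ℓ3 := (min_le_right _ _).trans ((min_le_right _ _).trans (min_le_left _ _))
    have x4 : x ≤ Real.log δ :=
      (min_le_right _ _).trans ((min_le_right _ _).trans ((min_le_right _ _).trans (min_le_left _ _)))
    have x5 : x ≤ ℓ1 - Real.log C :=
      (min_le_right _ _).trans ((min_le_right _ _).trans ((min_le_right _ _).trans (min_le_right _ _)))
    have xim := EE_im_real x (x1.trans hℓ.le)
    have xn : ‖(EE x : ℂ)‖ = Real.exp x := by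
      rw [EE_norm, ofReal_re, min_eq_left (x1.trans hℓ.le)]
    have hG're : (G' x).re ≤ ℓ1 := by
      have e1 := hbd (EE x) (by rw [xn, ← Real.exp_log hδ]; exact Real.exp_le_exp.2 x4)
      rw [← h'.2.1, Complex.norm_exp, xn, ← Real.exp_log hCp, ← Real.exp_add] at e1
      have := Real.exp_le_exp.1 e1
      linarith
    have a1 := hn x (by simpa using x1)
    have a2 := h2 x (by simpa using x2)
    have a3 := h3 x (by simpa using x3)
    have a4 := h1 (G' x) hG're
    have a5 := a1.2
    rw [Function.comp_apply, a4.2, a2.2] at a5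
    have a6 := congrArg Complex.im a5
    have b1 := Complex.abs_arg_lt_pi_div_two_iff.2 (Or.inl (a3.2 xim))
    have b2 := Complex.abs_arg_lt_pi_div_two_iff.2 (Or.inl (a1.1.2 xim))
    have b3 : |Complex.arg (qq f (G' x))| ≤ Real.pi := Complex.abs_arg_le_pi _
    rw [abs_lt] at b1 b2
    rw [abs_le] at b3
    rw [a2.2] at b3
    simp [Complex.log_im] at a6
    refine int_eq_of_close (y := 0) (u := n * (2 * Real.pi)) ?_ ?_ (by push_cast; ring)
    · linarith
    · linarith
  have := (hn ζ hζ).2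
  rw [this, hn0]; simp

lemma itC_one (f : C(DX, DX)) : itC f 1 = f := by ext1 x; rfl

lemma PP.iter {f : C(DX, DX)} {b : ℝ} (h : PP f b) (n : ℕ) (hn : 1 ≤ n) : PP (itC f n) (n * b) := by
  induction n, hn using Nat.le_induction with
  | base => rw [itC_one]; simpa using h
  | succ n hn ih =>
    have := h.comp ih
    rw [itC]
    convert this using 1
    push_cast; ring

lemma NL.iter {f : C(DX, DX)} {b : ℝ} {G : ℂ → ℂ} (hP : PP f b) (h : NL f G) (n : ℕ) (hn : 1 ≤ n) :
    NL (itC f n) G^[n] := by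
  induction n, hn using Nat.le_induction with
  | base => rw [itC_one]; simpa using h
  | succ n hn ih =>
    rw [itC, Function.iterate_succ']
    exact NL.comp hP (hP.iter n hn) h ih


lemma limit_step {g : ℕ → DX ≃ₜ DX} (hg : ∀ k, Bdy (g k)) {θ : ℕ → ℝ} {h : C(DX, DX)}
    (hh : Tendsto (fun k => cj (g k) (θ k)) atTop (𝓝 h))
    (z0 : DX) (hz0 : (z0 : ℂ) = 0) (hgz : ∀ k, (g k z0 : ℂ) ≠ 0) (a : DX) (ha : h a = a)
    (hfix : ∀ᶠ k in atTop, ∀ x, cj (g k) (θ k) x = x → x = a)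
    (s : ℝ) (hs : s = 1 ∨ s = -1) (G : ℂ → ℂ) (hG : Continuous G)
    (hGe : ∀ ζ, Complex.exp (G ζ) = h (EE ζ))
    (hGp : ∀ (ζ : ℂ) (n : ℤ), G (ζ + n * (2 * Real.pi * I)) = G ζ + n * (2 * Real.pi * I))
    (l' : ℝ) (hl' : l' < 0) (hbot : ∀ ζ : ℂ, ζ.re ≤ l' → s * (G ζ - ζ).im ≤ -1)
    (htop : ∀ ζ : ℂ, ζ.re = 0 → 1 ≤ s * (G ζ - ζ).im)
    (hne : ∀ ζ : ℂ, ζ.re ≤ 0 → EE ζ = a → G ζ ≠ ζ) : False := by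
  have hreper : ∀ (ζ : ℂ) (n : ℤ), (G (ζ + n * (2 * Real.pi * I))).re = (G ζ).re := by
    intro ζ n; rw [hGp]; simp
  obtain ⟨ζ1, -, -, h1⟩ := strip_min (fun ζ => (G ζ).re) l' hl'.le
    (Complex.continuous_re.comp hG).continuousOn (fun ζ n _ _ => hreper ζ n)
  set l := min (l' - 1) ((G ζ1).re - 1) with hl
  have hll : l < l' := lt_of_le_of_lt (min_le_left _ _) (by linarith)
  have hlG : ∀ ζ : ℂ, l' ≤ ζ.re → ζ.re ≤ 0 → l + 1 ≤ (G ζ).re := fun ζ a1 a2 => by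
    have e : (G ζ1).re ≤ (G ζ).re := h1 ζ a1 a2
    have := min_le_right (l' - 1) ((G ζ1).re - 1)
    linarith
  obtain ⟨ζ2, -, -, h2⟩ := strip_min (fun ζ => (G ζ).re) l (hll.trans hl').le
    (Complex.continuous_re.comp hG).continuousOn (fun ζ n _ _ => hreper ζ n)
  have hh0 : ∀ ζ, (h (EE ζ) : ℂ) ≠ 0 := fun ζ => by rw [← hGe]; exact Complex.exp_ne_zero _
  let q : ℕ → ℂ → ℂ := fun k ζ => (cj (g k) (θ k) (EE ζ) : ℂ) / h (EE ζ)
  have hq : ∀ᶠ k in atTop, ∀ ζ : ℂ, l ≤ ζ.re → ζ.re ≤ 0 →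
      q k ζ ∈ slitPlane ∧ ‖Complex.log (q k ζ)‖ < 1 / 4 := by
    filter_upwards [cmap_close hh (show 0 < Real.exp (G ζ2).re * (1 / 8) by positivity)] with k hk ζ a1 a2
    have e1 := hk (EE ζ)
    have e2 : Real.exp (G ζ2).re ≤ ‖(h (EE ζ) : ℂ)‖ := by
      rw [← hGe, Complex.norm_exp]; exact Real.exp_le_exp.2 (h2 ζ a1 a2)
    have e3 : ‖q k ζ - 1‖ ≤ 1 / 8 := by
      have : q k ζ - 1 = ((cj (g k) (θ k) (EE ζ) : ℂ) - h (EE ζ)) / h (EE ζ) := by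
        simp only [q]; rw [sub_div, div_self (hh0 ζ)]
      rw [this, norm_div, div_le_iff₀ (norm_pos_iff.2 (hh0 ζ))]
      linarith
    exact log_close (by linarith) (by linarith) (by norm_num)
  obtain ⟨k, hk, hfk⟩ := (hq.and hfix).exists
  let H : ℂ → ℂ := fun ζ => G ζ + Complex.log (q k ζ)
  have hqc : Continuous (q k) :=
    (continuous_subtype_val.comp ((cj (g k) (θ k)).continuous.comp EE_cont)).div
      (continuous_subtype_val.comp (h.continuous.comp EE_cont)) hh0
  have hH : ContinuousOn H {ζ : ℂ | l ≤ ζ.re ∧ ζ.re ≤ 0} :=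
    hG.continuousOn.add (hqc.continuousOn.clog fun ζ hζ => (hk ζ hζ.1 hζ.2).1)
  have hHe : ∀ ζ : ℂ, l ≤ ζ.re → ζ.re ≤ 0 →
      Complex.exp (H ζ) = (g k).symm (rotX (θ k) (g k (EE ζ))) := by
    intro ζ a1 a2
    rw [← cj_apply]
    simp only [H]
    rw [Complex.exp_add, Complex.exp_log (slitPlane_ne_zero (hk ζ a1 a2).1), hGe]
    simp only [q]
    rw [mul_div_cancel₀ _ (hh0 ζ)]
  have hHp : ∀ (ζ : ℂ) (n : ℤ), l ≤ ζ.re → ζ.re ≤ 0 →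
      H (ζ + n * (2 * Real.pi * I)) = H ζ + n * (2 * Real.pi * I) := by
    intro ζ n _ _
    simp only [H, q, hGp, EE_add_int]; ring
  have hHne : ∀ ζ : ℂ, l ≤ ζ.re → ζ.re ≤ 0 → H ζ ≠ ζ := by
    intro ζ a1 a2 hc
    have e1 : cj (g k) (θ k) (EE ζ) = EE ζ := by
      apply Subtype.ext
      rw [cj_apply, ← hHe ζ a1 a2, hc, EE_coe a2]
    have e2 := hfk _ e1
    have e3 : q k ζ = 1 := by
      simp only [q]
      rw [e1, e2, ha, div_self]
      rw [← e2]; exact EE_ne ζ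
    simp only [H, e3, Complex.log_one, add_zero] at hc
    exact hne ζ a2 e2 hc
  obtain ⟨ζ3, b1, b2, h3⟩ := strip_min (fun ζ => ‖H ζ - ζ‖) l (hll.trans hl').le
    ((hH.sub continuousOn_id).norm) (fun ζ n a1 a2 => by
      rw [hHp ζ n a1 a2]; congr 1; ring)
  have hm1 : 0 < ‖H ζ3 - ζ3‖ := norm_pos_iff.2 (sub_ne_zero.2 (hHne ζ3 b1 b2))
  have hsim : ∀ ζ : ℂ, l ≤ ζ.re → ζ.re ≤ 0 → |s * (Complex.log (q k ζ)).im| ≤ 1 / 4 := by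
    intro ζ a1 a2
    have e1 := (Complex.abs_im_le_norm _).trans (hk ζ a1 a2).2.le
    rcases hs with rfl | rfl
    · simpa using e1
    · simpa using e1
  refine PB_lemma (g k) (hg k) (θ k) s hs z0 hz0 (hgz k) H l l' (min ‖H ζ3 - ζ3‖ (1 / 4)) hll hl' hH hHe hHp
    (lt_min hm1 (by norm_num)) (fun ζ a1 a2 => (min_le_left _ _).trans (h3 ζ a1 a2)) ?_ ?_ ?_
  · intro ζ a1 a2
    have e1 := hbot ζ a2
    have e2 := (abs_le.1 (hsim ζ a1 (a2.trans hl'.le))).2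
    have e3 := min_le_right ‖H ζ3 - ζ3‖ (1 / 4)
    have e4 : s * (H ζ - ζ).im = s * (G ζ - ζ).im + s * (Complex.log (q k ζ)).im := by
      simp only [H, sub_im, add_im]; ring
    linarith
  · intro ζ a1
    have e1 := htop ζ a1
    have e2 := (abs_le.1 (hsim ζ (by linarith) a1.le)).1
    have e3 := min_le_right ‖H ζ3 - ζ3‖ (1 / 4)
    have e4 : s * (H ζ - ζ).im = s * (G ζ - ζ).im + s * (Complex.log (q k ζ)).im := by
      simp only [H, sub_im, add_im]; ring
    linarith
  · intro ζ a1 a2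
    have e1 := hlG ζ a1 a2
    have e2 := (Complex.abs_re_le_norm _).trans (hk ζ (by linarith) a2).2.le
    have e3 := min_le_right ‖H ζ3 - ζ3‖ (1 / 4)
    have e4 := (abs_le.1 e2).1
    have e5 : (H ζ).re = (G ζ).re + (Complex.log (q k ζ)).re := by simp only [H, add_re]
    linarith

lemma real_min (F : ℝ → ℝ) (hF : Continuous F) (hper : ∀ (t : ℝ) (n : ℤ), F (t + n * (2 * Real.pi)) = F t)
    (hpos : ∀ t, 0 < F t) : ∃ δ > 0, ∀ t, δ ≤ F t := by
  obtain ⟨ζ0, -, -, h⟩ := strip_min (fun ζ => F ζ.im) 0 le_rfl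
    (hF.comp Complex.continuous_im).continuousOn (fun ζ n _ _ => by
      rw [← hper ζ.im n]; congr 1; simp)
  refine ⟨F ζ0.im, hpos _, fun t => ?_⟩
  simpa using h (t * I) (by simp) (by simp)

lemma top_sign (u : ℝ → ℝ) (hu : Continuous u)
    (hper : ∀ (t : ℝ) (n : ℤ), u (t + n * (2 * Real.pi)) = u t + n * (2 * Real.pi)) (hne : ∀ t, u t ≠ t) :
    ∃ s : ℝ, (s = 1 ∨ s = -1) ∧ ∃ δ > 0, ∀ t, δ ≤ s * (u t - t) := by
  have hp : ∀ s : ℝ, (∀ t, 0 < s * (u t - t)) → ∃ δ > 0, ∀ t, δ ≤ s * (u t - t) := fun s hs =>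
    real_min (fun t => s * (u t - t)) (by fun_prop) (fun t n => by simp only [hper]; ring) hs
  by_cases h : ∃ t, t < u t
  · refine ⟨1, Or.inl rfl, hp 1 fun t => ?_⟩
    by_contra hc
    obtain ⟨t1, ht1⟩ := h
    have h2 : t ∈ univ := mem_univ _
    obtain ⟨x, -, hx⟩ := (isPreconnected_univ (α := ℝ)).intermediate_value (mem_univ t) (mem_univ t1)
      (f := fun t => u t - t) (by fun_prop) (show (0 : ℝ) ∈ Icc _ _ from ⟨by linarith, by linarith⟩)
    exact hne x (by simp only at hx; linarith)
  · push Not at h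
    refine ⟨-1, Or.inr rfl, hp (-1) fun t => ?_⟩
    have := lt_of_le_of_ne (h t) (hne t)
    linarith

lemma caseD {g : ℕ → DX ≃ₜ DX} (hg : ∀ k, Bdy (g k)) {γ : ℕ → ℝ} {γ' : ℝ}
    (hγ : Tendsto γ atTop (𝓝 γ')) (hγ1 : ∀ Q : ℕ, 1 ≤ Q → Complex.exp ((Q * γ' : ℝ) * I) ≠ 1)
    {ψ : C(DX, DX)} (hψ : Tendsto (fun k => cj (g k) (γ k)) atTop (𝓝 ψ))
    (z0 : DX) (hz0 : (z0 : ℂ) = 0) (hgz : ∀ k, (g k z0 : ℂ) ≠ 0) (a : DX)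
    (hga : ∀ k, (g k a : ℂ) = 0) (b : ℝ) (hP : PP ψ b)
    (hψ0 : ∀ x : DX, (ψ x : ℂ) = 0 → (x : ℂ) = 0) : False := by
  have hpi := Real.pi_pos
  obtain ⟨G, hG⟩ := NL.exists hP hψ0
  have hbdy := limit_bdy hg hψ
  have hnf := no_bdy_fix hg hγ (by simpa using hγ1 1 le_rfl) hψ
  have hcja : ∀ (k : ℕ) (t : ℝ), cj (g k) t a = a := by
    intro k t
    rw [cj_apply, Homeomorph.symm_apply_eq]
    apply Subtype.ext; rw [rotX_coe, hga, mul_zero]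
  have hlima : ∀ {θ : ℕ → ℝ} {h : C(DX, DX)}, Tendsto (fun k => cj (g k) (θ k)) atTop (𝓝 h) → h a = a := by
    intro θ h hh
    have h1 : Tendsto (fun k => cj (g k) (θ k) a) atTop (𝓝 (h a)) :=
      (ContinuousMap.tendsto_iff_tendstoUniformly.1 hh).tendsto_at a
    simp only [hcja] at h1
    exact (tendsto_nhds_unique h1 tendsto_const_nhds)
  have hGI : ∀ y : ℝ, G (y * I) = ((G (y * I)).im : ℂ) * I := by
    intro y
    have h2 := hbdy _ (EE_I_norm y)
    rw [← hG.2.1, Complex.norm_exp, Real.exp_eq_one_iff] at h2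
    apply Complex.ext <;> simp [h2]
  let u : ℝ → ℝ := fun y => (G (y * I)).im
  have huc : Continuous u := Complex.continuous_im.comp (hG.1.comp (by fun_prop))
  obtain ⟨s, hs, δ, hδ, hsδ⟩ := top_sign u huc (by
    intro t n
    simp only [u]
    have := hG.per (t * I) n
    rw [show (((t + n * (2 * Real.pi) : ℝ) : ℂ) * I) = t * I + n * (2 * Real.pi * I) by push_cast; ring,
      this]
    simp) (by
    intro t ht
    apply hnf (EE (t * I)) (EE_I_norm t)
    rw [← hG.lift_eq, hGI]
    change EE ((u t : ℂ) * I) = _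
    rw [ht])
  have huI : ∀ (Q : ℕ) (y : ℝ), G^[Q] (y * I) = (u^[Q] y : ℂ) * I := by
    intro Q y
    induction Q with
    | zero => rfl
    | succ Q ih => rw [Function.iterate_succ_apply', Function.iterate_succ_apply', ih, hGI]
  have huQ : ∀ (Q : ℕ) (y : ℝ), Q * δ ≤ s * (u^[Q] y - y) := by
    intro Q y
    induction Q with
    | zero => simp
    | succ Q ih =>
      rw [Function.iterate_succ_apply']
      have := hsδ (u^[Q] y)
      push_cast
      linarith
  obtain ⟨N, hN⟩ := exists_nat_gt ((2 * Real.pi + 1) / δ)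
  set Q := N + 2 with hQ
  have hQ1 : 1 ≤ Q := by omega
  have hQδ : 2 * Real.pi + 1 ≤ Q * δ := by
    rw [div_lt_iff₀ hδ] at hN
    rw [hQ]; push_cast; nlinarith
  have hGQ := hG.iter hP Q hQ1
  have hh : Tendsto (fun k => cj (g k) (Q * γ k)) atTop (𝓝 (itC ψ Q)) := by
    have := itC_tendsto hψ Q
    simpa only [itC_cj] using this
  obtain ⟨s', hs'⟩ : ∃ s' : ℤ, (s' : ℝ) = s ∧ (s' = 1 ∨ s' = -1) := by
    rcases hs with rfl | rfl
    · exact ⟨1, by simp, Or.inl rfl⟩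
    · exact ⟨-1, by simp, Or.inr rfl⟩
  have hss : s * s = 1 := by rcases hs with rfl | rfl <;> norm_num
  obtain ⟨ℓ, hℓ, hlow⟩ := hGQ.2.2
  have him : ∀ ζ : ℂ, (G^[Q] ζ - s' * (2 * Real.pi * I) - ζ).im = (G^[Q] ζ - ζ).im - s * (2 * Real.pi) := by
    intro ζ
    rw [← hs'.1]
    simp
    ring
  refine limit_step hg hh z0 hz0 hgz a (hlima hh) ?_ s hs (fun ζ => G^[Q] ζ - s' * (2 * Real.pi * I))
    (hGQ.1.sub continuous_const) ?_ ?_ ℓ hℓ ?_ ?_ ?_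
  · have hc : Continuous fun t : ℝ => Complex.exp ((Q * t : ℝ) * I) := by fun_prop
    have h1 : Tendsto (fun k => Complex.exp ((Q * γ k : ℝ) * I)) atTop (𝓝 (Complex.exp ((Q * γ' : ℝ) * I))) :=
      (hc.tendsto γ').comp hγ
    filter_upwards [h1.eventually_ne (hγ1 Q hQ1)] with k hk x hx
    rw [cj_apply, Homeomorph.symm_apply_eq] at hx
    have h2 := congrArg Subtype.val hx
    rw [rotX_coe] at h2
    have h3 : (g k x : ℂ) = 0 := by
      by_contra hc
      exact hk (mul_right_cancel₀ hc (by rw [h2, one_mul]))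
    apply (g k).injective
    apply Subtype.ext
    rw [h3, hga]
  · intro ζ
    rw [Complex.exp_sub, Complex.exp_int_mul_two_pi_mul_I, div_one, hGQ.2.1]
  · intro ζ n
    rw [hGQ.per]; ring
  · intro ζ hζ
    have e1 := (hlow ζ hζ).2
    rw [him, mul_sub, ← mul_assoc, hss, e1, add_sub_cancel_left, Complex.log_im]
    have e2 := Complex.abs_arg_le_pi (qq (itC ψ Q) ζ)
    have e3 : s * Complex.arg (qq (itC ψ Q) ζ) ≤ Real.pi := by
      rw [abs_le] at e2
      rcases hs with rfl | rfl <;> linarith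
    linarith [Real.pi_gt_three]
  · intro ζ hζ
    have e1 : ζ = (ζ.im : ℂ) * I := by apply Complex.ext <;> simp [hζ]
    rw [him, mul_sub, ← mul_assoc, hss]
    have e2 := huQ Q ζ.im
    have e3 : (G^[Q] ζ - ζ).im = u^[Q] ζ.im - ζ.im := by
      rw [sub_im]
      nth_rewrite 1 [e1]
      rw [huI]; simp
    rw [e3]
    linarith
  · intro ζ hζ hζa hc
    have hψa := hlima hψ
    have e1 : Complex.exp (G ζ) = Complex.exp ζ := by
      rw [hG.2.1, hζa, hψa, ← hζa, EE_coe hζ]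
    obtain ⟨m, hm⟩ := Complex.exp_eq_exp_iff_exists_int.1 e1
    have e2 : ∀ R : ℕ, G^[R] ζ = ζ + ((R * m : ℤ) : ℂ) * (2 * Real.pi * I) := by
      intro R
      induction R with
      | zero => simp
      | succ R ih =>
        rw [Function.iterate_succ_apply', ih, hG.per, hm]; push_cast; ring
    rw [e2] at hc
    have e3 : (((Q * m - s' : ℤ)) : ℂ) * (2 * Real.pi * I) = 0 := by
      push_cast at hc ⊢
      linear_combination hc
    have e4 : ((Q * m - s' : ℤ) : ℂ) = 0 := by
      rcases mul_eq_zero.1 e3 with h | h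
      · exact h
      · exact absurd h Complex.two_pi_I_ne_zero
    have e5 : (Q : ℤ) * m - s' = 0 := by exact_mod_cast e4
    have e6 : (Q : ℤ) ∣ s' := ⟨m, by linarith⟩
    have e7 : (Q : ℤ) ∣ 1 := by
      rcases hs'.2 with h | h
      · rwa [h] at e6
      · rw [h] at e6; exact (dvd_neg.1 e6)
    have := Int.le_of_dvd one_pos e7
    omega


lemma idx_false (F : ℂ → ℂ) (z0 : ℂ) (r : ℝ) (hr : 0 < r) (hF : ContinuousOn F (closedBall z0 r))
    (h0 : ∀ z ∈ closedBall z0 r, F z ≠ 0) (M : ℂ →L[ℝ] ℂ) (c : ℝ) (hc : 0 < c)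
    (hM : ∀ z, c * ‖z‖ ≤ ‖M z‖)
    (h : ∀ z, ‖z - z0‖ = r → ‖F z - M (z - z0)‖ ≤ c / 2 * r) : False := by
  obtain ⟨L, hL, hLe⟩ := exists_log (convex_closedBall z0 r) F hF h0
  let w : ℝ → ℂ := fun t => r * Complex.exp (t * I)
  have hwc : Continuous w := by fun_prop
  have hwn : ∀ t, ‖w t‖ = r := fun t => by
    simp [w, Complex.norm_exp_ofReal_mul_I, abs_of_pos hr]
  have hwm : ∀ t, z0 + w t ∈ closedBall z0 r := fun t => by
    simp [mem_closedBall, dist_eq_norm, hwn]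
  have hM0 : ∀ t, M (w t) ≠ 0 := fun t e => by
    have := hM (w t)
    rw [e, hwn, norm_zero] at this
    nlinarith [mul_pos hc hr]
  let q : ℝ → ℂ := fun t => F (z0 + w t) / M (w t)
  have hq : ∀ t, q t ∈ slitPlane := fun t => by
    have e : q t - 1 = (F (z0 + w t) - M (w t)) / M (w t) := by
      simp only [q]; rw [sub_div, div_self (hM0 t)]
    have e2 : ‖q t - 1‖ ≤ 1 / 2 := by
      rw [e, norm_div, div_le_iff₀ (norm_pos_iff.2 (hM0 t))]
      have a1 := h (z0 + w t) (by simp [hwn])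
      rw [add_sub_cancel_left] at a1
      have a2 := hM (w t)
      rw [hwn] at a2
      linarith
    exact (log_close (ε := 1) e2 e2 one_pos).1
  have hFc : Continuous fun t => F (z0 + w t) :=
    hF.comp_continuous (by fun_prop) hwm
  have hqc : Continuous q := hFc.div (by fun_prop) hM0
  let μ : ℝ → ℂ := fun t => L (z0 + w t) - Complex.log (q t)
  have hμc : Continuous μ :=
    (hL.comp_continuous (by fun_prop) hwm).sub (hqc.clog hq)
  have hμe : ∀ t, Complex.exp (μ t) = M (w t) := fun t => by
    have hF0 := h0 _ (hwm t)
    have : q t ≠ 0 := div_ne_zero hF0 (hM0 t)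
    simp only [μ]
    rw [Complex.exp_sub, hLe _ (hwm t), Complex.exp_log this]
    simp only [q]
    field_simp
  have hwp : ∀ t : ℝ, w (t + Real.pi) = - w t := fun t => by
    simp only [w]; push_cast
    rw [add_mul, Complex.exp_add, Complex.exp_pi_mul_I]; ring
  have hper : ∀ t : ℝ, μ (t + Real.pi + Real.pi) = μ t := fun t => by
    have : w (t + Real.pi + Real.pi) = w t := by rw [hwp, hwp, neg_neg]
    simp only [μ, q, this]
  obtain ⟨n, hn⟩ := const_of_exp_one (isPreconnected_univ (α := ℝ))
    (fun t => μ (t + Real.pi) - μ t - Real.pi * I) (by fun_prop) (fun t _ => by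
      rw [Complex.exp_sub, Complex.exp_sub, hμe, hμe, hwp, Complex.exp_pi_mul_I, map_neg]
      have := hM0 t
      field_simp)
  have e1 := hn 0 trivial
  have e2 := hn (0 + Real.pi) trivial
  simp only [hper] at e2
  have e3 : ((2 * n + 1 : ℤ) : ℂ) * (2 * Real.pi * I) = 0 := by
    push_cast; linear_combination -e1 - e2
  have hpi : (2 * Real.pi * I : ℂ) ≠ 0 := Complex.two_pi_I_ne_zero
  rcases mul_eq_zero.1 e3 with h' | h'
  · have : (2 * n + 1 : ℤ) = 0 := by exact_mod_cast h'
    omega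
  · exact hpi h'

lemma cj_fix_unique {g : DX ≃ₜ DX} {γ : ℝ} (hγ : Complex.exp (γ * I) ≠ 1) {a : DX}
    (hga : (g a : ℂ) = 0) {x : DX} (hx : cj g γ x = x) : x = a := by
  rw [cj_apply, Homeomorph.symm_apply_eq] at hx
  have h1 := congrArg Subtype.val hx
  rw [rotX_coe] at h1
  have h2 : (Complex.exp (γ * I) - 1) * (g x : ℂ) = 0 := by rw [sub_mul, h1]; ring
  rcases mul_eq_zero.1 h2 with h | h
  · exact absurd (sub_eq_zero.1 h) hγ
  · exact g.injective (Subtype.ext (h.trans hga.symm))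

/-- nondegenerate case -/
lemma caseC {g : ℕ → DX ≃ₜ DX} {γ : ℕ → ℝ} {γ' : ℝ}
    (hγ : Tendsto γ atTop (𝓝 γ')) (hγ1 : Complex.exp (γ' * I) ≠ 1)
    {ψ : C(DX, DX)} (hψ : Tendsto (fun k => cj (g k) (γ k)) atTop (𝓝 ψ))
    (z0 : DX) (hz0 : ‖(z0 : ℂ)‖ < 1) (a : DX) (haz : a ≠ z0)
    (hga : ∀ k, (g k a : ℂ) = 0) (M : ℂ →L[ℝ] ℂ) (hM0 : ∀ v, M v = 0 → v = 0)
    (hM : ∀ ε > 0, ∃ δ > 0, ∀ z : DX, ‖(z : ℂ) - z0‖ ≤ δ →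
      ‖(ψ z : ℂ) - z - M (z - z0)‖ ≤ ε * ‖(z : ℂ) - z0‖) : False := by
  obtain ⟨K, hK, hK'⟩ := (LinearMap.exists_antilipschitzWith (M : ℂ →ₗ[ℝ] ℂ) (by
    rw [LinearMap.ker_eq_bot']; exact hM0))
  have hKp : (0 : ℝ) < K := by exact_mod_cast hK
  set c : ℝ := (K : ℝ)⁻¹ with hc
  have hcp : 0 < c := by positivity
  have hMc : ∀ z, c * ‖z‖ ≤ ‖M z‖ := fun z => by
    have := hK'.le_mul_dist z 0
    simp only [dist_zero_right, map_zero] at this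
    rw [hc, inv_mul_le_iff₀ hKp]
    exact this
  obtain ⟨δ, hδ, hδ'⟩ := hM (c / 4) (by positivity)
  have hna : 0 < ‖(a : ℂ) - z0‖ := norm_pos_iff.2 (sub_ne_zero.2 fun h => haz (Subtype.ext h))
  obtain ⟨r, hr, hr'⟩ : ∃ r : ℝ, 0 < r ∧ r < min δ (min (1 - ‖(z0 : ℂ)‖) ‖(a : ℂ) - z0‖) :=
    exists_between (lt_min hδ (lt_min (by linarith) hna))
  have hr1 : r < δ := hr'.trans_le (min_le_left _ _)
  have hr2 : r < 1 - ‖(z0 : ℂ)‖ := hr'.trans_le ((min_le_right _ _).trans (min_le_left _ _))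
  have hr3 : r < ‖(a : ℂ) - z0‖ := hr'.trans_le ((min_le_right _ _).trans (min_le_right _ _))
  have hball : ∀ z ∈ closedBall (z0 : ℂ) r, z ∈ closedBall (0 : ℂ) 1 := fun z hz => by
    rw [mem_closedBall, dist_eq_norm] at hz
    rw [mem_closedBall_zero_iff]
    have := norm_add_le (z - z0) (z0 : ℂ)
    rw [sub_add_cancel] at this
    linarith
  have hev : ∀ᶠ k in atTop, Complex.exp (γ k * I) ≠ 1 := by
    have : Tendsto (fun k => Complex.exp (γ k * I)) atTop (𝓝 (Complex.exp (γ' * I))) := by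
      have hcts : Continuous fun t : ℝ => Complex.exp (t * I) := by fun_prop
      exact (hcts.tendsto γ').comp hγ
    exact this.eventually_ne hγ1
  obtain ⟨k, hk1, hk2⟩ := (hev.and (cmap_close hψ (show 0 < c / 4 * r by positivity))).exists
  classical
  let F : ℂ → ℂ := fun z => if hz : z ∈ closedBall (0 : ℂ) 1 then
    (cj (g k) (γ k) ⟨z, hz⟩ : ℂ) - z else 0
  have hFv : ∀ z (hz : z ∈ closedBall (0 : ℂ) 1), F z = (cj (g k) (γ k) ⟨z, hz⟩ : ℂ) - z :=
    fun z hz => by simp only [F, dif_pos hz]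
  have hFc : ContinuousOn F (closedBall (0 : ℂ) 1) := by
    rw [continuousOn_iff_continuous_domRestrict]
    have : (closedBall (0 : ℂ) 1).domRestrict F = fun x : DX => (cj (g k) (γ k) x : ℂ) - x := by
      ext x; exact hFv x x.2
    rw [this]
    exact (continuous_subtype_val.comp (cj (g k) (γ k)).continuous).sub continuous_subtype_val
  refine idx_false F z0 r hr (hFc.mono hball) (fun z hz h0 => ?_) M c hcp hMc (fun z hz => ?_)
  · rw [hFv z (hball z hz), sub_eq_zero] at h0
    have := cj_fix_unique hk1 (hga k) (x := ⟨z, hball z hz⟩) (Subtype.ext h0)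
    rw [mem_closedBall, dist_eq_norm] at hz
    rw [← this] at hr3
    exact absurd hz (not_le.2 hr3)
  · have hzm : z ∈ closedBall (z0 : ℂ) r := by rw [mem_closedBall, dist_eq_norm, hz]
    rw [hFv z (hball z hzm)]
    have e1 := hδ' ⟨z, hball z hzm⟩ (by simpa [hz] using hr1.le)
    have e2 := hk2 ⟨z, hball z hzm⟩
    simp only [hz] at e1
    have e3 := norm_add_le ((cj (g k) (γ k) ⟨z, hball z hzm⟩ : ℂ) - ψ ⟨z, hball z hzm⟩)
      ((ψ ⟨z, hball z hzm⟩ : ℂ) - z - M (z - z0))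
    rw [show ((cj (g k) (γ k) ⟨z, hball z hzm⟩ : ℂ) - ψ ⟨z, hball z hzm⟩) +
      ((ψ ⟨z, hball z hzm⟩ : ℂ) - z - M (z - z0)) =
      (cj (g k) (γ k) ⟨z, hball z hzm⟩ : ℂ) - z - M (z - z0) by ring] at e3
    linarith

lemma disk_nhds {z : ℂ} (hz : ‖z‖ < 1) : Disk ∈ 𝓝 z :=
  Filter.mem_of_superset (isOpen_ball.mem_nhds (mem_ball_zero_iff.2 hz)) ball_subset_closedBall

lemma int_aux (f f' : ℂ → ℂ) (hm : MapsTo f Disk Disk) (hl : ∀ z ∈ Disk, f' (f z) = z)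
    (hf : ContDiffOn ℝ (⊤ : ℕ∞) f Disk) (hf' : ContDiffOn ℝ (⊤ : ℕ∞) f' Disk) {z : ℂ}
    (hz : ‖z‖ < 1) : ‖f z‖ < 1 := by
  have hzD := disk_nhds hz
  have hzm : z ∈ Disk := mem_of_mem_nhds hzD
  have h1 : HasStrictFDerivAt f (fderiv ℝ f z) z :=
    (hf.contDiffAt hzD).hasStrictFDerivAt (by simp)
  have h2 : HasFDerivWithinAt f' (fderivWithin ℝ f' Disk (f z)) Disk (f z) :=
    ((hf' (f z) (hm hzm)).differentiableWithinAt (by simp)).hasFDerivWithinAt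
  have h3 := h2.comp z h1.hasFDerivAt.hasFDerivWithinAt hm
  have h4 : HasFDerivAt (f' ∘ f) _ z := h3.hasFDerivAt hzD
  have h5 : HasFDerivAt (f' ∘ f) (ContinuousLinearMap.id ℝ ℂ) z :=
    (hasFDerivAt_id z).congr_of_eventuallyEq (by
      filter_upwards [hzD] with y hy using hl y hy)
  have h6 := h4.unique h5
  have hinj : Function.Injective (fderiv ℝ f z : ℂ →ₗ[ℝ] ℂ) := fun x y hxy => by
    have hx := DFunLike.congr_fun h6 x
    have hy := DFunLike.congr_fun h6 y
    simp only [ContinuousLinearMap.comp_apply, ContinuousLinearMap.id_apply] at hx hy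
    have : fderiv ℝ f z x = fderiv ℝ f z y := hxy
    rw [← hx, ← hy, this]
  have hsurj := LinearMap.injective_iff_surjective.1 hinj
  have hmap := h1.map_nhds_eq_of_surj (LinearMap.range_eq_top.2 hsurj)
  have hD : Disk ∈ 𝓝 (f z) := by
    rw [← hmap, mem_map]
    exact Filter.mem_of_superset hzD hm
  have := mem_interior_iff_mem_nhds.2 hD
  rw [Disk, interior_closedBall _ one_ne_zero] at this
  exact mem_ball_zero_iff.1 this

lemma SmoothDiskDiffeo.int (f : SmoothDiskDiffeo) {z : ℂ} (hz : ‖z‖ < 1) : ‖f.toFun z‖ < 1 :=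
  int_aux f.toFun f.invFun f.mapsTo f.left_inv f.smooth f.smooth_inv hz

lemma SmoothDiskDiffeo.int_inv (f : SmoothDiskDiffeo) {z : ℂ} (hz : ‖z‖ < 1) : ‖f.invFun z‖ < 1 :=
  int_aux f.invFun f.toFun f.mapsTo_inv f.right_inv f.smooth_inv f.smooth hz

noncomputable def SmoothDiskDiffeo.hom (f : SmoothDiskDiffeo) : DX ≃ₜ DX where
  toFun x := ⟨f.toFun x, f.mapsTo x.2⟩
  invFun x := ⟨f.invFun x, f.mapsTo_inv x.2⟩
  left_inv x := Subtype.ext (f.left_inv x x.2)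
  right_inv x := Subtype.ext (f.right_inv x x.2)
  continuous_toFun := Continuous.subtype_mk
    (f.smooth.continuousOn.comp_continuous continuous_subtype_val (fun x => x.2)) _
  continuous_invFun := Continuous.subtype_mk
    (f.smooth_inv.continuousOn.comp_continuous continuous_subtype_val (fun x => x.2)) _

lemma SmoothDiskDiffeo.hom_coe (f : SmoothDiskDiffeo) (x : DX) : (f.hom x : ℂ) = f.toFun x := rfl
lemma SmoothDiskDiffeo.hom_symm_coe (f : SmoothDiskDiffeo) (x : DX) :
    (f.hom.symm x : ℂ) = f.invFun x := rfl

lemma SmoothDiskDiffeo.bdy (f : SmoothDiskDiffeo) : Bdy f.hom := fun x => by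
  constructor
  · intro h
    by_contra hx
    have := f.int (lt_of_le_of_ne x.norm_le hx)
    rw [f.hom_coe] at h; linarith
  · intro h
    by_contra hx
    have h1 := f.int_inv (lt_of_le_of_ne (f.hom x).norm_le hx)
    rw [f.hom_coe, f.left_inv x x.2] at h1; linarith

lemma iter_deriv (φ : SmoothDiskDiffeo) (harea : AreaPreserving φ) (n : ℕ) {z : ℂ} (hz : ‖z‖ < 1) :
    ‖φ.toFun^[n] z‖ < 1 ∧ ∃ A : ℂ →L[ℝ] ℂ, HasFDerivAt (φ.toFun^[n]) A z ∧ A.det = 1 := by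
  induction n with
  | zero =>
    refine ⟨by simpa using hz, ContinuousLinearMap.id ℝ ℂ, by simpa using hasFDerivAt_id z, ?_⟩
    simp [ContinuousLinearMap.det]
  | succ n ih =>
    obtain ⟨h1, A, hA, hd⟩ := ih
    rw [Function.iterate_succ']
    refine ⟨φ.int h1, (fderiv ℝ φ.toFun (φ.toFun^[n] z)).comp A, ?_, ?_⟩
    · refine HasFDerivAt.comp z ?_ hA
      exact ((φ.smooth.contDiffAt (disk_nhds h1)).differentiableAt (by simp)).hasFDerivAt
    · have h2 := harea _ (mem_of_mem_nhds (disk_nhds h1))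
      rw [fderivWithin_of_mem_nhds (disk_nhds h1)] at h2
      rw [ContinuousLinearMap.det] at *
      change LinearMap.det ((fderiv ℝ φ.toFun (φ.toFun^[n] z) : ℂ →ₗ[ℝ] ℂ) ∘ₗ (A : ℂ →ₗ[ℝ] ℂ)) = 1
      rw [LinearMap.det_comp, h2, hd, one_mul]

lemma mob_den {p z : ℂ} (hp : ‖p‖ < 1) (hz : ‖z‖ ≤ 1) : 1 - (starRingEnd ℂ) p * z ≠ 0 := by
  intro h
  have h1 : (starRingEnd ℂ) p * z = 1 := (sub_eq_zero.1 h).symm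
  have h2 := congrArg norm h1
  rw [norm_mul, RCLike.norm_conj, norm_one] at h2
  nlinarith [norm_nonneg p, norm_nonneg z]

lemma mob_id (p z : ℂ) : ‖1 - (starRingEnd ℂ) p * z‖ ^ 2 - ‖z - p‖ ^ 2 =
    (1 - ‖p‖ ^ 2) * (1 - ‖z‖ ^ 2) := by
  simp only [← Complex.normSq_eq_norm_sq, Complex.normSq_apply, sub_re, sub_im, mul_re, mul_im,
    conj_re, conj_im, one_re, one_im]
  ring

lemma mob_le {p z : ℂ} (hp : ‖p‖ < 1) (hz : ‖z‖ ≤ 1) :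
    ‖(z - p) / (1 - (starRingEnd ℂ) p * z)‖ ≤ 1 := by
  rw [norm_div, div_le_one (norm_pos_iff.2 (mob_den hp hz))]
  have h1 := mob_id p z
  have h2 : 0 ≤ (1 - ‖p‖ ^ 2) * (1 - ‖z‖ ^ 2) :=
    mul_nonneg (by nlinarith [norm_nonneg p]) (by nlinarith [norm_nonneg z])
  exact abs_le_of_sq_le_sq' (by linarith) (norm_nonneg _) |>.2

lemma mob_inv {p z : ℂ} (hp : ‖p‖ < 1) (hz : ‖z‖ ≤ 1) :
    ((z - p) / (1 - (starRingEnd ℂ) p * z) - (-p)) /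
      (1 - (starRingEnd ℂ) (-p) * ((z - p) / (1 - (starRingEnd ℂ) p * z))) = z := by
  have h1 := mob_den hp hz
  have h2 := mob_den hp hp.le
  rw [map_neg]
  generalize (starRingEnd ℂ) p = s at h1 h2
  have h3 : (1 - (-s) * ((z - p) / (1 - s * z))) = (1 - s * p) / (1 - s * z) := by
    rw [eq_div_iff h1, sub_mul, mul_assoc, div_mul_cancel₀ _ h1]; ring
  have h4 : ((z - p) / (1 - s * z) - (-p)) = z * (1 - s * p) / (1 - s * z) := by
    rw [eq_div_iff h1, sub_mul, div_mul_cancel₀ _ h1]; ring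
  rw [h3, h4, div_div_div_cancel_right₀ h1, mul_div_assoc, div_self h2, mul_one]

noncomputable def mob (p : ℂ) (hp : ‖p‖ < 1) : DX ≃ₜ DX where
  toFun x := ⟨(x - p) / (1 - (starRingEnd ℂ) p * x), mem_closedBall_zero_iff.2 (mob_le hp x.norm_le)⟩
  invFun x := ⟨(x - (-p)) / (1 - (starRingEnd ℂ) (-p) * x),
    mem_closedBall_zero_iff.2 (mob_le (by simpa using hp) x.norm_le)⟩
  left_inv x := Subtype.ext (mob_inv hp x.norm_le)
  right_inv x := Subtype.ext (by
    have := mob_inv (p := -p) (by simpa using hp) x.norm_le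
    rw [neg_neg] at this
    exact this)
  continuous_toFun := by
    refine Continuous.subtype_mk (Continuous.div (by fun_prop) (by fun_prop) ?_) _
    exact fun x => mob_den hp x.norm_le
  continuous_invFun := by
    refine Continuous.subtype_mk (Continuous.div (by fun_prop) (by fun_prop) ?_) _
    exact fun x => mob_den (by simpa using hp) x.norm_le

lemma mob_bdy (p : ℂ) (hp : ‖p‖ < 1) : Bdy (mob p hp) := fun x => by
  change ‖((x : ℂ) - p) / (1 - (starRingEnd ℂ) p * x)‖ = 1 ↔ _
  have h0 := norm_pos_iff.2 (mob_den hp x.norm_le)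
  rw [norm_div, div_eq_one_iff_eq h0.ne']
  have h1 := mob_id p x
  constructor
  · intro h
    rw [h, sub_self] at h1
    rcases mul_eq_zero.1 h1.symm with h | h
    · nlinarith [norm_nonneg p]
    · nlinarith [norm_nonneg (x : ℂ)]
  · intro h
    rw [h] at h1
    have h2 : ‖(x : ℂ) - p‖ ^ 2 = ‖1 - (starRingEnd ℂ) p * x‖ ^ 2 := by linarith
    exact (pow_left_inj₀ (norm_nonneg _) (norm_nonneg _) two_ne_zero).1 h2


lemma det_form (A : ℂ →L[ℝ] ℂ) (hd : A.det = 1) (h1 : A 1 = 1) :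
    ∃ b : ℝ, ∀ z : ℂ, A z = z + (b * z.im : ℝ) := by
  have h2 : (A I).im = 1 := by
    rw [ContinuousLinearMap.det, ← LinearMap.det_toMatrix Complex.basisOneI, Matrix.det_fin_two] at hd
    simp [LinearMap.toMatrix_apply, h1] at hd
    exact hd
  refine ⟨(A I).re, fun z => ?_⟩
  have h3 : A z = z.re • A 1 + z.im • A I := by
    rw [← map_smul, ← map_smul, ← map_add]; congr 1
    apply Complex.ext <;> simp
  rw [h3, h1]
  apply Complex.ext <;> simp [h2]; ring

noncomputable def conjC (N : DX ≃ₜ DX) (f : C(DX, DX)) : C(DX, DX) :=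
  (⟨N, N.continuous⟩ : C(DX, DX)).comp (f.comp (⟨N.symm, N.symm.continuous⟩ : C(DX, DX)))

lemma conjC_apply (N : DX ≃ₜ DX) (f : C(DX, DX)) (x : DX) : conjC N f x = N (f (N.symm x)) := rfl

lemma conjC_cj (N g : DX ≃ₜ DX) (γ : ℝ) : conjC N (cj g γ) = cj (N.symm.trans g) γ := rfl

lemma conjC_cont (N : DX ≃ₜ DX) : Continuous (conjC N) :=
  (ContinuousMap.continuous_postcomp _).comp (ContinuousMap.continuous_precomp _)

lemma small_of_deriv {f : ℂ → ℂ} {A : ℂ →L[ℝ] ℂ} {p : ℂ} (h : HasFDerivAt f A p) {ε : ℝ}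
    (hε : 0 < ε) : ∃ δ > 0, ∀ z, ‖z - p‖ ≤ δ → ‖f z - f p - A (z - p)‖ ≤ ε * ‖z - p‖ := by
  obtain ⟨δ, hδ, h1⟩ := Metric.eventually_nhds_iff_ball.1 (h.isLittleO.def hε)
  refine ⟨δ / 2, by positivity, fun z hz => h1 z ?_⟩
  rw [mem_ball, dist_eq_norm]; linarith

lemma mob_PP (ψ : C(DX, DX)) (f : ℂ → ℂ) (hf : ∀ x : DX, (ψ x : ℂ) = f x) (p : ℂ) (hp : ‖p‖ < 1)
    (hfp : f p = p) (A : ℂ →L[ℝ] ℂ) (hA : HasFDerivAt f A p) (hd : A.det = 1) (v : ℂ) (hv : v ≠ 0)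
    (hAv : A v = v) :
    ∃ b, PP (conjC ((mob p hp).trans (rotX (-arg v))) ψ) b := by
  set s := (starRingEnd ℂ) p with hs
  set e := Complex.exp ((-arg v : ℝ) * I) with he
  set e' := Complex.exp (-((-arg v : ℝ) * I)) with he'
  have hee : e * e' = 1 := by rw [he, he', ← Complex.exp_add]; simp
  have hden : 1 - s * p ≠ 0 := mob_den hp hp.le
  have hdenr : 1 - s * p = ((1 - ‖p‖ ^ 2 : ℝ) : ℂ) := by
    rw [hs, mul_comm, Complex.mul_conj, Complex.normSq_eq_norm_sq]; push_cast; ring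
  have hve : v = (‖v‖ : ℂ) * e' := by
    rw [he']
    simp
  let m : ℂ → ℂ := fun z => e * ((z - p) / (1 - s * z))
  let m' : ℂ → ℂ := fun w => (e' * w + p) / (1 + s * (e' * w))
  have hm : HasDerivAt m (e / (1 - s * p)) p := by
    have h1 : HasDerivAt (fun z : ℂ => (z - p)) 1 p := (hasDerivAt_id p).sub_const p
    have h2 : HasDerivAt (fun z : ℂ => (1 - s * z)) (-(s * 1)) p :=
      ((hasDerivAt_id p).const_mul s).const_sub 1
    have := (h1.div h2 hden).const_mul e
    refine HasDerivAt.congr_deriv this ?_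
    rw [sub_self, zero_mul, sub_zero, one_mul]
    field_simp
  have hm' : HasDerivAt m' (e' * (1 - s * p)) 0 := by
    have h1 : HasDerivAt (fun z : ℂ => (e' * z + p)) (e' * 1) 0 :=
      ((hasDerivAt_id 0).const_mul e').add_const p
    have h2 : HasDerivAt (fun z : ℂ => (1 + s * (e' * z))) (s * (e' * 1)) 0 :=
      (((hasDerivAt_id (0 : ℂ)).const_mul e').const_mul s).const_add 1
    have := h1.div h2 (by simp)
    refine HasDerivAt.congr_deriv this ?_
    simp only [mul_zero, zero_add, add_zero, mul_one, one_pow, div_one]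
    ring
  have hm0 : m' 0 = p := by simp [m']
  have hmp : m p = 0 := by simp [m]
  set B : ℂ →L[ℝ] ℂ := (ContinuousLinearMap.toSpanSingleton ℂ (e / (1 - s * p))).restrictScalars ℝ
    with hB
  set B' : ℂ →L[ℝ] ℂ := (ContinuousLinearMap.toSpanSingleton ℂ (e' * (1 - s * p))).restrictScalars ℝ
    with hB'
  have hBa : ∀ z, B z = z * (e / (1 - s * p)) := fun z => by simp [hB]
  have hBa' : ∀ z, B' z = z * (e' * (1 - s * p)) := fun z => by simp [hB']
  have hmF : HasFDerivAt m B p := hm.hasFDerivAt.restrictScalars ℝ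
  have hmF' : HasFDerivAt m' B' 0 := hm'.hasFDerivAt.restrictScalars ℝ
  have hF : HasFDerivAt (m ∘ f ∘ m') (B.comp (A.comp B')) 0 := by
    have h1 : HasFDerivAt (f ∘ m') (A.comp B') 0 := HasFDerivAt.comp 0 (by rwa [hm0]) hmF'
    refine HasFDerivAt.comp 0 ?_ h1
    simpa [hm0, hfp] using hmF
  have hBB : B.comp B' = ContinuousLinearMap.id ℝ ℂ := by
    ext z
    simp only [ContinuousLinearMap.comp_apply, hBa, hBa', ContinuousLinearMap.id_apply]
    field_simp
    linear_combination z * hee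
  have hdet : (B.comp (A.comp B')).det = 1 := by
    have h1 : LinearMap.det (B : ℂ →ₗ[ℝ] ℂ) * LinearMap.det (B' : ℂ →ₗ[ℝ] ℂ) = 1 := by
      rw [← LinearMap.det_comp]
      change (B.comp B').det = 1
      rw [hBB]; simp [ContinuousLinearMap.det]
    change LinearMap.det ((B : ℂ →ₗ[ℝ] ℂ) ∘ₗ ((A : ℂ →ₗ[ℝ] ℂ) ∘ₗ (B' : ℂ →ₗ[ℝ] ℂ))) = 1
    rw [ContinuousLinearMap.det] at hd
    rw [LinearMap.det_comp, LinearMap.det_comp, hd, one_mul, h1]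
  have hone : (B.comp (A.comp B')) 1 = 1 := by
    have hvn : (‖v‖ : ℂ) ≠ 0 := by exact_mod_cast (norm_pos_iff.2 hv).ne'
    have h1 : B' 1 = ((1 - ‖p‖ ^ 2) / ‖v‖ : ℝ) • v := by
      rw [hBa', hdenr, Complex.real_smul]
      have h0 : (((1 - ‖p‖ ^ 2) / ‖v‖ : ℝ) : ℂ) * v = (((1 - ‖p‖ ^ 2) / ‖v‖ : ℝ) : ℂ) * (‖v‖ * e') := by
        rw [← hve]
      rw [h0]
      push_cast
      field_simp
    have h2 : A (B' 1) = B' 1 := by rw [h1, map_smul, hAv]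
    have h3 := DFunLike.congr_fun hBB 1
    simp only [ContinuousLinearMap.comp_apply, ContinuousLinearMap.id_apply] at h3 ⊢
    rw [h2, h3]
  obtain ⟨b, hb⟩ := det_form _ hdet hone
  refine ⟨b, fun ε hε => ?_⟩
  obtain ⟨δ, hδ, h⟩ := small_of_deriv hF hε
  refine ⟨δ, hδ, fun z hz => ?_⟩
  have h1 := h z (by simpa using hz)
  rw [sub_zero, hb] at h1
  have h2 : (m ∘ f ∘ m') 0 = 0 := by simp [hm0, hfp, hmp]
  have h3 : (conjC ((mob p hp).trans (rotX (-arg v))) ψ z : ℂ) = (m ∘ f ∘ m') z := by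
    rw [conjC_apply]
    change e * (((ψ _ : ℂ) - p) / (1 - s * (ψ _ : ℂ))) = e * ((f _ - p) / (1 - s * f _))
    have h4 : ((((mob p hp).trans (rotX (-arg v))).symm z : DX) : ℂ) = m' z := by
      change (e' * z - (-p)) / (1 - (starRingEnd ℂ) (-p) * (e' * z)) = (e' * z + p) / (1 + s * (e' * z))
      rw [map_neg, ← hs]; ring_nf
    rw [hf, h4]
  rw [h2, sub_zero] at h1
  rw [h3]; exact h1

/-- If a smooth area-preserving diffeomorphism `φ` of the closed disk is a `C⁰`-limit of
maps `φ_k = g_k⁻¹ ∘ R_{2π p_k/q_k} ∘ g_k`, with `g_k` orientation-preserving smooth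
diffeomorphisms fixing the origin and `p_k/q_k` converging to an irrational number,
then `φ` has precisely one periodic point, namely the origin; in particular `φ` is an
irrational pseudo-rotation. -/
theorem limit_of_periodic_is_pseudorotation (φ : SmoothDiskDiffeo)
    (harea : AreaPreserving φ)
    (g : ℕ → SmoothDiskDiffeo) (r : ℕ → ℚ) (α : ℝ)
    (hirr : Irrational α)
    (hconv_r : Tendsto (fun k => (r k : ℝ)) atTop (nhds α))
    (hg0 : ∀ k, (g k).toFun 0 = 0)
    (hgor : ∀ k, OrientationPreserving (g k))
    (hconv : TendstoUniformlyOn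
      (fun k z => (g k).invFun
        (Complex.exp ((2 * Real.pi * (r k : ℝ)) * Complex.I) * (g k).toFun z))
      φ.toFun atTop Disk) :
    φ.toFun 0 = 0 ∧
      ∀ z ∈ Disk, (∃ n : ℕ, 1 ≤ n ∧ φ.toFun^[n] z = z) → z = 0 := by
  have hD0 : (0 : ℂ) ∈ Disk := by simp [Disk]
  have hpi := Real.pi_pos
  have hi0 : ∀ k, (g k).invFun 0 = 0 := fun k => by
    have := (g k).left_inv 0 hD0
    rwa [hg0 k] at this
  have hφ0 : φ.toFun 0 = 0 := by
    have h1 := hconv.tendsto_at hD0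
    simp only [hg0, mul_zero, hi0] at h1
    exact tendsto_nhds_unique h1 tendsto_const_nhds
  refine ⟨hφ0, ?_⟩
  rintro z hz ⟨n, hn, hper⟩
  by_contra hz0
  let φC : C(DX, DX) := ⟨φ.hom, φ.hom.continuous⟩
  have hT : Tendsto (fun k => cj (g k).hom (2 * Real.pi * r k)) atTop (𝓝 φC) := by
    rw [ContinuousMap.tendsto_iff_tendstoUniformly, Metric.tendstoUniformly_iff]
    intro ε hε
    filter_upwards [Metric.tendstoUniformlyOn_iff.1 hconv ε hε] with k hk x
    have := hk x x.2
    rw [Subtype.dist_eq]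
    have e : (cj (g k).hom (2 * Real.pi * r k) x : ℂ) = (g k).invFun
        (Complex.exp ((2 * Real.pi * (r k : ℝ)) * Complex.I) * (g k).toFun x) := by
      rw [cj_apply, SmoothDiskDiffeo.hom_symm_coe, rotX_coe, SmoothDiskDiffeo.hom_coe]
      push_cast
      rfl
    rw [e]
    exact this
  set ψ := itC φC n with hψdef
  have hψT : Tendsto (fun k => cj (g k).hom (n * (2 * Real.pi * r k))) atTop (𝓝 ψ) := by
    have := itC_tendsto hT n
    simpa only [itC_cj] using this
  have hγ : Tendsto (fun k => (n : ℝ) * (2 * Real.pi * r k)) atTop (𝓝 (n * (2 * Real.pi * α))) :=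
    (hconv_r.const_mul _).const_mul _
  have hγ1 : ∀ Q : ℕ, 1 ≤ Q → Complex.exp ((Q * (n * (2 * Real.pi * α)) : ℝ) * I) ≠ 1 := by
    intro Q hQ h
    obtain ⟨m, hm⟩ := Complex.exp_eq_one_iff.1 h
    have h1 : ((Q * n * α : ℝ) : ℂ) * (2 * Real.pi * I) = (m : ℝ) * (2 * Real.pi * I) := by
      push_cast at hm ⊢; linear_combination hm
    have h2 : (Q * n * α : ℝ) = m := by
      exact_mod_cast mul_right_cancel₀ Complex.two_pi_I_ne_zero h1
    have h3 : Irrational (((Q * n : ℕ) : ℝ) * α) :=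
      hirr.natCast_mul (Nat.mul_pos hQ hn).ne'
    apply h3
    exact ⟨m, by push_cast; linarith⟩
  have hγ1' : Complex.exp ((n * (2 * Real.pi * α) : ℝ) * I) ≠ 1 := by
    have := hγ1 1 le_rfl
    simpa using this
  have hbdy : ∀ k, Bdy (g k).hom := fun k => (g k).bdy
  let z0 : DX := ⟨z, hz⟩
  let o : DX := ⟨0, hD0⟩
  have hψf : ∀ x : DX, (ψ x : ℂ) = φ.toFun^[n] x := fun x => by
    rw [hψdef, itC_apply]
    have : Function.Semiconj (Subtype.val : DX → ℂ) φC φ.toFun := fun x => rfl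
    exact this.iterate_right n x
  have hψz : ψ z0 = z0 := Subtype.ext ((hψf z0).trans hper)
  rcases eq_or_lt_of_le z0.norm_le with hb | hzlt
  · exact no_bdy_fix hbdy hγ hγ1' hψT z0 hb hψz
  obtain ⟨-, A, hA, hdet⟩ := iter_deriv φ harea n hzlt
  have hga : ∀ k, ((g k).hom o : ℂ) = 0 := fun k => hg0 k
  by_cases hv : ∃ v, v ≠ 0 ∧ A v = v
  · obtain ⟨v, hv0, hAv⟩ := hv
    obtain ⟨b, hb⟩ := mob_PP ψ (φ.toFun^[n]) hψf z hzlt hper A hA hdet v hv0 hAv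
    set N := (mob z hzlt).trans (rotX (-arg v)) with hN
    have hNz : N z0 = o := Subtype.ext (by
      change Complex.exp _ * ((z - z) / (1 - (starRingEnd ℂ) z * z)) = 0
      simp)
    have hNo : N.symm o = z0 := by rw [← hNz, N.symm_apply_apply]
    have hNb : Bdy N := fun x => by
      rw [hN, Homeomorph.trans_apply, bdy_rot, mob_bdy]
    have hψinj : Function.Injective ψ := by
      have : (ψ : DX → DX) = (φ.hom)^[n] := by ext1 x; rw [hψdef, itC_apply]; rfl
      rw [this]
      exact φ.hom.injective.iterate n
    clear_value N
    have hT2 : Tendsto (fun k => conjC N (cj (g k).hom (n * (2 * Real.pi * r k)))) atTop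
        (𝓝 (conjC N ψ)) := ((conjC_cont N).tendsto ψ).comp hψT
    simp only [conjC_cj] at hT2
    refine caseD (g := fun k => N.symm.trans (g k).hom) (fun k x => ?_) hγ hγ1
      (ψ := conjC N ψ) ?_ o rfl (fun k h => ?_) (N o) (fun k => ?_) b hb (fun x hx => ?_)
    · rw [Homeomorph.trans_apply, hbdy, hNb.symm]
    · exact hT2
    · rw [Homeomorph.trans_apply, hNo] at h
      have : z0 = o := (g k).hom.injective (Subtype.ext (h.trans (hga k).symm))
      exact hz0 (congrArg Subtype.val this)
    · rw [Homeomorph.trans_apply, N.symm_apply_apply]; exact hga k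
    · have h1 : conjC N ψ x = conjC N ψ o := by
        rw [conjC_apply N ψ o, hNo, hψz, hNz]; exact Subtype.ext hx
      rw [conjC_apply, conjC_apply] at h1
      have : x = o := N.symm.injective (hψinj (N.injective h1))
      rw [this]
  · push Not at hv
    refine caseC hγ hγ1' hψT z0 hzlt o (fun h => hz0 (congrArg Subtype.val h).symm) hga
      (A - ContinuousLinearMap.id ℝ ℂ) (fun v h => ?_) (fun ε hε => ?_)
    · by_contra hv0
      refine hv v hv0 ?_
      simpa [sub_eq_zero] using h
    · obtain ⟨δ, hδ, h⟩ := small_of_deriv hA hε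
      refine ⟨δ, hδ, fun x hx => ?_⟩
      have h1 := h x hx
      rw [hψf]
      have e : φ.toFun^[n] x - x - (A - ContinuousLinearMap.id ℝ ℂ) (x - z0) =
          φ.toFun^[n] x - φ.toFun^[n] z0 - A (x - z0) := by
        rw [show φ.toFun^[n] z0 = z0 from hper]
        simp only [ContinuousLinearMap.sub_apply, ContinuousLinearMap.id_apply]
        ring
      rw [e]; exact h1
end

section
/- Fix n ≥ 1 and a Hamiltonian H as in the context. Let a, τ : [0,∞)×ℝ → ℝ and z : [0,∞)×ℝ → D be C^∞ maps satisfying: (periodicity) a(s,t+n) = a(s,t), τ(s,t+n) = τ(s,t)+n, z(s,t+n) = z(s,t); (Cauchy–Riemann part) ∂_s a = ∂_t τ and ∂_t a = −∂_s τ; (disk part) (∂_t a)·X_H(τ,z) + ∂_s z + i·(∂_t z − (∂_t τ)·X_H(τ,z)) = 0; (boundary) a(0,t) = c and |z(0,t)| = 1 for all t, for some constant c ∈ ℝ. If the λ-energy E_λ := sup_ψ ∫_0^∞ ∫_0^n ψ(a(s,t))·(∂_s a·∂_t τ − ∂_t a·∂_s τ)(s,t) dt ds is finite, where the supremum is over all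 C^∞ functions ψ : ℝ → [0,∞) with ∫_ℝ ψ = 1, then the first partial derivatives of a (equivalently, of τ) are bounded on [0,∞)×ℝ. -/
open Complex Set MeasureTheory ENNReal

/-- The Hamiltonian vector field `X_H(t,z) = (−∂_y H, ∂_x H)`, written in complex
notation as `i · (∂_x H + i ∂_y H)`. -/
noncomputable def XH (H : ℝ → ℂ → ℝ) (t : ℝ) (w : ℂ) : ℂ :=
  Complex.I * ((fderiv ℝ (H t) w 1 : ℝ) + (fderiv ℝ (H t) w Complex.I : ℝ) * Complex.I)

/-- Admissible Hamiltonians: smooth, 1-periodic in time, constant on the boundary circle. -/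
structure IsAdmissible (H : ℝ → ℂ → ℝ) : Prop where
  smooth : ContDiff ℝ (⊤ : ℕ∞) (fun p : ℝ × ℂ => H p.1 p.2)
  periodic : ∀ (t : ℝ) (z : ℂ), H (t + 1) z = H t z
  bdry_const : ∀ (t : ℝ), ∀ z w : ℂ, ‖z‖ = 1 → ‖w‖ = 1 → H t z = H t w

/-- The half cylinder `[0,∞) × ℝ`. -/
def HalfPlane : Set (ℝ × ℝ) := Set.Ici (0:ℝ) ×ˢ Set.univ

/-- Partial derivative in the `s`-direction, taken within a set `A`. -/
noncomputable def pds {E : Type*} [NormedAddCommGroup E] [NormedSpace ℝ E]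
    (A : Set (ℝ × ℝ)) (f : ℝ × ℝ → E) (p : ℝ × ℝ) : E :=
  fderivWithin ℝ f A p (1, 0)

/-- Partial derivative in the `t`-direction, taken within a set `A`. -/
noncomputable def pdt {E : Type*} [NormedAddCommGroup E] [NormedSpace ℝ E]
    (A : Set (ℝ × ℝ)) (f : ℝ × ℝ → E) (p : ℝ × ℝ) : E :=
  fderivWithin ℝ f A p (0, 1)

/-- The `λ`-energy of a half cylinder of period `n`:
`E_λ = sup_ψ ∫_0^∞ ∫_0^n ψ(a) (∂_s a ∂_t τ − ∂_t a ∂_s τ) dt ds`, the supremum over all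
smooth `ψ : ℝ → [0,∞)` with `∫ ψ = 1`. -/
noncomputable def lambdaEnergy (n : ℕ) (a τ : ℝ × ℝ → ℝ) : ℝ≥0∞ :=
  ⨆ ψ ∈ {ψ : ℝ → ℝ | ContDiff ℝ (⊤ : ℕ∞) ψ ∧ (∀ x, 0 ≤ ψ x) ∧ ∫ x : ℝ, ψ x = 1},
    ∫⁻ p in Set.Ici (0:ℝ) ×ˢ Set.Ioc (0:ℝ) (n:ℝ),
      ENNReal.ofReal (ψ (a p) *
        (pds HalfPlane a p * pdt HalfPlane τ p - pdt HalfPlane a p * pds HalfPlane τ p))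

/-- The complex-valued map `a + iτ`. -/
noncomputable def FF (a τ : ℝ × ℝ → ℝ) (w : ℂ) : ℂ :=
  (a (w.re, w.im) : ℂ) + Complex.I * (τ (w.re, w.im) : ℂ)

/-- Hofer-type rescaling lemma for holomorphic functions. -/
lemma hofer_aux (f : ℂ → ℂ) (hf : DifferentiableOn ℂ f {w | 0 < w.re}) (w₀ : ℂ)
    (hw₀ : 1 ≤ w₀.re) (hne : f w₀ ≠ 0) :
    ∃ (w₁ : ℂ) (ρ K : ℝ), 0 < ρ ∧ ρ ≤ 1 / 2 ∧ 0 < K ∧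
      Metric.closedBall w₁ ρ ⊆ {w | 0 < w.re} ∧ ‖f w₀‖ ≤ 64 * (K * ρ) ∧
      ∀ w ∈ Metric.closedBall w₁ ρ, K / 2 ≤ ‖f w‖ ∧ ‖f w‖ ≤ 2 * K := by
  have hre : ∀ w, dist w w₀ ≤ 1 / 2 → 0 < w.re := by
    intro w hw
    rw [Complex.dist_eq] at hw
    have h1 := Complex.abs_re_le_norm (w - w₀)
    rw [Complex.sub_re] at h1
    have := (abs_le.1 (h1.trans hw)).1
    linarith
  have hcont : ContinuousOn (fun w => ‖f w‖ * (1 / 2 - dist w w₀))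
      (Metric.closedBall w₀ (1 / 2)) := by
    apply ContinuousOn.mul
    · exact (hf.continuousOn.mono fun w hw => hre w hw).norm
    · fun_prop
  obtain ⟨w₁, hw₁, hmax⟩ := (isCompact_closedBall w₀ (1 / 2 : ℝ)).exists_isMaxOn
    ⟨w₀, by simp⟩ hcont
  have hmax' : ∀ w, dist w w₀ ≤ 1 / 2 →
      ‖f w‖ * (1 / 2 - dist w w₀) ≤ ‖f w₁‖ * (1 / 2 - dist w₁ w₀) := fun w hw => hmax hw
  have h0 := hmax' w₀ (by simp)
  rw [dist_self, sub_zero] at h0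
  have hpos : 0 < ‖f w₀‖ := norm_pos_iff.2 hne
  have hw₁' : dist w₁ w₀ ≤ 1 / 2 := hw₁
  obtain ⟨d, hd⟩ : ∃ d, d = (1 / 2 - dist w₁ w₀) / 2 := ⟨_, rfl⟩
  obtain ⟨K, hK⟩ : ∃ K, K = ‖f w₁‖ := ⟨_, rfl⟩
  have hd2 : 1 / 2 - dist w₁ w₀ = 2 * d := by rw [hd]; ring
  rw [hd2, ← hK] at h0 hmax'
  have hKnn : 0 ≤ K := by rw [hK]; positivity
  have hdn : 0 ≤ d := by rw [hd]; linarith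
  have hKpos : 0 < K := by
    rcases hKnn.eq_or_lt with h | h
    · rw [← h] at h0; linarith
    · exact h
  have hdpos : 0 < d := by
    rcases hdn.eq_or_lt with h | h
    · rw [← h] at h0; linarith
    · exact h
  have hdle : d ≤ 1 / 4 := by
    have : 0 ≤ dist w₁ w₀ := dist_nonneg
    rw [hd]; linarith
  have htri : ∀ w, dist w w₁ < d → dist w w₀ ≤ 1 / 2 - d := by
    intro w hw
    have := dist_triangle w w₁ w₀
    linarith
  have hup : ∀ w, dist w w₁ < d → ‖f w‖ ≤ 2 * K := by
    intro w hw
    have h1 := htri w hw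
    have h2 := hmax' w (by linarith)
    have h3 : ‖f w‖ * d ≤ ‖f w‖ * (1 / 2 - dist w w₀) := by
      apply mul_le_mul_of_nonneg_left _ (norm_nonneg _)
      linarith
    have h4 : ‖f w‖ * d ≤ (2 * K) * d := by linarith
    exact le_of_mul_le_mul_right h4 hdpos
  have hlow : ∀ w, dist w w₁ ≤ d / 16 → dist (f w) (f w₁) ≤ K / 4 := by
    intro w hw
    have h1 : dist (f w) (f w₁) ≤ 4 * K / d * dist w w₁ := by
      apply Complex.dist_le_div_mul_dist_of_mapsTo_ball (R₁ := d)
      · exact hf.mono fun x hx => hre x (by have := htri x hx; linarith)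
      · intro x hx
        have := hup x hx
        rw [Metric.mem_closedBall, dist_eq_norm]
        have h5 := norm_sub_le (f x) (f w₁)
        rw [← hK] at h5
        linarith
      · rw [Metric.mem_ball]; linarith
    calc dist (f w) (f w₁) ≤ 4 * K / d * dist w w₁ := h1
      _ ≤ 4 * K / d * (d / 16) := by gcongr
      _ = K / 4 := by field_simp; norm_num
  refine ⟨w₁, d / 16, K, by positivity, by linarith, hKpos, ?_, by linarith, ?_⟩
  · intro w hw
    have hw' : dist w w₁ ≤ d / 16 := hw
    apply hre
    have := htri w (by linarith)
    linarith
  · intro w hw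
    have hw' : dist w w₁ ≤ d / 16 := hw
    refine ⟨?_, hup w (by linarith)⟩
    have h1 := hlow w hw'
    rw [dist_eq_norm, norm_sub_rev] at h1
    have h2 := norm_sub_norm_le (f w₁) (f w)
    rw [← hK] at h2
    linarith

lemma uniqueDiffOn_HP : UniqueDiffOn ℝ HalfPlane :=
  (uniqueDiffOn_Ici 0).prod uniqueDiffOn_univ

lemma HP_nhds (w : ℂ) (hw : 0 < w.re) : HalfPlane ∈ nhds ((w.re, w.im) : ℝ × ℝ) :=
  prod_mem_nhds (Ici_mem_nhds hw) Filter.univ_mem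

lemma FF_hasDerivAt (a τ : ℝ × ℝ → ℝ)
    (ha : ContDiffOn ℝ (⊤ : ℕ∞) a HalfPlane)
    (hτ : ContDiffOn ℝ (⊤ : ℕ∞) τ HalfPlane)
    (hCR₁ : ∀ p ∈ HalfPlane, pds HalfPlane a p = pdt HalfPlane τ p)
    (hCR₂ : ∀ p ∈ HalfPlane, pdt HalfPlane a p = -pds HalfPlane τ p)
    (w : ℂ) (hw : 0 < w.re) :
    HasDerivAt (FF a τ) (((pds HalfPlane a (w.re, w.im) : ℝ) : ℂ) +
      Complex.I * ((pds HalfPlane τ (w.re, w.im) : ℝ) : ℂ)) w := by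
  have hmem : ((w.re, w.im) : ℝ × ℝ) ∈ HalfPlane := ⟨hw.le, trivial⟩
  have h1 := hCR₁ _ hmem
  have h2 := hCR₂ _ hmem
  have hn := HP_nhds w hw
  have hA := ((ha.differentiableOn (by simp)) _ hmem).hasFDerivWithinAt.hasFDerivAt hn
  have hT := ((hτ.differentiableOn (by simp)) _ hmem).hasFDerivWithinAt.hasFDerivAt hn
  have hpr : HasFDerivAt (fun w : ℂ => ((w.re, w.im) : ℝ × ℝ))
      (Complex.reCLM.prod Complex.imCLM) w :=
    (Complex.reCLM.hasFDerivAt).prodMk (Complex.imCLM.hasFDerivAt)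
  have hA' := Complex.ofRealCLM.hasFDerivAt.comp w (hA.comp w hpr)
  have hT' := Complex.ofRealCLM.hasFDerivAt.comp w (hT.comp w hpr)
  have hF := hA'.add (hT'.const_mul Complex.I)
  rw [hasDerivAt_iff_hasFDerivAt]
  refine hasFDerivAt_of_restrictScalars ℝ hF ?_
  ext v
  have hv : ((v.re, v.im) : ℝ × ℝ) = v.re • (1, 0) + v.im • (0, 1) := by simp
  unfold pds pdt at h1 h2
  simp [pds, hv, -Prod.smul_mk, -Prod.mk_add_mk, ← h1, h2]
  apply Complex.ext <;> simp <;> ring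

open scoped Pointwise in
lemma pds_shift (f : ℝ × ℝ → ℝ) (T C : ℝ)
    (h : ∀ p ∈ HalfPlane, f (p + (0, T)) = f p + C) (p : ℝ × ℝ) (hp : p ∈ HalfPlane) :
    pds HalfPlane f (p + (0, T)) = pds HalfPlane f p := by
  have hs : ((0, T) : ℝ × ℝ) +ᵥ HalfPlane = HalfPlane := by
    ext ⟨x, y⟩
    rw [Set.mem_vadd_set_iff_neg_vadd_mem]
    simp [HalfPlane]
  have h1 := fderivWithin_comp_add_right (𝕜 := ℝ) (f := f) (s := HalfPlane) (x := p)
    ((0, T) : ℝ × ℝ)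
  rw [hs] at h1
  unfold pds
  rw [← h1, fderivWithin_congr (f := fun x => f x + C) h (h p hp), fderivWithin_add_const]

/-- Energy estimate on a small ball centred in the fundamental domain. -/
lemma energy_aux (n : ℕ) (hn : 1 ≤ n) (a τ : ℝ × ℝ → ℝ)
    (ha : ContDiffOn ℝ (⊤ : ℕ∞) a HalfPlane)
    (hτ : ContDiffOn ℝ (⊤ : ℕ∞) τ HalfPlane)
    (hCR₁ : ∀ p ∈ HalfPlane, pds HalfPlane a p = pdt HalfPlane τ p)
    (hCR₂ : ∀ p ∈ HalfPlane, pdt HalfPlane a p = -pds HalfPlane τ p)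
    (hE : lambdaEnergy n a τ < ⊤) (φ : ContDiffBump (0 : ℝ)) (hφ : φ.rIn = 1)
    (w₁ : ℂ) (ρ K : ℝ) (hρ : 0 < ρ) (hρ' : ρ ≤ 1 / 2) (hK : 0 < K)
    (hsub : Metric.closedBall w₁ ρ ⊆ {w | 0 < w.re})
    (him : w₁.im ∈ Ioc (0 : ℝ) n)
    (hb : ∀ w ∈ Metric.closedBall w₁ ρ, K / 2 ≤ ‖deriv (FF a τ) w‖ ∧
      ‖deriv (FF a τ) w‖ ≤ 2 * K) :
    K * ρ ≤ 32 * (∫ x, φ x) * (lambdaEnergy n a τ).toReal := by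
  have hC0 : 0 < ∫ x, φ x := φ.integral_pos
  set C0 := ∫ x, φ x with hC0def
  set L := 2 * K * ρ with hL
  have hLpos : 0 < L := by positivity
  have hn1 : (1 : ℝ) ≤ n := by exact_mod_cast hn
  set ψ : ℝ → ℝ := fun x => (L * C0)⁻¹ * φ ((x - a (w₁.re, w₁.im)) / L) with hψ
  have hψmem : ψ ∈ {ψ : ℝ → ℝ | ContDiff ℝ (⊤ : ℕ∞) ψ ∧ (∀ x, 0 ≤ ψ x) ∧ ∫ x : ℝ, ψ x = 1} := by
    refine ⟨?_, ?_, ?_⟩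
    · apply ContDiff.mul contDiff_const
      exact φ.contDiff.comp (by fun_prop)
    · intro x
      exact mul_nonneg (by positivity) φ.nonneg
    · rw [hψ, integral_const_mul,
        integral_sub_right_eq_self (fun x => φ (x / L)) (a (w₁.re, w₁.im)),
        Measure.integral_comp_div (fun x => φ x) L, abs_of_pos hLpos, smul_eq_mul, ← hC0def]
      field_simp
  have hle : (∫⁻ p in Set.Ici (0:ℝ) ×ˢ Set.Ioc (0:ℝ) (n:ℝ),
      ENNReal.ofReal (ψ (a p) *
        (pds HalfPlane a p * pdt HalfPlane τ p - pdt HalfPlane a p * pds HalfPlane τ p)))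
      ≤ lambdaEnergy n a τ := by
    unfold lambdaEnergy
    exact le_iSup₂_of_le ψ hψmem le_rfl
  have hdiff := FF_hasDerivAt a τ ha hτ hCR₁ hCR₂
  -- pointwise bound
  have hpt : ∀ p : ℝ × ℝ, |p.1 - w₁.re| ≤ ρ / 2 → |p.2 - w₁.im| ≤ ρ / 2 →
      0 < p.1 ∧ (L * C0)⁻¹ * (K / 2) ^ 2 ≤ ψ (a p) *
        (pds HalfPlane a p * pdt HalfPlane τ p - pdt HalfPlane a p * pds HalfPlane τ p) := by
    rintro ⟨x, y⟩ hx hy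
    simp only at hx hy
    set w : ℂ := ⟨x, y⟩ with hw
    have hwb : w ∈ Metric.closedBall w₁ ρ := by
      rw [Metric.mem_closedBall, Complex.dist_eq]
      refine (Complex.norm_le_abs_re_add_abs_im _).trans ?_
      rw [Complex.sub_re, Complex.sub_im]
      simp only [hw]
      linarith
    have hwre : 0 < w.re := hsub hwb
    refine ⟨hwre, ?_⟩
    have hmem : ((x, y) : ℝ × ℝ) ∈ HalfPlane := ⟨hwre.le, trivial⟩
    have hmv : ‖FF a τ w - FF a τ w₁‖ ≤ 2 * K * ‖w - w₁‖ := by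
      apply Convex.norm_image_sub_le_of_norm_deriv_le (𝕜 := ℂ) (s := Metric.closedBall w₁ ρ)
      · intro v hv
        exact (hdiff v (hsub hv)).differentiableAt
      · exact fun v hv => (hb v hv).2
      · exact convex_closedBall _ _
      · simpa using hρ.le
      · exact hwb
    have hdist : ‖w - w₁‖ ≤ ρ := by rwa [← dist_eq_norm]
    have hre : |a (x, y) - a (w₁.re, w₁.im)| ≤ L := by
      have h1 := Complex.abs_re_le_norm (FF a τ w - FF a τ w₁)
      have h2 : (FF a τ w - FF a τ w₁).re = a (x, y) - a (w₁.re, w₁.im) := by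
        simp [FF, hw]
      rw [h2] at h1
      calc _ ≤ _ := h1
        _ ≤ _ := hmv
        _ ≤ 2 * K * ρ := by gcongr
    have hψv : ψ (a (x, y)) = (L * C0)⁻¹ := by
      simp only [hψ]
      rw [φ.one_of_mem_closedBall, mul_one]
      rw [hφ, mem_closedBall_zero_iff, Real.norm_eq_abs, abs_div, abs_of_pos hLpos]
      exact div_le_one_of_le₀ hre hLpos.le
    have hlow := (hb w hwb).1
    rw [(hdiff w hwre).deriv] at hlow
    have hnorm : ‖(((pds HalfPlane a (w.re, w.im) : ℝ) : ℂ) +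
        Complex.I * ((pds HalfPlane τ (w.re, w.im) : ℝ) : ℂ))‖ ^ 2 =
        pds HalfPlane a (x, y) * pdt HalfPlane τ (x, y) -
          pdt HalfPlane a (x, y) * pds HalfPlane τ (x, y) := by
      rw [← Complex.normSq_eq_norm_sq, Complex.normSq_apply, ← hCR₁ _ hmem, hCR₂ _ hmem]
      simp [hw]
    rw [hψv, ← hnorm]
    gcongr
  -- the small square
  obtain ⟨y₀, hy₀, hy₁, hy₂, hy₃⟩ : ∃ y₀ : ℝ, 0 ≤ y₀ ∧ y₀ + ρ / 2 ≤ n ∧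
      w₁.im - ρ / 2 ≤ y₀ ∧ y₀ ≤ w₁.im := by
    rcases le_total w₁.im ((n : ℝ) / 2) with h | h
    · exact ⟨w₁.im, him.1.le, by linarith, by linarith, le_rfl⟩
    · exact ⟨w₁.im - ρ / 2, by linarith, by linarith [him.2], le_rfl, by linarith⟩
  set Q : Set (ℝ × ℝ) := Ioc w₁.re (w₁.re + ρ / 2) ×ˢ Ioc y₀ (y₀ + ρ / 2) with hQ
  have hQprop : ∀ p ∈ Q, |p.1 - w₁.re| ≤ ρ / 2 ∧ |p.2 - w₁.im| ≤ ρ / 2 := by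
    rintro ⟨x, y⟩ ⟨hx, hy⟩
    simp only [mem_Ioc] at hx hy
    constructor <;> simp only [abs_le] <;> constructor <;> linarith
  have hQsub : Q ⊆ Set.Ici (0:ℝ) ×ˢ Set.Ioc (0:ℝ) (n:ℝ) := by
    intro p hp
    obtain ⟨h1, h2⟩ := hQprop p hp
    refine ⟨(hpt p h1 h2).1.le, ?_, ?_⟩
    · exact lt_of_le_of_lt hy₀ hp.2.1
    · exact hp.2.2.trans hy₁
  have hQmeas : MeasurableSet Q := measurableSet_Ioc.prod measurableSet_Ioc
  have hQvol : volume Q = ENNReal.ofReal (ρ / 2 * (ρ / 2)) := by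
    rw [hQ, Measure.volume_eq_prod, Measure.prod_prod, Real.volume_Ioc, Real.volume_Ioc,
      ENNReal.ofReal_mul (by positivity)]
    congr 2 <;> ring
  have hfin : ENNReal.ofReal ((L * C0)⁻¹ * (K / 2) ^ 2 * (ρ / 2 * (ρ / 2))) ≤
      lambdaEnergy n a τ := by
    refine le_trans ?_ hle
    refine le_trans ?_ (lintegral_mono_set hQsub)
    rw [ENNReal.ofReal_mul (by positivity), ← hQvol, ← setLIntegral_const]
    refine setLIntegral_mono' hQmeas fun p hp => ?_
    obtain ⟨h1, h2⟩ := hQprop p hp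
    exact ENNReal.ofReal_le_ofReal (hpt p h1 h2).2
  rw [ENNReal.ofReal_le_iff_le_toReal hE.ne] at hfin
  have hval : (L * C0)⁻¹ * (K / 2) ^ 2 * (ρ / 2 * (ρ / 2)) = K * ρ / (32 * C0) := by
    rw [hL]; field_simp; norm_num
  rw [hval, div_le_iff₀ (by positivity)] at hfin
  linarith

/-- **Finite `λ`-energy implies bounded gradient of `a` (equivalently of `τ`).** -/
theorem grad_bound_of_finite_lambda_energy
    (H : ℝ → ℂ → ℝ) (hH : IsAdmissible H) (n : ℕ) (hn : 1 ≤ n)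
    (a τ : ℝ × ℝ → ℝ) (z : ℝ × ℝ → ℂ) (c : ℝ)
    (ha_smooth : ContDiffOn ℝ (⊤ : ℕ∞) a HalfPlane)
    (hτ_smooth : ContDiffOn ℝ (⊤ : ℕ∞) τ HalfPlane)
    (hz_smooth : ContDiffOn ℝ (⊤ : ℕ∞) z HalfPlane)
    (hz_disk : ∀ p ∈ HalfPlane, z p ∈ Disk)
    (ha_per : ∀ s t : ℝ, 0 ≤ s → a (s, t + n) = a (s, t))
    (hτ_per : ∀ s t : ℝ, 0 ≤ s → τ (s, t + n) = τ (s, t) + n)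
    (hz_per : ∀ s t : ℝ, 0 ≤ s → z (s, t + n) = z (s, t))
    (hCR₁ : ∀ p ∈ HalfPlane, pds HalfPlane a p = pdt HalfPlane τ p)
    (hCR₂ : ∀ p ∈ HalfPlane, pdt HalfPlane a p = -pds HalfPlane τ p)
    (hdisk_eq : ∀ p ∈ HalfPlane,
      Complex.ofReal (pdt HalfPlane a p) * XH H (τ p) (z p) + pds HalfPlane z p +
        Complex.I * (pdt HalfPlane z p -
          Complex.ofReal (pdt HalfPlane τ p) * XH H (τ p) (z p)) = 0)
    (hbdry_a : ∀ t : ℝ, a (0, t) = c)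
    (hbdry_z : ∀ t : ℝ, ‖z (0, t)‖ = 1)
    (hElambda : lambdaEnergy n a τ < ⊤) :
    ∃ M : ℝ, ∀ p ∈ HalfPlane,
      |pds HalfPlane a p| ≤ M ∧ |pdt HalfPlane a p| ≤ M ∧
      |pds HalfPlane τ p| ≤ M ∧ |pdt HalfPlane τ p| ≤ M := by
  have hn1 : (1 : ℝ) ≤ n := by exact_mod_cast hn
  have hn0 : (0 : ℝ) < n := by linarith
  have haZ : ∀ k : ℤ, ∀ p ∈ HalfPlane, a (p + (0, (k : ℝ) * n)) = a p + 0 := by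
    rintro k ⟨s, t⟩ hp
    have hP : Function.Periodic (fun t => a (s, t)) (n : ℝ) := fun t => ha_per s t hp.1
    have := hP.int_mul k t
    simpa using! this
  have hτZ : ∀ k : ℤ, ∀ p ∈ HalfPlane, τ (p + (0, (k : ℝ) * n)) = τ p + k * n := by
    rintro k ⟨s, t⟩ hp
    have hP : Function.Periodic (fun t => τ (s, t) - t) (n : ℝ) := fun t => by
      have := hτ_per s t hp.1
      simp only [this]; ring
    have := hP.int_mul k t
    simp only [Prod.mk_add_mk, add_zero]
    linarith
  have hdiff := FF_hasDerivAt a τ ha_smooth hτ_smooth hCR₁ hCR₂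
  have hshift : ∀ k : ℤ, ∀ p ∈ HalfPlane,
      pds HalfPlane a (p + (0, (k : ℝ) * n)) = pds HalfPlane a p ∧
      pds HalfPlane τ (p + (0, (k : ℝ) * n)) = pds HalfPlane τ p := fun k p hp =>
    ⟨pds_shift a _ _ (haZ k) p hp, pds_shift τ _ _ (hτZ k) p hp⟩
  have hderivshift : ∀ k : ℤ, ∀ w : ℂ, 0 < w.re →
      deriv (FF a τ) (w + Complex.I * ((k * n : ℝ) : ℂ)) = deriv (FF a τ) w := by
    intro k w hw
    have hre : (w + Complex.I * ((k * n : ℝ) : ℂ)).re = w.re := by simp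
    have him : (w + Complex.I * ((k * n : ℝ) : ℂ)).im = w.im + k * n := by simp
    rw [(hdiff w hw).deriv, (hdiff _ (by rw [hre]; exact hw)).deriv, hre, him]
    obtain ⟨h1, h2⟩ := hshift k (w.re, w.im) ⟨hw.le, trivial⟩
    simp only [Prod.mk_add_mk, add_zero] at h1 h2
    rw [h1, h2]
  have hdd : DifferentiableOn ℂ (deriv (FF a τ)) {w | 0 < w.re} := by
    apply DifferentiableOn.deriv
    · exact fun w hw => (hdiff w hw).differentiableAt.differentiableWithinAt
    · exact isOpen_lt continuous_const Complex.continuous_re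
  obtain ⟨φ, hφ⟩ : ∃ φ : ContDiffBump (0 : ℝ), φ.rIn = 1 := ⟨⟨1, 2, by norm_num, by norm_num⟩, rfl⟩
  have hC0 : 0 < ∫ x, φ x := φ.integral_pos
  set B := 64 * (32 * (∫ x, φ x) * (lambdaEnergy n a τ).toReal) with hB
  have hB0 : 0 ≤ B := by positivity
  have hfar : ∀ w : ℂ, 1 ≤ w.re → ‖deriv (FF a τ) w‖ ≤ B := by
    intro w₀ hw₀
    by_cases hne : deriv (FF a τ) w₀ = 0
    · rw [hne, norm_zero]; exact hB0
    obtain ⟨w₁, ρ, K, hρ, hρ', hK, hsub, h64, hb⟩ := hofer_aux _ hdd w₀ hw₀ hne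
    obtain ⟨k, hk, -⟩ := existsUnique_add_zsmul_mem_Ioc hn0 w₁.im 0
    rw [zsmul_eq_mul, zero_add] at hk
    set v : ℂ := Complex.I * ((k * n : ℝ) : ℂ) with hv
    have hback : ∀ w ∈ Metric.closedBall (w₁ + v) ρ, w - v ∈ Metric.closedBall w₁ ρ := by
      intro w hw
      rw [Metric.mem_closedBall, dist_eq_norm] at hw ⊢
      rwa [sub_sub, add_comm v w₁]
    have hvre : v.re = 0 := by simp [hv]
    have hvim : v.im = k * n := by simp [hv]
    have hkey := energy_aux n hn a τ ha_smooth hτ_smooth hCR₁ hCR₂ hElambda φ hφ (w₁ + v) ρ K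
      hρ hρ' hK
      (by
        intro w hw
        have h : 0 < (w - v).re := hsub (hback w hw)
        rw [Complex.sub_re, hvre, sub_zero] at h
        exact h)
      (by rw [Complex.add_im, hvim]; exact hk)
      (by
        intro w hw
        have h := hderivshift k (w - v) (hsub (hback w hw))
        rw [← hv, sub_add_cancel] at h
        rw [h]
        exact hb _ (hback w hw))
    linarith
  have hfar' : ∀ p : ℝ × ℝ, 1 ≤ p.1 → |pds HalfPlane a p| ≤ B ∧ |pds HalfPlane τ p| ≤ B := by
    rintro ⟨s, t⟩ hs
    have hs' : (1 : ℝ) ≤ s := hs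
    have h := hfar ⟨s, t⟩ hs
    rw [(hdiff ⟨s, t⟩ (show (0 : ℝ) < s by linarith)).deriv] at h
    have h1 := (Complex.abs_re_le_norm _).trans h
    have h2 := (Complex.abs_im_le_norm _).trans h
    simp at h1 h2
    exact ⟨h1, h2⟩
  have hca : ContinuousOn (pds HalfPlane a) HalfPlane :=
    (ha_smooth.continuousOn_fderivWithin uniqueDiffOn_HP (by simp)).clm_apply continuousOn_const
  have hcτ : ContinuousOn (pds HalfPlane τ) HalfPlane :=
    (hτ_smooth.continuousOn_fderivWithin uniqueDiffOn_HP (by simp)).clm_apply continuousOn_const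
  have hcpt : IsCompact (Icc (0 : ℝ) 1 ×ˢ Icc (0 : ℝ) n) := isCompact_Icc.prod isCompact_Icc
  have hcs : Icc (0 : ℝ) 1 ×ˢ Icc (0 : ℝ) n ⊆ HalfPlane := fun p hp => ⟨hp.1.1, trivial⟩
  obtain ⟨M₁, hM₁⟩ := hcpt.exists_bound_of_continuousOn (hca.mono hcs)
  obtain ⟨M₂, hM₂⟩ := hcpt.exists_bound_of_continuousOn (hcτ.mono hcs)
  have hall : ∀ p ∈ HalfPlane, |pds HalfPlane a p| ≤ max B (max M₁ M₂) ∧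
      |pds HalfPlane τ p| ≤ max B (max M₁ M₂) := by
    rintro ⟨s, t⟩ hp
    have hs : 0 ≤ s := hp.1
    rcases le_total 1 s with h | h
    · obtain ⟨h1, h2⟩ := hfar' (s, t) h
      exact ⟨h1.trans (le_max_left _ _), h2.trans (le_max_left _ _)⟩
    · obtain ⟨k, hk, -⟩ := existsUnique_add_zsmul_mem_Ioc hn0 t 0
      rw [zsmul_eq_mul, zero_add] at hk
      obtain ⟨h1, h2⟩ := hshift k (s, t) hp
      have hmem : ((s, t) + (0, (k : ℝ) * n) : ℝ × ℝ) ∈ Icc (0 : ℝ) 1 ×ˢ Icc (0 : ℝ) n := by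
        simp only [Prod.mk_add_mk, add_zero]
        exact ⟨⟨hs, h⟩, ⟨hk.1.le, hk.2⟩⟩
      rw [← h1, ← h2]
      exact ⟨(hM₁ _ hmem).trans ((le_max_left _ _).trans (le_max_right _ _)),
        (hM₂ _ hmem).trans ((le_max_right _ _).trans (le_max_right _ _))⟩
  refine ⟨max B (max M₁ M₂), fun p hp => ?_⟩
  obtain ⟨h1, h2⟩ := hall p hp
  refine ⟨h1, ?_, h2, ?_⟩
  · rw [hCR₂ p hp, abs_neg]; exact h2
  · rw [← hCR₁ p hp]; exact h1
end
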